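/- arXiv:1108.2555 — 4 statements merged into one kernel-verified Lean document; each statement's English description precedes it below -/
import Mathlib

section
/- There is a constant C > 0 such that for every sufficiently small ε > 0 there exist a positive integer Q and a finite subset 𝒢 of SL₂(ℝ) satisfying: (1) (1/ε)^{1/C} < Q < (1/ε)^C; (2) Q < |𝒢|^C; (3) the elements of 𝒢 freely generate a free subgroup of SL₂(ℝ), i.e., the canonical homomorphism from the free group on the set 𝒢 to SL₂(ℝ) is injective; (4) every entry of every g ∈ 𝒢 lies in (1/Q)·ℤ; (5) every g = [[g₁₁,g₁₂],[g₂₁,g₂₂]] ∈ 𝒢 satisfies (g₁₁−1)² + g₁₂² + g₂₁² + (g₂₂−1)² ≤ ε. -/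
/-!
For a prime `p` and an integer `k` put `h = [[1 + k², k], [k, 1]] ∈ SL₂(ℤ)` and
`g_k = h · diag((p + 1) / p, p / (p + 1)) · h⁻¹`. With `Q = p (p + 1)` the matrix `Q g_k` is
integral and equals `p² · 1 + (2p + 1) E_k`, where `E_k` is the projection `u vᵀ` with
`u = (1 + k², k)`, `v = (1, -k)`. Likewise `Q g_k⁻¹ = p² · 1 + (2p + 1) (1 - E_k)`, and `1 - E_k`
also has rank one. As `k` ranges over `2, …, N` and `p` lies between `N⁴` and `2N⁴`, the entries of
`g_k - 1` are `O(N³ / p) = O(1 / N)`, while `Q` is polynomial in `N`; so `N ≈ 1 / ε` works.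

Freeness is seen modulo `p`: each letter `Q g_k^{±1}` reduces to a rank-one matrix `u vᵀ`, so
a word of length `n ≥ 1` reduces to a rank-one matrix times the product of the pairings `v · u'`
of consecutive letters. For a reduced word these pairings are, up to sign, `1 + j² - ij`, or
`i - j` or `(i - j)(ij - 1)` with `i ≠ j`, which are all nonzero modulo `p`
(`pairing_ne_zero`). If the word were trivial in `SL₂(ℝ)`, the product of the integral matrices would
be `Qⁿ · 1`, which vanishes modulo `p` (`lift_injective`).
-/

namespace GeneratingSet

open Matrix

/-! ### The generators -/

/-- The column vector `u` of the rank-one part of the letter `(k, b)`, where `b = true` stands for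
the generator `g_k` and `b = false` for its inverse. -/
def colVec {R : Type*} [CommRing R] (k : R) (b : Bool) : Fin 2 → R :=
  bif b then ![1 + k ^ 2, k] else ![k, 1]

/-- The row vector `v` of the rank-one part of the letter `(k, b)`. -/
def rowVec {R : Type*} [CommRing R] (k : R) (b : Bool) : Fin 2 → R :=
  bif b then ![1, -k] else ![-k, 1 + k ^ 2]

/-- The letter `g_k^{±1}` multiplied by the common denominator `p (p + 1)`. -/
def letter {R : Type*} [CommRing R] (p k : R) (b : Bool) : Matrix (Fin 2) (Fin 2) R :=
  p ^ 2 • (1 : Matrix (Fin 2) (Fin 2) R) + (2 * p + 1) • vecMulVec (colVec k b) (rowVec k b)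

lemma letter_map {R S : Type*} [CommRing R] [CommRing S] (φ : R →+* S) (p k : R) (b : Bool) :
    φ.mapMatrix (letter p k b) = letter (φ p) (φ k) b := by
  ext i j
  cases b <;> fin_cases i <;> fin_cases j <;>
    simp [letter, colVec, rowVec, map_ofNat]

lemma letter_zero {R : Type*} [CommRing R] (k : R) (b : Bool) :
    letter 0 k b = vecMulVec (colVec k b) (rowVec k b) := by
  simp [letter]

/-- The generator `g_k = h · diag((p + 1) / p, p / (p + 1)) · h⁻¹`, `h = [[1 + k², k], [k, 1]]`. -/
noncomputable def gen (p : ℝ) (hp : 0 < p) (k : ℝ) : SpecialLinearGroup (Fin 2) ℝ :=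
  ⟨(p * (p + 1))⁻¹ • letter p k true, by
    have : p + 1 ≠ 0 := by positivity
    simp [det_fin_two, letter, colVec, rowVec]
    field_simp
    ring⟩

lemma letter_eq_gen (p : ℝ) (hp : 0 < p) (k : ℝ) (b : Bool) :
    letter p k b = (p * (p + 1)) •
      ((bif b then gen p hp k else (gen p hp k)⁻¹ : SpecialLinearGroup (Fin 2) ℝ) :
        Matrix (Fin 2) (Fin 2) ℝ) := by
  have : p + 1 ≠ 0 := by positivity
  cases b
  · have h : (((gen p hp k)⁻¹ : SpecialLinearGroup (Fin 2) ℝ) : Matrix (Fin 2) (Fin 2) ℝ) =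
        adjugate (gen p hp k : Matrix (Fin 2) (Fin 2) ℝ) := Matrix.SpecialLinearGroup.coe_inv _
    rw [adjugate_fin_two] at h
    refine Eq.trans ?_ (congrArg _ h.symm)
    ext i j
    fin_cases i <;> fin_cases j <;> simp [gen, letter, colVec, rowVec] <;> field_simp
  · change _ = _ • (gen p hp k : Matrix (Fin 2) (Fin 2) ℝ)
    ext i j
    fin_cases i <;> fin_cases j <;> simp [gen, letter, colVec, rowVec] <;> field_simp

/-! ### Freeness modulo `p` -/

/-- A product of rank-one matrices `u vᵀ` whose consecutive pairings `v · u'` are nonzero is of the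
form `u wᵀ` with `u` coming from the first factor and `w ≠ 0`. -/
lemma prod_rank_one {F α : Type*} [Field F] (u v : α → Fin 2 → F) (hv : ∀ a, v a ≠ 0)
    (r : α → α → Prop) (hr : ∀ a b, r a b → v a ⬝ᵥ u b ≠ 0) (a : α) (L : List α)
    (hL : (a :: L).IsChain r) :
    ∃ w : Fin 2 → F, w ≠ 0 ∧
      ((a :: L).map fun x => vecMulVec (u x) (v x)).prod = vecMulVec (u a) w := by
  induction L generalizing a with
  | nil => exact ⟨v a, hv a, by simp⟩
  | cons b L ih =>
    rw [List.isChain_cons_cons] at hL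
    obtain ⟨w, hw, h⟩ := ih b hL.2
    refine ⟨(v a ⬝ᵥ u b) • w, smul_ne_zero (hr a b hL.1) hw, ?_⟩
    rw [List.map_cons, List.prod_cons, h, vecMulVec_mul_vecMulVec]

lemma colVec_ne_zero {F : Type*} [Field F] (k : F) (b : Bool) : colVec k b ≠ 0 := by
  intro h
  have h0 := congrFun h 0
  have h1 := congrFun h 1
  cases b <;> simp [colVec] at h0 h1
  simp [h1] at h0

lemma rowVec_ne_zero {F : Type*} [Field F] (k : F) (b : Bool) : rowVec k b ≠ 0 := by
  intro h
  have h0 := congrFun h 0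
  have h1 := congrFun h 1
  cases b <;> simp [rowVec] at h0 h1
  simp [h0] at h1

lemma intCast_zmod_ne_zero (p : ℕ) (z : ℤ) (hz : z ≠ 0) (h₁ : z < p) (h₂ : -z < p) :
    (z : ZMod p) ≠ 0 := by
  rw [Ne, ZMod.intCast_zmod_eq_zero_iff_dvd]
  exact fun h => hz (Int.eq_zero_of_abs_lt_dvd h (abs_lt.2 ⟨by linarith, h₁⟩))

/-- Adjacent letters of a reduced word have nonzero pairing modulo `p`. -/
lemma pairing_ne_zero (p : ℕ) [Fact p.Prime] (N : ℤ) (hN : N ^ 2 < p) (i j : ℤ)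
    (hi : 2 ≤ i) (hiN : i ≤ N) (hj : 2 ≤ j) (hjN : j ≤ N) (b c : Bool) (h : i = j → b = c) :
    rowVec (i : ZMod p) b ⬝ᵥ colVec (j : ZMod p) c ≠ 0 := by
  have same : ∀ i j : ℤ, 2 ≤ i → i ≤ N → 2 ≤ j → j ≤ N →
      ((1 + j ^ 2 - i * j : ℤ) : ZMod p) ≠ 0 := by
    intro i j hi hiN hj hjN
    apply intCast_zmod_ne_zero
    · intro h0
      have hd : j ∣ 1 := ⟨i - j, by linarith⟩
      have := Int.le_of_dvd one_pos hd
      omega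
    · nlinarith
    · nlinarith
  have diff : i ≠ j → ((j - i : ℤ) : ZMod p) ≠ 0 := fun hij =>
    intCast_zmod_ne_zero p _ (by omega) (by nlinarith) (by nlinarith)
  cases b <;> cases c <;> simp only [rowVec, colVec, dotProduct, Fin.sum_univ_two, cond_true,
    cond_false, cons_val_zero, cons_val_one]
  · have := same j i hj hjN hi hiN
    push_cast at this
    convert this using 1
    ring
  · have hij : i ≠ j := fun e => by simpa using h e
    have h2 : ((1 - i * j : ℤ) : ZMod p) ≠ 0 :=
      intCast_zmod_ne_zero p _ (by nlinarith) (by nlinarith) (by nlinarith)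
    have := mul_ne_zero (diff hij) h2
    push_cast at this
    convert this using 1
    ring
  · have hij : i ≠ j := fun e => by simpa using h e
    have := diff hij
    push_cast at this
    convert this using 1
    ring
  · have := same i j hi hiN hj hjN
    push_cast at this
    convert this using 1
    ring

/-- The matrices `g_k`, for distinct integers `k` in `[2, N]`, are free generators. -/
lemma lift_injective {ι : Type*} (p : ℕ) [hp : Fact p.Prime] (hp0 : (0 : ℝ) < p) (N : ℤ)
    (hN : N ^ 2 < p) (k : ι → ℤ) (hk : Function.Injective k) (hk2 : ∀ i, 2 ≤ k i)
    (hkN : ∀ i, k i ≤ N) (f : ι → SpecialLinearGroup (Fin 2) ℝ)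
    (hf : ∀ i, f i = gen p hp0 (k i)) :
    Function.Injective ⇑(FreeGroup.lift f) := by
  classical
  rw [injective_iff_map_eq_one]
  intro x hx
  by_contra hx1
  obtain ⟨a, L, hL⟩ := List.exists_cons_of_ne_nil
    (mt FreeGroup.toWord_eq_nil_iff.1 hx1)
  have hred : FreeGroup.IsReduced (a :: L) := hL ▸ FreeGroup.isReduced_toWord
  rw [← FreeGroup.mk_toWord (x := x), hL, FreeGroup.lift_mk] at hx
  let W : ι × Bool → Matrix (Fin 2) (Fin 2) ℤ := fun y => letter (p : ℤ) (k y.1) y.2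
  have key : ∀ L' : List (ι × Bool),
      (Int.castRingHom ℝ).mapMatrix (L'.map W).prod = ((p : ℝ) * (p + 1)) ^ L'.length •
        (((L'.map fun y => bif y.2 then f y.1 else (f y.1)⁻¹).prod :
          SpecialLinearGroup (Fin 2) ℝ) : Matrix (Fin 2) (Fin 2) ℝ) := by
    intro L'
    induction L' with
    | nil => simp
    | cons y L' ih =>
      have h := letter_eq_gen (p : ℝ) hp0 (k y.1) y.2
      rw [← hf] at h
      have hy : (Int.castRingHom ℝ).mapMatrix (W y) = letter (p : ℝ) (k y.1) y.2 := by
        simp [W, letter_map, -RingHom.mapMatrix_apply]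
      rw [List.map_cons, List.prod_cons, map_mul, ih, hy, h, List.map_cons, List.prod_cons,
        smul_mul_smul_comm, List.length_cons, pow_succ']
      exact congrArg _ (Matrix.SpecialLinearGroup.coe_mul _ _).symm
  -- A trivial word makes the integral product equal to `Qⁿ · 1`, which vanishes modulo `p`.
  have hZ : ((a :: L).map W).prod =
      ((p : ℤ) * (p + 1)) ^ (a :: L).length • (1 : Matrix (Fin 2) (Fin 2) ℤ) := by
    have h1 := key (a :: L)
    rw [hx] at h1
    apply Matrix.map_injective (f := Int.castRingHom ℝ) Int.cast_injective
    rw [RingHom.mapMatrix_apply] at h1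
    refine h1.trans ?_
    ext i j
    beta_reduce
    rw [Matrix.SpecialLinearGroup.coe_one, Matrix.map_apply, Matrix.smul_apply, Matrix.smul_apply]
    fin_cases i <;> fin_cases j <;> simp
  have hmod : (Int.castRingHom (ZMod p)).mapMatrix ((a :: L).map W).prod = 0 := by
    rw [hZ, RingHom.mapMatrix_apply]
    ext i j
    rw [Matrix.map_apply, Matrix.smul_apply]
    simp
  rw [map_list_prod, List.map_map] at hmod
  obtain ⟨w, hw, h⟩ := prod_rank_one
    (fun y : ι × Bool => colVec ((k y.1 : ℤ) : ZMod p) y.2)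
    (fun y : ι × Bool => rowVec ((k y.1 : ℤ) : ZMod p) y.2)
    (fun y => rowVec_ne_zero _ _) _
    (fun y z hyz => pairing_ne_zero p N hN (k y.1) (k z.1) (hk2 _) (hkN _) (hk2 _) (hkN _)
      y.2 z.2 fun e => hyz (hk e)) a L hred
  have hW : (Int.castRingHom (ZMod p)).mapMatrix ∘ W = fun y : ι × Bool =>
      vecMulVec (colVec ((k y.1 : ℤ) : ZMod p) y.2) (rowVec ((k y.1 : ℤ) : ZMod p) y.2) := by
    funext y
    simp [W, letter_map, letter_zero, -RingHom.mapMatrix_apply]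
  rw [hW, h, vecMulVec_eq_zero] at hmod
  exact hmod.elim (colVec_ne_zero _ _) hw

/-! ### Size, distinctness and denominators -/

/-- Each entry of `g_k - 1` has the form treated here, with `e` an entry of `E_k` and `s` the
corresponding entry of the identity matrix. -/
lemma entry_bound (p N ε e s : ℝ) (hN : 100 ≤ N) (hε : 0 < ε) (hNε : 1 / ε ≤ N) (hp : N ^ 4 < p)
    (he : |e| ≤ 2 * N ^ 3) (hs : |s| ≤ 1) :
    (((2 * p + 1) * e - p * s) / (p * (p + 1))) ^ 2 ≤ ε / 4 := by
  have hN0 : 0 < N := by linarith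
  have hp0 : 0 < p := lt_trans (by positivity) hp
  have hN3 : 1 ≤ N ^ 3 := one_le_pow₀ (by linarith)
  have h1 : |((2 * p + 1) * e - p * s) / (p * (p + 1))| ≤ 5 / N := by
    rw [abs_div, abs_of_pos (by positivity : 0 < p * (p + 1)), div_le_div_iff₀ (by positivity) hN0]
    have h2 : |(2 * p + 1) * e - p * s| ≤ (2 * p + 1) * (2 * N ^ 3) + p * 1 := by
      refine (abs_sub _ _).trans ?_
      rw [abs_mul, abs_mul, abs_of_pos hp0, abs_of_pos (by positivity : 0 < 2 * p + 1)]
      gcongr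
    have h3 : (2 * p + 1) * (2 * N ^ 3) + p * 1 ≤ 5 * N ^ 3 * (p + 1) := by nlinarith
    calc _ ≤ (5 * N ^ 3 * (p + 1)) * N := by gcongr; exact h2.trans h3
      _ = 5 * (N ^ 4 * (p + 1)) := by ring
      _ ≤ _ := by gcongr
  have h4 : 1 ≤ N * ε := by rwa [div_le_iff₀ hε] at hNε
  calc _ = |((2 * p + 1) * e - p * s) / (p * (p + 1))| ^ 2 := (sq_abs _).symm
    _ ≤ (5 / N) ^ 2 := by gcongr
    _ ≤ ε / 4 := by
      rw [div_pow, div_le_div_iff₀ (by positivity) (by norm_num)]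
      nlinarith

lemma gen_close (p N ε k : ℝ) (hp0 : 0 < p) (hN : 100 ≤ N) (hε : 0 < ε) (hNε : 1 / ε ≤ N)
    (hp : N ^ 4 < p) (hk : 2 ≤ k) (hkN : k ≤ N) :
    ((gen p hp0 k : Matrix (Fin 2) (Fin 2) ℝ) 0 0 - 1) ^ 2 +
      ((gen p hp0 k : Matrix (Fin 2) (Fin 2) ℝ) 0 1) ^ 2 +
      ((gen p hp0 k : Matrix (Fin 2) (Fin 2) ℝ) 1 0) ^ 2 +
      ((gen p hp0 k : Matrix (Fin 2) (Fin 2) ℝ) 1 1 - 1) ^ 2 ≤ ε := by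
  have hp1 : p + 1 ≠ 0 := by positivity
  have hk3 : k ^ 3 ≤ N ^ 3 := by gcongr
  have hk1 : 1 ≤ k := by linarith
  have k1 : k ≤ k ^ 3 := le_self_pow₀ hk1 (by norm_num)
  have k2 : k ^ 2 ≤ k ^ 3 := pow_le_pow_right₀ hk1 (by norm_num)
  have k0 : 1 ≤ k ^ 3 := one_le_pow₀ hk1
  have k2' : 0 ≤ k ^ 2 := sq_nonneg k
  have e00 := entry_bound p N ε (1 + k ^ 2) 1 hN hε hNε hp
    (abs_le.2 ⟨by linarith, by linarith⟩) (by simp)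
  have e01 := entry_bound p N ε (-(k + k ^ 3)) 0 hN hε hNε hp
    (abs_le.2 ⟨by linarith, by linarith⟩) (by simp)
  have e10 := entry_bound p N ε k 0 hN hε hNε hp
    (abs_le.2 ⟨by linarith, by linarith⟩) (by simp)
  have e11 := entry_bound p N ε (-k ^ 2) 1 hN hε hNε hp
    (abs_le.2 ⟨by linarith, by linarith⟩) (by simp)
  have f00 : (gen p hp0 k : Matrix (Fin 2) (Fin 2) ℝ) 0 0 - 1 =
      ((2 * p + 1) * (1 + k ^ 2) - p * 1) / (p * (p + 1)) := by
    simp [gen, letter, colVec, rowVec]; field_simp; ring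
  have f01 : (gen p hp0 k : Matrix (Fin 2) (Fin 2) ℝ) 0 1 =
      ((2 * p + 1) * (-(k + k ^ 3)) - p * 0) / (p * (p + 1)) := by
    simp [gen, letter, colVec, rowVec]; field_simp; ring
  have f10 : (gen p hp0 k : Matrix (Fin 2) (Fin 2) ℝ) 1 0 =
      ((2 * p + 1) * k - p * 0) / (p * (p + 1)) := by
    simp [gen, letter, colVec, rowVec]; field_simp
  have f11 : (gen p hp0 k : Matrix (Fin 2) (Fin 2) ℝ) 1 1 - 1 =
      ((2 * p + 1) * (-k ^ 2) - p * 1) / (p * (p + 1)) := by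
    simp [gen, letter, colVec, rowVec]; field_simp; ring
  rw [f00, f01, f10, f11]
  linarith

lemma gen_injective (p : ℝ) (hp0 : 0 < p) : Function.Injective (gen p hp0) := by
  intro k l h
  have h1 := congrArg (fun g : SpecialLinearGroup (Fin 2) ℝ => g.1 1 0) h
  have hp1 : p + 1 ≠ 0 := by positivity
  have hp2 : 2 * p + 1 ≠ 0 := by positivity
  simpa [gen, letter, colVec, rowVec, vecMulVec_apply, hp0.ne', hp1, hp2] using h1

lemma gen_entry (p : ℕ) (hp0 : (0 : ℝ) < p) (k : ℤ) (i j : Fin 2) :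
    ∃ z : ℤ, (gen p hp0 k : Matrix (Fin 2) (Fin 2) ℝ) i j = (z : ℝ) / ((p * (p + 1) : ℕ) : ℝ) := by
  refine ⟨letter (p : ℤ) k true i j, ?_⟩
  have h := congrFun (congrFun (letter_map (Int.castRingHom ℝ) (p : ℤ) k true) i) j
  simp only [RingHom.mapMatrix_apply, map_apply, eq_intCast, Int.cast_natCast] at h
  rw [h]
  simp only [gen, Matrix.smul_apply, smul_eq_mul]
  push_cast
  rw [inv_mul_eq_div]

end GeneratingSet


/-- **Generating-set lemma.** There is a constant `C > 0` such that for every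
sufficiently small `ε > 0` there are a positive integer `Q` and a finite set
`𝒢 ⊆ SL₂(ℝ)` with `(1/ε)^(1/C) < Q < (1/ε)^C`, `Q < |𝒢|^C`, whose elements
freely generate a free subgroup, have entries in `(1/Q)·ℤ`, and satisfy
`‖g − 1‖² ≤ ε` (squared Frobenius norm). -/
theorem generating_set_lemma :
    ∃ C : ℝ, 0 < C ∧ ∃ ε₀ : ℝ, 0 < ε₀ ∧
      ∀ ε : ℝ, 0 < ε → ε ≤ ε₀ →
        ∃ (Q : ℕ) (𝒢 : Finset (Matrix.SpecialLinearGroup (Fin 2) ℝ)),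
          0 < Q ∧
          (1 / ε) ^ (1 / C) < (Q : ℝ) ∧ (Q : ℝ) < (1 / ε) ^ C ∧
          (Q : ℝ) < (𝒢.card : ℝ) ^ C ∧
          Function.Injective
            ⇑(FreeGroup.lift fun g : {x // x ∈ 𝒢} =>
                (g : Matrix.SpecialLinearGroup (Fin 2) ℝ)) ∧
          (∀ g ∈ 𝒢, ∀ i j : Fin 2,
            ∃ z : ℤ, (g : Matrix (Fin 2) (Fin 2) ℝ) i j = (z : ℝ) / (Q : ℝ)) ∧
          (∀ g ∈ 𝒢,
            ((g : Matrix (Fin 2) (Fin 2) ℝ) 0 0 - 1) ^ 2 +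
              ((g : Matrix (Fin 2) (Fin 2) ℝ) 0 1) ^ 2 +
              ((g : Matrix (Fin 2) (Fin 2) ℝ) 1 0) ^ 2 +
              ((g : Matrix (Fin 2) (Fin 2) ℝ) 1 1 - 1) ^ 2 ≤ ε) := by
  classical
  open GeneratingSet in
  refine ⟨20, by norm_num, 1 / 100, by norm_num, fun ε hε hε₀ => ?_⟩
  have hx : 100 ≤ 1 / ε := by
    rw [le_div_iff₀ hε]; linarith
  obtain ⟨n, hn⟩ : ∃ n, n = ⌈1 / ε⌉₊ := ⟨_, rfl⟩
  have hn1 : 1 / ε ≤ n := hn ▸ Nat.le_ceil _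
  have hn2 : (n : ℝ) < 1 / ε + 1 := hn ▸ Nat.ceil_lt_add_one (by positivity)
  have hn0 : (n + 1) ^ 4 ≠ 0 := by positivity
  -- Bertrand's postulate provides a prime polynomial in `1 / ε`, with `N = n + 1`.
  obtain ⟨p, hp, hpl, hpu⟩ := Nat.exists_prime_lt_and_le_two_mul _ hn0
  have : Fact p.Prime := ⟨hp⟩
  have hp0 : (0 : ℝ) < p := by exact_mod_cast hp.pos
  have hplR : ((n : ℝ) + 1) ^ 4 < p := by exact_mod_cast hpl
  have hpuR : (p : ℝ) ≤ 2 * ((n : ℝ) + 1) ^ 4 := by exact_mod_cast hpu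
  have hinj : Function.Injective fun k : ℕ => gen p hp0 ((k : ℤ) : ℝ) :=
    (gen_injective (p : ℝ) hp0).comp (Int.cast_injective.comp Nat.cast_injective)
  have hcard : ((Finset.Icc 2 (n + 1)).image fun k : ℕ => gen p hp0 ((k : ℤ) : ℝ)).card = n := by
    rw [Finset.card_image_of_injective _ hinj]
    simp
  have hQ : ((p * (p + 1) : ℕ) : ℝ) < (1 / ε) ^ (20 : ℝ) := by
    set x := 1 / ε
    have h1 : (n : ℝ) + 1 ≤ 2 * x := by linarith
    have h2 : (p : ℝ) ≤ 32 * x ^ 4 := by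
      calc (p : ℝ) ≤ 2 * ((n : ℝ) + 1) ^ 4 := hpuR
        _ ≤ 2 * (2 * x) ^ 4 := by gcongr
        _ = _ := by ring
    have h3 : 32 * x ^ 4 + 1 ≤ x ^ 6 := by
      have h4 : 1 ≤ x ^ 4 := one_le_pow₀ (by linarith)
      have h5 : 33 ≤ x ^ 2 := by nlinarith
      calc 32 * x ^ 4 + 1 ≤ 33 * x ^ 4 := by linarith
        _ ≤ x ^ 2 * x ^ 4 := by gcongr
        _ = x ^ 6 := by ring
    have h4 : (p : ℝ) * (p + 1) ≤ x ^ 6 * x ^ 6 := by gcongr <;> linarith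
    have h5 : x ^ 12 < x ^ 20 := pow_lt_pow_right₀ (by linarith) (by norm_num)
    have h6 : x ^ (20 : ℝ) = x ^ 20 := by exact_mod_cast Real.rpow_natCast x 20
    rw [h6]
    push_cast
    linarith [show x ^ 6 * x ^ 6 = x ^ 12 by ring]
  have hkp : ((n + 1 : ℤ)) ^ 2 < p := by
    calc ((n + 1 : ℤ)) ^ 2 ≤ (n + 1) ^ 4 := pow_le_pow_right₀ (by omega) (by norm_num)
      _ < p := by exact_mod_cast hpl
  refine ⟨p * (p + 1), (Finset.Icc 2 (n + 1)).image fun k : ℕ => gen p hp0 ((k : ℤ) : ℝ),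
    by have := hp.pos; positivity, ?_, hQ, ?_, ?_, ?_, ?_⟩
  · calc (1 / ε) ^ (1 / 20 : ℝ) ≤ (1 / ε) ^ (1 : ℝ) :=
          Real.rpow_le_rpow_of_exponent_le (by linarith) (by norm_num)
      _ = 1 / ε := Real.rpow_one _
      _ ≤ n := hn1
      _ < (n : ℝ) + 1 := by linarith
      _ ≤ ((n : ℝ) + 1) ^ 4 := le_self_pow₀ (by linarith) (by norm_num)
      _ ≤ p := hplR.le
      _ ≤ ((p * (p + 1) : ℕ) : ℝ) := by
        push_cast
        nlinarith
  · rw [hcard]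
    exact hQ.trans_le (Real.rpow_le_rpow (by positivity) hn1 (by norm_num))
  · have hex : ∀ g : {x // x ∈ (Finset.Icc 2 (n + 1)).image
        fun k : ℕ => gen p hp0 ((k : ℤ) : ℝ)},
        ∃ k : ℕ, (2 ≤ k ∧ k ≤ n + 1) ∧ gen p hp0 ((k : ℤ) : ℝ) = g.1 := by
      rintro ⟨g, hg⟩
      simpa only [Finset.mem_image, Finset.mem_Icc] using hg
    choose k hk hkg using hex
    refine lift_injective p hp0 (n + 1) hkp (fun g => (k g : ℤ)) ?_ ?_ ?_ _
      fun g => (hkg g).symm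
    · intro g g' h
      apply Subtype.ext
      rw [← hkg g, ← hkg g', show k g = k g' from Nat.cast_injective h]
    · intro g
      exact_mod_cast (hk g).1
    · intro g
      exact_mod_cast (hk g).2
  · intro g hg
    obtain ⟨k, -, rfl⟩ := Finset.mem_image.1 hg
    exact gen_entry p hp0 k
  · intro g hg
    obtain ⟨k, hk, rfl⟩ := Finset.mem_image.1 hg
    rw [Finset.mem_Icc] at hk
    refine gen_close p (n + 1) ε _ hp0 (by linarith) hε (by linarith) hplR ?_ ?_
    · exact_mod_cast hk.1
    · exact_mod_cast hk.2
end

section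
/- Let F be the free group on two generators g₁, g₂ and let ℓ ≥ 3 be an integer. Let W = { w² : w = s₁ s₂ ⋯ s_ℓ, where each s_i ∈ {g₁, g₂, g₁⁻¹, g₂⁻¹}, s₁ = g₁, s_ℓ = g₂, and s_{i+1} ≠ s_i⁻¹ for all i }. Then the elements of W freely generate a free subgroup of F: the canonical homomorphism from the free group on the set W into F is injective. -/
/-! The ping-pong lemma is applied to the left multiplication action of the free group on itself.
For a generator `w²`, with `w` written as a reduced list `L` of length `ℓ`, the two ping-pong sets
consist of the elements whose reduced word begins with `L`, respectively with the formal inverse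
`invRev L`.

* Disjointness: all prefixes involved have the same length `ℓ`, so two of the sets can only meet
  if the prefixes are equal. Different generators have different `L`, and no `L` equals an
  `invRev L'`, since the former starts with `g₁` and the latter with `g₂⁻¹`.
* Dynamics (`prefix_toWord_sq_mul`): the word `L ++ L` is reduced because `L` starts with `g₁`
  and ends with `g₂`. If the reduced word of `x` does not begin with `invRev L`, then in the product
  `w · w · x` the element `x` cancels only part of the second `w`, so the first `w` survives as a
  prefix. Applied to `invRev L`, the same lemma handles the inverse of `w²`.

The ping-pong lemma needs two different generators; here `ℓ ≥ 3` enters, through the words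
`g₁ g₂ ⋯ g₂` and `g₁ ⋯ g₁ g₂`. -/

/-- The set `W` of squares of reduced words of length `ℓ` in the free group on two
generators that start with `g₁ = of 0` and end with `g₂ = of 1`. -/
def squaredWordSet (ℓ : ℕ) : Set (FreeGroup (Fin 2)) :=
  {x | ∃ s : ℕ → FreeGroup (Fin 2),
    (∀ i < ℓ, s i ∈ ({FreeGroup.of 0, FreeGroup.of 1,
        (FreeGroup.of 0)⁻¹, (FreeGroup.of 1)⁻¹} : Set (FreeGroup (Fin 2)))) ∧
    s 0 = FreeGroup.of 0 ∧
    s (ℓ - 1) = FreeGroup.of 1 ∧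
    (∀ i, i + 1 < ℓ → s (i + 1) ≠ (s i)⁻¹) ∧
    x = (((List.range ℓ).map s).prod) ^ 2}

open FreeGroup

/-- Concatenating two reduced words cancels a suffix `B` of the first against the prefix
`invRev B` of the second, and nothing else. -/
lemma exists_cancel_decomp {α : Type*} (L M : List (α × Bool)) (hL : IsReduced L)
    (hM : IsReduced M) :
    ∃ A B C, L = A ++ B ∧ M = invRev B ++ C ∧ IsReduced (A ++ C) := by
  induction L with
  | nil => exact ⟨[], [], M, rfl, rfl, hM⟩
  | cons a L ih =>
    obtain ⟨A, B, C, rfl, rfl, hAC⟩ := ih (hL.infix ⟨[a], [], by simp⟩)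
    rcases A with _ | ⟨a', A⟩
    · rcases C with _ | ⟨c, C⟩
      · exact ⟨[a], B, [], rfl, rfl, IsReduced.singleton⟩
      · by_cases h : a.1 = c.1 → a.2 = c.2
        · exact ⟨[a], B, c :: C, rfl, rfl, isReduced_cons_cons.2 ⟨h, hAC⟩⟩
        · refine ⟨[], a :: B, C, rfl, ?_, hAC.infix ⟨[c], [], by simp⟩⟩
          push Not at h
          obtain ⟨a1, a2⟩ := a
          obtain ⟨c1, c2⟩ := c
          obtain ⟨h1, h2⟩ := h
          simp only at h1 h2
          subst h1
          have : c2 = !a2 := by cases a2 <;> cases c2 <;> simp_all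
          subst this
          simp [invRev]
    · refine ⟨a :: a' :: A, B, C, rfl, rfl, ?_⟩
      simp only [List.cons_append] at hL hAC ⊢
      exact isReduced_cons_cons.2 ⟨(isReduced_cons_cons.1 hL).1, hAC⟩

/-- If `L ++ L` is reduced and `x` does not begin with the inverse of `L`, then multiplying `x` on
the left by the square of `L` gives an element that begins with `L`. -/
lemma prefix_toWord_sq_mul {α : Type*} [DecidableEq α] (L : List (α × Bool))
    (hL : IsReduced (L ++ L)) (x : FreeGroup α) (hx : ¬ invRev L <+: x.toWord) :
    L <+: (mk L ^ 2 * x).toWord := by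
  obtain ⟨A, B, C, hAB, hC, hAC⟩ := exists_cancel_decomp L x.toWord
    (hL.infix ⟨[], L, by simp⟩) isReduced_toWord
  have hA : A ≠ [] := by
    rintro rfl
    exact hx ⟨C, by rw [hC, hAB]; rfl⟩
  have hLA : IsReduced (L ++ A) := hL.infix ⟨[], B, by
    rw [List.nil_append, List.append_assoc, ← hAB]⟩
  have hred : IsReduced (L ++ A ++ C) := hLA.append_overlap hAC hA
  have key : mk L ^ 2 * x = mk (L ++ A ++ C) := by
    have h1 : x = (mk B)⁻¹ * mk C := by
      rw [inv_mk, mul_mk, ← hC, mk_toWord]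
    have h2 : mk L = mk A * mk B := by rw [mul_mk, ← hAB]
    rw [← mul_mk, ← mul_mk, h1, pow_two]
    nth_rewrite 2 [h2]
    group
  rw [key, toWord_mk, hred.reduce_eq, List.append_assoc]
  exact List.prefix_append _ _

/-- The conditions defining a word `s₁ ⋯ s_ℓ` whose square lies in `squaredWordSet ℓ`, for letters
encoded as pairs of a generator and a sign. -/
structure IsGoodWord (ℓ : ℕ) (p : ℕ → Fin 2 × Bool) : Prop where
  first : p 0 = (0, true)
  last : p (ℓ - 1) = (1, true)
  reduced : ∀ i, i + 1 < ℓ → (p i).1 = (p (i + 1)).1 → (p i).2 = (p (i + 1)).2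

lemma mk_map_eq_prod {α β : Type*} (p : β → α × Bool) (l : List β) :
    mk (l.map p) = (l.map fun i => mk [p i]).prod := by
  induction l with
  | nil => rfl
  | cons a l ih => rw [List.map_cons, List.map_cons, List.prod_cons, ← ih, mul_mk]; rfl

lemma mk_singleton_ne_inv_iff {α : Type*} (a b : α × Bool) :
    mk [b] ≠ (mk [a])⁻¹ ↔ (a.1 = b.1 → a.2 = b.2) := by
  classical
  obtain ⟨a1, a2⟩ := a
  obtain ⟨b1, b2⟩ := b
  rw [inv_mk, Ne, ← toWord_inj, toWord_mk, toWord_mk]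
  cases a2 <;> cases b2 <;> simp [invRev]
  all_goals exact not_congr eq_comm

lemma mem_squaredWordSet_iff {ℓ : ℕ} (hℓ : 3 ≤ ℓ) (x : FreeGroup (Fin 2)) :
    x ∈ squaredWordSet ℓ ↔ ∃ p, IsGoodWord ℓ p ∧ x = mk ((List.range ℓ).map p) ^ 2 := by
  constructor
  · rintro ⟨s, hs, h0, h1, hred, rfl⟩
    have : ∀ i, ∃ q : Fin 2 × Bool, i < ℓ → s i = mk [q] := by
      intro i
      by_cases hi : i < ℓ
      · rcases hs i hi with h | h | h | h
        · exact ⟨(0, true), fun _ => h⟩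
        · exact ⟨(1, true), fun _ => h⟩
        · exact ⟨(0, false), fun _ => h⟩
        · exact ⟨(1, false), fun _ => h⟩
      · exact ⟨(0, true), fun h => absurd h hi⟩
    choose p hp using this
    have mk_inj : ∀ a b : Fin 2 × Bool, mk [a] = mk [b] → a = b := fun a b h => by
      simpa using congrArg toWord h
    refine ⟨p, ⟨?_, ?_, ?_⟩, ?_⟩
    · exact mk_inj _ _ ((hp 0 (by omega)).symm.trans h0)
    · exact mk_inj _ _ ((hp (ℓ - 1) (by omega)).symm.trans h1)
    · intro i hi
      rw [← mk_singleton_ne_inv_iff, ← hp i (by omega), ← hp (i + 1) hi]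
      exact hred i hi
    · rw [mk_map_eq_prod]
      congr 2
      exact List.map_congr_left fun i hi => hp i (List.mem_range.1 hi)
  · rintro ⟨p, hp, rfl⟩
    refine ⟨fun i => mk [p i], fun i _ => ?_, ?_, ?_, fun i hi => ?_, ?_⟩
    · change mk [p i] ∈ _
      rcases p i with ⟨a, b⟩
      fin_cases a <;> cases b
      · exact Or.inr (Or.inr (Or.inl rfl))
      · exact Or.inl rfl
      · exact Or.inr (Or.inr (Or.inr rfl))
      · exact Or.inr (Or.inl rfl)
    · simp only [hp.first]; rfl
    · simp only [hp.last]; rfl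
    · exact (mk_singleton_ne_inv_iff _ _).2 (hp.reduced i hi)
    · rw [mk_map_eq_prod]

namespace IsGoodWord

variable {ℓ : ℕ} {p : ℕ → Fin 2 × Bool}

lemma head?_eq (h : IsGoodWord ℓ p) (hℓ : 3 ≤ ℓ) :
    ((List.range ℓ).map p).head? = some (0, true) := by
  rw [List.head?_eq_getElem?]
  simp [show 0 < ℓ by omega, h.first]

lemma getLast?_eq (h : IsGoodWord ℓ p) (hℓ : 3 ≤ ℓ) :
    ((List.range ℓ).map p).getLast? = some (1, true) := by
  rw [List.getLast?_eq_getElem?]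
  simp [show ℓ - 1 < ℓ by omega, h.last]

lemma isReduced_append_self (h : IsGoodWord ℓ p) (hℓ : 3 ≤ ℓ) :
    IsReduced ((List.range ℓ).map p ++ (List.range ℓ).map p) := by
  have h1 : IsReduced ((List.range ℓ).map p) := by
    rw [FreeGroup.IsReduced, List.isChain_map, List.isChain_range]
    intro i hi
    exact h.reduced i (by omega)
  refine List.IsChain.append h1 h1 ?_
  rw [h.head?_eq hℓ, h.getLast?_eq hℓ]
  simp

end IsGoodWord

lemma nontrivial_squaredWordSet {ℓ : ℕ} (hℓ : 3 ≤ ℓ) :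
    Nontrivial {x // x ∈ squaredWordSet ℓ} := by
  have hp : IsGoodWord ℓ fun i => (if i = 0 then 0 else 1, true) :=
    ⟨by simp, by simp [show ℓ - 1 ≠ 0 by omega], by simp⟩
  have hq : IsGoodWord ℓ fun i => (if i = ℓ - 1 then 1 else 0, true) :=
    ⟨by simp [show 0 ≠ ℓ - 1 by omega], by simp, by simp⟩
  refine ⟨⟨_, (mem_squaredWordSet_iff hℓ _).2 ⟨_, hp, rfl⟩⟩,
    ⟨_, (mem_squaredWordSet_iff hℓ _).2 ⟨_, hq, rfl⟩⟩, fun h => ?_⟩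
  have h2 := congrArg toWord (Subtype.ext_iff.1 h)
  simp only [pow_two, mul_mk, toWord_mk] at h2
  rw [(hp.isReduced_append_self hℓ).reduce_eq, (hq.isReduced_append_self hℓ).reduce_eq] at h2
  -- The two words differ in their second letter, which is not the last one as `3 ≤ ℓ`.
  have h3 := congrArg (fun l => l[1]?) (List.append_inj_left h2 (by simp))
  simp [show 1 < ℓ by omega, show 1 ≠ ℓ - 1 by omega] at h3

/-- **The elements of `W` freely generate a free subgroup.**
If `ℓ ≥ 3`, the canonical homomorphism from the free group on the set
`W = { w² : w = s₁⋯s_ℓ reduced, s₁ = g₁, s_ℓ = g₂ }` into the free group on two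
generators is injective. -/
theorem squaredWordSet_freely_generates (ℓ : ℕ) (hℓ : 3 ≤ ℓ) :
    Function.Injective
      ⇑(FreeGroup.lift fun w : {x // x ∈ squaredWordSet ℓ} => (w : FreeGroup (Fin 2))) := by
  have := nontrivial_squaredWordSet hℓ
  choose p hp hpx using fun w : {x // x ∈ squaredWordSet ℓ} =>
    (mem_squaredWordSet_iff hℓ w.1).1 w.2
  set L : {x // x ∈ squaredWordSet ℓ} → List (Fin 2 × Bool) :=
    fun w => (List.range ℓ).map (p w) with hLdef
  have hlen : ∀ w, (L w).length = ℓ := fun w => by simp [hLdef]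
  have hinj : ∀ v w, L v = L w → v = w := fun v w h =>
    Subtype.ext (by rw [hpx v, hpx w]; exact congrArg (fun l => mk l ^ 2) h)
  have hred : ∀ w, IsReduced (L w ++ L w) := fun w => (hp w).isReduced_append_self hℓ
  have hred' : ∀ w, IsReduced (invRev (L w) ++ invRev (L w)) := fun w => by
    rw [← invRev_append, isReduced_iff_reduce_eq, reduce_invRev, (hred w).reduce_eq]
  have hpre : ∀ {l₁ l₂ l : List (Fin 2 × Bool)}, l₁ <+: l → l₂ <+: l →
      l₁.length = l₂.length → l₁ = l₂ := fun h₁ h₂ h =>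
    (List.prefix_of_prefix_length_le h₁ h₂ h.le).eq_of_length h
  refine FreeGroup.injective_lift_of_ping_pong _
    (fun w => {x : FreeGroup (Fin 2) | L w <+: x.toWord})
    (fun w => {x : FreeGroup (Fin 2) | invRev (L w) <+: x.toWord}) ?_ ?_ ?_ ?_ ?_ ?_
  · intro w
    refine ⟨mk (L w), ?_⟩
    have h : IsReduced (L w) := (hred w).infix ⟨[], L w, by simp⟩
    rw [Set.mem_ofPred_eq, toWord_mk, h.reduce_eq]
  · intro v w hvw
    refine Set.disjoint_left.2 fun x hv hw => hvw (hinj v w (hpre hv hw ?_))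
    rw [hlen, hlen]
  · intro v w hvw
    refine Set.disjoint_left.2 fun x hv hw =>
      hvw (hinj v w (invRev_injective (hpre hv hw ?_)))
    rw [invRev_length, invRev_length, hlen, hlen]
  · intro v w
    refine Set.disjoint_left.2 fun x hv hw => ?_
    have h := congrArg List.head? (hpre hv hw (by rw [invRev_length, hlen, hlen]))
    rw [invRev, List.head?_reverse, List.getLast?_map, (hp v).head?_eq hℓ,
      (hp w).getLast?_eq hℓ] at h
    simp at h
  · rintro w _ ⟨x, hx, rfl⟩
    have h := prefix_toWord_sq_mul (L w) (hred w) x hx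
    rwa [← hpx w] at h
  · rintro w _ ⟨x, hx, rfl⟩
    have h := prefix_toWord_sq_mul (invRev (L w)) (hred' w) x (by rwa [invRev_invRev])
    rwa [← inv_mk, inv_pow, ← hpx w] at h
end

section
/- Let G be a group and let H be a finite subset of G of cardinality k ≥ 2 whose elements freely generate a free subgroup of G (in particular H ∩ H⁻¹ = ∅). Let π = (2k)⁻¹ Σ_{h∈H} (δ_h + δ_{h⁻¹}) be the uniform probability measure on H ∪ H⁻¹, and for t ∈ ℕ let p^{(t)}(x,x) = π^{(t)}(e) be the probability that the random walk with independent steps distributed according to π, started at x, returns to x at time t (equivalently, the mass at the identity of the t-fold convolution π^{(t)}). Then limsup_{t→∞} (p^{(t)}(x,x))^{1/t} = √(2k−1)/k. -/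
/-!
Write `q = 2k - 1` and `ρ = √q / k = 2√q / (q + 1)`. Since the elements of `H` are free, the walk
started at `e` stays in a copy of the free group, and by symmetry `π^{(t)}(x)` depends only on `t`
and on the length `m` of the reduced word `x`. Of the `2k` neighbours of a word of length
`m + 1`, exactly one has length `m` and `q` have length `m + 2`, so the radial profile `u t m`
satisfies
`u (t+1) 0 = u t 1` and `u (t+1) (m+1) = (u t m + q * u t (m+2)) / (q + 1)`.

Put `v t m = q^{m/2} ρ^{-t} u t m`. The recurrence becomes the averaging
`v (t+1) (m+1) = (v t m + v t (m+2)) / 2`, with boundary rule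
`v (t+1) 0 = (q+1)/(2q) * v t 1`, where `1/2 ≤ (q+1)/(2q) ≤ 1`. The upper bound on the boundary
factor gives `v ≤ 1`, that is `π^{(t)}(e) ≤ ρ^t` (`radial_le`). The lower bound says that `v`
dominates the simple random walk on `ℕ` killed on leaving `ℕ`, which is counted by ballot
numbers (`le_radial`); at `t = 2n`, `m = 0` this is `Catalan(n) / 4^n ≥ (2n)^{-2}`. Hence
`ρ^{2n} (2n)^{-2} ≤ π^{(2n)}(e) ≤ ρ^{2n}`, and `(2n)^{1/(2n)} → 1` finishes the proof.
-/

/-- The `t`-fold convolution power of the uniform probability measure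
`π = (2|H|)⁻¹ Σ_{h∈H} (δ_h + δ_{h⁻¹})`, as a function on the group;
`convPowPi H t x` is the mass of `π^{(t)}` at `x` (with `π^{(0)} = δ_e`). -/
noncomputable def convPowPi {G : Type*} [Group G] [DecidableEq G] (H : Finset G) :
    ℕ → G → ℝ
  | 0, x => if x = 1 then 1 else 0
  | t + 1, x =>
      (2 * (H.card : ℝ))⁻¹ * ∑ h ∈ H, (convPowPi H t (h⁻¹ * x) + convPowPi H t (h * x))

/-! ### The radial profile and ballot numbers -/

/-- The radial profile of the walk on the `(s² + 1)`-regular tree: `radial s t m` is the mass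
given at time `t` to each single vertex at distance `m` from the starting point. The parameter is
`s = √q`, where `q + 1` is the degree. -/
noncomputable def radial (s : ℝ) : ℕ → ℕ → ℝ
  | 0, m => if m = 0 then 1 else 0
  | t + 1, 0 => radial s t 1
  | t + 1, m + 1 => (radial s t m + s ^ 2 * radial s t (m + 2)) / (s ^ 2 + 1)

/-- The ballot number `C(t, j) - C(t, j - 1)`, which counts the walks in `ℕ` of `t` steps `±1`,
exactly `j` of them downwards, that start at `0`; this reading is valid for `2 * j ≤ t`. -/
def ballot (t : ℕ) : ℕ → ℝ
  | 0 => 1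
  | j + 1 => (t.choose (j + 1) : ℝ) - (t.choose j : ℝ)

lemma ballot_succ_succ (t j : ℕ) : ballot (t + 1) (j + 1) = ballot t (j + 1) + ballot t j := by
  cases j with
  | zero => simp [ballot]
  | succ j =>
    simp only [ballot, Nat.choose_succ_succ' t]
    push_cast
    ring

/-- A walk that ends at `0` was at `1` one step earlier. -/
lemma ballot_boundary (j : ℕ) : ballot (2 * j + 2) (j + 1) = ballot (2 * j + 1) j := by
  have h : (2 * j + 1).choose (j + 1) = (2 * j + 1).choose j :=
    Nat.choose_symm_half j
  rw [ballot_succ_succ]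
  simp [ballot, h]

lemma succ_mul_ballot (n : ℕ) : ((n : ℝ) + 1) * ballot (2 * n) n = n.centralBinom := by
  cases n with
  | zero => simp [ballot]
  | succ n =>
    have h := Nat.choose_succ_right_eq (2 * (n + 1)) n
    rw [show 2 * (n + 1) - n = n + 2 by omega] at h
    have hne : ((2 * (n + 1)).choose (n + 1) : ℝ) * (n + 1) = (2 * (n + 1)).choose n * (n + 2) := by
      exact_mod_cast h
    simp only [ballot, Nat.centralBinom]
    push_cast
    linarith

/-- The subexponential lower bound for Catalan numbers. -/
lemma four_pow_le_ballot (n : ℕ) (hn : 1 ≤ n) : (4 : ℝ) ^ n ≤ (2 * n) ^ 2 * ballot (2 * n) n := by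
  have h1 : (4 : ℝ) ^ n ≤ 2 * n * n.centralBinom := by
    exact_mod_cast Nat.four_pow_le_two_mul_self_mul_centralBinom n hn
  have h2 := succ_mul_ballot n
  have hn' : (1 : ℝ) ≤ n := by exact_mod_cast hn
  have h3 : 0 ≤ ballot (2 * n) n := by
    have : (0 : ℝ) ≤ (n.centralBinom : ℝ) := by positivity
    rw [← h2] at this
    exact nonneg_of_mul_nonneg_right this (by positivity)
  rw [← h2] at h1
  refine h1.trans ?_
  rw [pow_two, mul_assoc (2 * (n : ℝ)) (2 * n)]
  gcongr
  linarith

/-! ### Two-sided bounds for the radial profile -/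

lemma radial_nonneg (s : ℝ) (t m : ℕ) : 0 ≤ radial s t m := by
  induction t generalizing m with
  | zero => simp only [radial]; split_ifs <;> norm_num
  | succ t ih =>
    cases m with
    | zero => exact ih 1
    | succ m =>
      have h1 := ih m
      have h2 := ih (m + 2)
      simp only [radial]
      positivity

/-- The function `m ↦ s^{-m}` is `2s/(s²+1)`-superharmonic for the radial recurrence. -/
lemma radial_le {s : ℝ} (hs : 1 ≤ s) (t m : ℕ) :
    radial s t m * s ^ m ≤ (2 * s / (s ^ 2 + 1)) ^ t := by
  have hs0 : 0 < s := by linarith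
  induction t generalizing m with
  | zero =>
    rcases m with _ | m <;> simp [radial]
  | succ t ih =>
    set R := (2 * s / (s ^ 2 + 1)) ^ t with hR
    have hR0 : 0 ≤ R := by positivity
    rw [pow_succ, ← hR, mul_div_assoc', le_div_iff₀ (by positivity)]
    cases m with
    | zero =>
      have h1 := ih 1
      simp only [radial, pow_zero, mul_one, pow_one] at h1 ⊢
      have h2 := radial_nonneg s t 1
      nlinarith [mul_le_mul_of_nonneg_left h1 hs0.le,
        mul_nonneg h2 (by nlinarith : (0 : ℝ) ≤ s ^ 2 - 1)]
    | succ m =>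
      have h1 := mul_le_mul_of_nonneg_left (ih m) hs0.le
      have h2 := mul_le_mul_of_nonneg_left (ih (m + 2)) hs0.le
      have h3 : radial s (t + 1) (m + 1) * s ^ (m + 1) * (s ^ 2 + 1)
          = s * (radial s t m * s ^ m) + s * (radial s t (m + 2) * s ^ (m + 2)) := by
        simp only [radial]
        field_simp
        ring
      rw [h3]
      linarith

/-- The radial recurrence dominates the simple random walk killed on leaving `ℕ`. -/
lemma le_radial {s : ℝ} (hs : 1 ≤ s) (t m j : ℕ) (h : m + 2 * j = t) :
    (s / (s ^ 2 + 1)) ^ t * ballot t j ≤ radial s t m * s ^ m := by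
  have hs0 : 0 < s := by linarith
  induction t generalizing m j with
  | zero =>
    obtain ⟨rfl, rfl⟩ : m = 0 ∧ j = 0 := by omega
    simp [radial, ballot]
  | succ t ih =>
    set R := (s / (s ^ 2 + 1)) ^ t with hR
    have hR0 : 0 ≤ R := by positivity
    rw [pow_succ, ← hR, mul_div_assoc', div_mul_eq_mul_div, div_le_iff₀ (by positivity)]
    cases m with
    | zero =>
      obtain ⟨j, rfl⟩ : ∃ i, j = i + 1 := ⟨j - 1, by omega⟩
      obtain rfl : t = 2 * j + 1 := by omega
      have h1 := ih 1 j (by omega)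
      rw [ballot_boundary]
      have h2 := mul_le_mul_of_nonneg_left h1 hs0.le
      have h3 := radial_nonneg s (2 * j + 1) 1
      rw [show radial s (2 * j + 1 + 1) 0 = radial s (2 * j + 1) 1 from rfl]
      simp only [pow_zero, mul_one, pow_one] at h2 ⊢
      nlinarith
    | succ m =>
      have h3 : radial s (t + 1) (m + 1) * s ^ (m + 1) * (s ^ 2 + 1)
          = s * (radial s t m * s ^ m) + s * (radial s t (m + 2) * s ^ (m + 2)) := by
        simp only [radial]
        field_simp
        ring
      rw [h3]
      have h1 := mul_le_mul_of_nonneg_left (ih m j (by omega)) hs0.le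
      cases j with
      | zero =>
        have h4 := radial_nonneg s t (m + 2)
        have h5 : 0 ≤ s * (radial s t (m + 2) * s ^ (m + 2)) := by positivity
        simp only [ballot] at h1 ⊢
        linarith
      | succ j =>
        have h2 := mul_le_mul_of_nonneg_left (ih (m + 2) j (by omega)) hs0.le
        rw [ballot_succ_succ]
        linarith

/-! ### Radiality of the walk on the free group -/

/-- Each vertex of the Cayley tree of the free group has one neighbour nearer to the identity
(none, for the identity itself), and all its other neighbours are farther. -/
lemma sum_norm_neighbours {α : Type*} [Fintype α] [DecidableEq α] (g : ℕ → ℝ) (x : FreeGroup α) :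
    ∑ a : α, (g ((FreeGroup.of a)⁻¹ * x).norm + g (FreeGroup.of a * x).norm) =
      if x.norm = 0 then 2 * (Fintype.card α : ℝ) * g 1
      else g (x.norm - 1) + (2 * (Fintype.card α : ℝ) - 1) * g (x.norm + 1) := by
  have key : ∀ p : α × Bool, (FreeGroup.mk [p] * x).norm =
      if x.toWord.head? = some (p.1, !p.2) then x.norm - 1 else x.norm + 1 := by
    intro p
    have hx : (FreeGroup.mk [p] * x).toWord = FreeGroup.reduce (p :: x.toWord) := by
      conv_lhs => rw [← FreeGroup.mk_toWord (x := x)]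
      rw [FreeGroup.mul_mk, FreeGroup.toWord_mk]
      rfl
    rw [FreeGroup.norm, hx, FreeGroup.reduce.cons, FreeGroup.reduce_toWord, FreeGroup.norm]
    rcases x.toWord with _ | ⟨⟨c, d⟩, L⟩
    · simp
    · obtain ⟨a, b⟩ := p
      by_cases h : c = a ∧ d = !b
      · obtain ⟨rfl, rfl⟩ := h
        simp
      · have hne : ¬ (a = c ∧ b = !d) := by
          rintro ⟨rfl, rfl⟩
          simp at h
        simp [h, hne]
  have hsum : ∑ a : α, (g ((FreeGroup.of a)⁻¹ * x).norm + g (FreeGroup.of a * x).norm) =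
      ∑ p : α × Bool, g (FreeGroup.mk [p] * x).norm := by
    rw [Fintype.sum_prod_type]
    refine Finset.sum_congr rfl fun a _ => ?_
    rw [Fintype.sum_bool, add_comm]
    rfl
  rw [hsum]
  simp only [key]
  have hc : (Fintype.card (α × Bool) : ℝ) = 2 * Fintype.card α := by
    simp [Fintype.card_prod, mul_comm]
  rw [FreeGroup.norm]
  rcases x.toWord with _ | ⟨⟨c, d⟩, L⟩
  · simp [mul_comm]
  · rw [← Finset.add_sum_erase _ _ (Finset.mem_univ (c, !d)), Finset.sum_congr rfl
      (g := fun _ => g ((c, d) :: L).length.succ)]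
    · have h1 : 1 ≤ Fintype.card (α × Bool) := Fintype.card_pos_iff.mpr ⟨(c, d)⟩
      rw [Finset.sum_const, Finset.card_erase_of_mem (Finset.mem_univ _), Finset.card_univ,
        nsmul_eq_mul, Nat.cast_sub h1, hc]
      simp
    · rintro ⟨a, b⟩ hp
      have hne : ¬ (c = a ∧ d = !b) := by
        rintro ⟨rfl, rfl⟩
        simp at hp
      simp [hne]

/-- On the free subgroup generated by `H`, the convolution powers are radial. -/
lemma convPowPi_lift {G : Type*} [Group G] [DecidableEq G] (H : Finset G) {s : ℝ}
    (hs : s ^ 2 = 2 * (H.card : ℝ) - 1) (hH : 0 < H.card)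
    (hfree : Function.Injective ⇑(FreeGroup.lift fun h : {x // x ∈ H} => (h : G)))
    (t : ℕ) (x : FreeGroup {x // x ∈ H}) :
    convPowPi H t (FreeGroup.lift (fun h : {x // x ∈ H} => (h : G)) x) = radial s t x.norm := by
  have hH' : (0 : ℝ) < H.card := by exact_mod_cast hH
  induction t generalizing x with
  | zero =>
    simp only [convPowPi, radial, FreeGroup.norm_eq_zero, map_eq_one_iff _ hfree]
  | succ t ih =>
    have hstep : ∀ a : {x // x ∈ H},
        convPowPi H t ((a : G)⁻¹ * FreeGroup.lift (fun h : {x // x ∈ H} => (h : G)) x) +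
          convPowPi H t ((a : G) * FreeGroup.lift (fun h : {x // x ∈ H} => (h : G)) x) =
        radial s t ((FreeGroup.of a)⁻¹ * x).norm + radial s t (FreeGroup.of a * x).norm := by
      intro a
      rw [← ih, ← ih]
      simp
    rw [convPowPi, ← Finset.sum_coe_sort H, Finset.sum_congr rfl fun a _ => hstep a,
      sum_norm_neighbours (radial s t)]
    simp only [Fintype.card_coe]
    rcases x.norm with _ | m
    · simp only [radial, if_true]
      field_simp
    · simp only [radial, Nat.add_eq_zero_iff, one_ne_zero, and_false, if_false, hs,
        Nat.add_sub_cancel]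
      ring_nf

/-! ### Return probabilities and their growth rate -/

/-- **Kesten's theorem.** If the elements of a finite set `H` of cardinality `k ≥ 2`
freely generate a free subgroup of `G`, then the return probabilities
`p^{(t)}(x,x) = π^{(t)}(e)` of the `π`-random walk satisfy
`limsup_{t→∞} (p^{(t)}(x,x))^{1/t} = √(2k−1)/k`. -/
theorem kesten_return_probability {G : Type*} [Group G] [DecidableEq G]
    (H : Finset G) (k : ℕ) (hk : 2 ≤ k) (hcard : H.card = k)
    (hfree : Function.Injective ⇑(FreeGroup.lift fun h : {x // x ∈ H} => (h : G))) :
    Filter.limsup (fun t : ℕ => convPowPi H t (1 : G) ^ ((t : ℝ)⁻¹)) Filter.atTop =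
      Real.sqrt (2 * (k : ℝ) - 1) / (k : ℝ) := by
  have hk' : (2 : ℝ) ≤ k := by exact_mod_cast hk
  -- `s = √q`, where `q = 2k - 1`.
  set s := Real.sqrt (2 * (k : ℝ) - 1) with hsdef
  have hs2 : s ^ 2 = 2 * (k : ℝ) - 1 := Real.sq_sqrt (by linarith)
  have hs : 1 ≤ s := Real.one_le_sqrt.mpr (by linarith)
  have hp : ∀ t, convPowPi H t (1 : G) = radial s t 0 := by
    intro t
    have h := convPowPi_lift H (s := s) (by rw [hcard, hs2]) (by omega) hfree t 1
    simpa using h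
  have hρ : s / k = 2 * s / (s ^ 2 + 1) := by
    rw [hs2]
    field_simp
    ring
  set ρ := s / (k : ℝ) with hρdef
  have hρ0 : 0 < ρ := by positivity
  have hnn : ∀ t, 0 ≤ convPowPi H t (1 : G) := fun t => by
    rw [hp]; exact radial_nonneg s t 0
  have hup : ∀ t, convPowPi H t (1 : G) ≤ ρ ^ t := fun t => by
    rw [hp, hρ]; simpa using radial_le hs t 0
  have hlow : ∀ n : ℕ, 1 ≤ n →
      ρ ^ (2 * n) * (((2 * n : ℕ) : ℝ) ^ 2)⁻¹ ≤ convPowPi H (2 * n) (1 : G) := by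
    intro n hn
    have hn' : (1 : ℝ) ≤ n := by exact_mod_cast hn
    have h1 := le_radial hs (2 * n) 0 n (by omega)
    rw [pow_zero, mul_one, ← hp] at h1
    refine le_trans ?_ h1
    have h2 : s / (s ^ 2 + 1) = ρ / 2 := by rw [hρ]; ring
    have h3 : (ρ / 2) ^ (2 * n) = ρ ^ (2 * n) / 4 ^ n := by
      rw [div_pow, pow_mul 2 2 n]; norm_num
    rw [h2, h3, div_mul_eq_mul_div, mul_div_assoc]
    gcongr
    rw [inv_eq_one_div, div_le_div_iff₀ (by positivity) (by positivity), one_mul, mul_comm]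
    push_cast
    exact four_pow_le_ballot n hn
  have hroot_le : ∀ᶠ t : ℕ in Filter.atTop, convPowPi H t (1 : G) ^ ((t : ℝ)⁻¹) ≤ ρ := by
    filter_upwards [Filter.eventually_ge_atTop 1] with t ht
    calc convPowPi H t (1 : G) ^ ((t : ℝ)⁻¹) ≤ (ρ ^ t) ^ ((t : ℝ)⁻¹) :=
          Real.rpow_le_rpow (hnn t) (hup t) (by positivity)
      _ = ρ := Real.pow_rpow_inv_natCast hρ0.le (by omega)
  have hroot_ge : ∀ n : ℕ, 1 ≤ n →
      ρ * (((((2 * n : ℕ) : ℝ) ^ (1 / ((2 * n : ℕ) : ℝ))) ^ 2)⁻¹) ≤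
        convPowPi H (2 * n) (1 : G) ^ (((2 * n : ℕ) : ℝ)⁻¹) := by
    intro n hn
    refine le_trans (le_of_eq ?_)
      (Real.rpow_le_rpow (by positivity) (hlow n hn) (by positivity))
    rw [Real.mul_rpow (by positivity) (by positivity),
      Real.pow_rpow_inv_natCast hρ0.le (by omega), Real.inv_rpow (by positivity), one_div,
      Real.rpow_pow_comm (by positivity)]
  have heven : Filter.Tendsto (fun n : ℕ => 2 * n) Filter.atTop Filter.atTop :=
    Filter.tendsto_id.const_mul_atTop' (by norm_num)
  have hlim : Filter.Tendsto
      (fun n : ℕ => ρ * (((((2 * n : ℕ) : ℝ) ^ (1 / ((2 * n : ℕ) : ℝ))) ^ 2)⁻¹))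
      Filter.atTop (nhds ρ) := by
    have h := (tendsto_rpow_div.comp (tendsto_natCast_atTop_atTop (R := ℝ))).comp heven
    have hne := ((h.pow 2).inv₀ (by norm_num)).const_mul ρ
    simpa using hne
  have hbdd : Filter.IsBoundedUnder (· ≤ ·) Filter.atTop
      (fun t : ℕ => convPowPi H t (1 : G) ^ ((t : ℝ)⁻¹)) := ⟨ρ, hroot_le⟩
  -- Nonnegativity of the roots keeps the real `limsup` from taking a junk value.
  have hcob : Filter.IsCoboundedUnder (· ≤ ·) Filter.atTop
      (fun t : ℕ => convPowPi H t (1 : G) ^ ((t : ℝ)⁻¹)) :=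
    Filter.IsBoundedUnder.isCoboundedUnder_le
      (Filter.isBoundedUnder_of ⟨0, fun t : ℕ => Real.rpow_nonneg (hnn t) _⟩)
  refine le_antisymm (Filter.limsup_le_of_le hcob hroot_le) ?_
  refine le_of_forall_lt fun r hr => ?_
  obtain ⟨r', hr', hr'ρ⟩ := exists_between hr
  refine hr'.trans_le (Filter.le_limsup_of_frequently_le ?_ hbdd)
  refine heven.frequently (Filter.Eventually.frequently ?_)
  filter_upwards [hlim.eventually_const_lt hr'ρ, Filter.eventually_ge_atTop 1] with n h1 h2
  exact h1.le.trans (hroot_ge n h2)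
end

section
/- For all 0 < σ < 1 and 0 < κ < 1 there is ε₂ > 0 such that for all sufficiently small δ > 0 the following holds. Let A ⊆ [−1,1] be a finite union of closed intervals of length δ such that |A| = δ^{1−σ} (Lebesgue measure) and such that for every ρ with δ < ρ < δ^{ε₂}, max_{a∈ℝ} |A ∩ [a−ρ, a+ρ]| < ρ^{κ} · |A|. Then |A + A| + |A · A| > δ^{1−σ−ε₂}, where A + A = {x+y : x,y ∈ A} and A·A = {xy : x,y ∈ A}. -/
/-!
Everything is measured by covering numbers: `N_ρ(X)` is the number of cells of length `ρ` that `X`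
meets, and `X + x X` is the family of the sums `y + x z`, `y, z ∈ X`.

**Reduction to an approximate ring.** Suppose that `A + A` and `A * A` are both small. Discretizing
at scale `δ` and discarding the points near `0`, a minority by non-concentration, leaves a finite
set of small growth with loss `K = δ ^ (-c)`, `c` small (`SmallGrowth`, `exists_smallGrowth`). The
Cauchy–Schwarz bound for the multiplicative energy yields `b ∈ A` and a large `X ⊆ A` such that
`a A` and `b A` share many points at scale `δ` for each `a ∈ X` (`SmallGrowth.popular`). By Ruzsa's
covering lemma each `a A`, `a ∈ X`, and hence each `u A` with `u = c₁ - c₂ + c₃ - c₄`, `cᵢ ∈ X`, is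
covered by few translates of a fixed iterated sum-difference set of `b A` (`SmallGrowth.cover`,
`comb_cover`), so by Plünnecke's inequality `b X + b X + v X + u X` is small for all such `u`, `v`
(`SmallGrowth.comb_sum`). Such an
estimate at scale `δ` descends to all coarser scales (`SmallGrowth.descent`); and if `v X + u X` has
diameter at most `t`, it bounds `N_t(X) N_ρ(v X + u X)`, since `b X` has about `N_t(X)` separated
pieces. The outcome is that `X` is `RingLike` (`SmallGrowth.exists_ringLike`).

**There is no approximate ring.** Let `X` be ring-like. If `x = v / u` with `u`, `v` of the form
`c₁ - c₂ + c₃ - c₄`, then `X + x X` is small (`RingLike.ratio_le`). On the other hand, if `x` is not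
close to a quotient of differences of `X` with a denominator that is not too small, then the sums
`y + x z` are essentially distinct and `X + x X` is large (`RingLike.collision`). So every such `x`
is close to a quotient of differences. If `y = (a₁ - a₂) / (a₃ - a₄)` is a quotient of differences,
then `y / 2` and `(1 + y) / 2` are ratios `v / u` as above, with `u = 2 (a₃ - a₄)`; therefore the
quotients of differences are closed, up to a small error, under both maps, and bisection shows that
they are dense in `[0, 1]` (`RingLike.dense`). Consequently `X + x X` is small for every
`x ∈ [0, 1]`. An `L²` estimate averaged over `x` forbids this, because `X` is non-concentrated and
of dimension less than `1` (`RingLike.projection`).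

The comparison of the two bounds for `X + x X` needs a scale `τ` with
`N_{τ^q}(X) ≲ τ^(-η) N_τ(X)^q` (`RingLike.scale`). As covering numbers of a ring-like set are
supermultiplicative (`RingLike.supermul`), such a `τ` is found by pigeonholing over the scales
`δ^(q⁻ⁱ)` (`core`).
-/

open MeasureTheory Set
open scoped Pointwise

namespace RingThm

/-! ### Covering numbers -/

/-- The covering number at scale `ρ` of the finite family `f i`, `i ∈ I`, of reals: the number of
cells `[kρ, (k+1)ρ)`, `k ∈ ℤ`, that it meets. -/
noncomputable def cov {ι : Type*} (ρ : ℝ) (I : Finset ι) (f : ι → ℝ) : ℝ :=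
  ((I.image (fun i => ⌊f i / ρ⌋)).card : ℝ)

lemma cov_nonneg {ι : Type*} (ρ : ℝ) (I : Finset ι) (f : ι → ℝ) : 0 ≤ cov ρ I f :=
  Nat.cast_nonneg _

lemma one_le_cov {ι : Type*} (ρ : ℝ) {I : Finset ι} (hI : I.Nonempty) (f : ι → ℝ) :
    1 ≤ cov ρ I f := by
  unfold cov
  exact_mod_cast (hI.image _).card_pos

lemma cov_mono {ι : Type*} (ρ : ℝ) {I J : Finset ι} (h : I ⊆ J) (f : ι → ℝ) :
    cov ρ I f ≤ cov ρ J f := by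
  unfold cov
  exact_mod_cast Finset.card_le_card (Finset.image_subset_image h)

lemma int_card {Z : Finset ℤ} {D : ℝ} (hD : 0 ≤ D)
    (h : ∀ z ∈ Z, ∀ w ∈ Z, ((z : ℝ) - w) < D + 1) : (Z.card : ℝ) ≤ D + 2 := by
  rcases Z.eq_empty_or_nonempty with rfl | hZ
  · simp; linarith
  have hsub : Z ⊆ Finset.Icc (Z.min' hZ) (Z.min' hZ + ⌊D + 1⌋) := by
    intro z hz
    rw [Finset.mem_Icc]
    refine ⟨Finset.min'_le _ _ hz, ?_⟩
    have := h z hz _ (Z.min'_mem hZ)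
    have h2 : z - Z.min' hZ ≤ ⌊D + 1⌋ := Int.le_floor.mpr (by push_cast; linarith)
    linarith
  have h1 := Finset.card_le_card hsub
  rw [Int.card_Icc] at h1
  have h3 : (0 : ℤ) ≤ ⌊D + 1⌋ := Int.floor_nonneg.mpr (by linarith)
  have h4 : (Z.card : ℤ) ≤ ⌊D + 1⌋ + 1 := by omega
  have h5 : (Z.card : ℝ) ≤ (⌊D + 1⌋ : ℝ) + 1 := by exact_mod_cast h4
  linarith [Int.floor_le (D + 1)]

lemma abs_sub_lt_of_floor {x y ρ : ℝ} (hρ : 0 < ρ) (h : ⌊x / ρ⌋ = ⌊y / ρ⌋) : |x - y| < ρ := by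
  have := Int.abs_sub_lt_one_of_floor_eq_floor h
  rwa [← sub_div, abs_div, abs_of_pos hρ, div_lt_one hρ] at this

lemma floor_sub_lt {x y ρ L : ℝ} (hρ : 0 < ρ) (h : |x - y| ≤ L * ρ) :
    ((⌊x / ρ⌋ : ℝ) - ⌊y / ρ⌋) < L + 1 := by
  have h1 := Int.floor_le (x / ρ)
  have h2 := Int.lt_floor_add_one (y / ρ)
  have h3 : x / ρ - y / ρ ≤ L := by
    rw [← sub_div, div_le_iff₀ hρ]; exact (le_abs_self _).trans h
  linarith

/-- A family of diameter at most `L ρ` meets at most `L + 2` cells of length `ρ`. -/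
lemma cov_le_of_diam {ι : Type*} {ρ L : ℝ} (hρ : 0 < ρ) (hL : 0 ≤ L) {I : Finset ι} {f : ι → ℝ}
    (h : ∀ i ∈ I, ∀ j ∈ I, |f i - f j| ≤ L * ρ) : cov ρ I f ≤ L + 2 := by
  refine int_card hL ?_
  intro z hz w hw
  obtain ⟨i, hi, rfl⟩ := Finset.mem_image.mp hz
  obtain ⟨j, hj, rfl⟩ := Finset.mem_image.mp hw
  exact floor_sub_lt hρ (h i hi j hj)

/-- Comparison of covering numbers: if `g` moves by at most `L ρ'` whenever `f` moves by less than
`ρ`, each `ρ`-cell for `f` accounts for at most `L + 2` cells of length `ρ'` for `g`. -/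
lemma cov_comp {ι : Type*} {ρ ρ' L : ℝ} (hρ : 0 < ρ) (hρ' : 0 < ρ') (hL : 0 ≤ L) {I : Finset ι}
    {f g : ι → ℝ}
    (h : ∀ i ∈ I, ∀ j ∈ I, |f i - f j| < ρ → |g i - g j| ≤ L * ρ') :
    cov ρ' I g ≤ (L + 2) * cov ρ I f := by
  classical
  have hsub : I.image (fun i => ⌊g i / ρ'⌋) ⊆ (I.image (fun i => ⌊f i / ρ⌋)).biUnion
      (fun k => (I.filter (fun i => ⌊f i / ρ⌋ = k)).image (fun i => ⌊g i / ρ'⌋)) := by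
    intro z hz
    obtain ⟨i, hi, rfl⟩ := Finset.mem_image.mp hz
    exact Finset.mem_biUnion.mpr ⟨_, Finset.mem_image_of_mem _ hi,
      Finset.mem_image_of_mem _ (Finset.mem_filter.mpr ⟨hi, rfl⟩)⟩
  have h1 := (Finset.card_le_card hsub).trans Finset.card_biUnion_le
  have h2 : cov ρ' I g ≤ ∑ k ∈ I.image (fun i => ⌊f i / ρ⌋),
      cov ρ' (I.filter (fun i => ⌊f i / ρ⌋ = k)) g := by
    unfold cov; exact_mod_cast h1
  refine h2.trans ((Finset.sum_le_card_nsmul _ _ (L + 2) ?_).trans ?_)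
  · intro k _
    refine cov_le_of_diam hρ' hL ?_
    intro i hi j hj
    obtain ⟨hi, hi'⟩ := Finset.mem_filter.mp hi
    obtain ⟨hj, hj'⟩ := Finset.mem_filter.mp hj
    exact h i hi j hj (abs_sub_lt_of_floor hρ (hi'.trans hj'.symm))
  · unfold cov; rw [nsmul_eq_mul, mul_comm]

/-- Coarsening the scale increases the covering number by at most a factor of three. -/
lemma cov_coarse {ι : Type*} {ρ ρ' : ℝ} (hρ : 0 < ρ) (h : ρ ≤ ρ') (I : Finset ι) (f : ι → ℝ) :
    cov ρ' I f ≤ 3 * cov ρ I f := by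
  have := cov_comp (L := 1) hρ (hρ.trans_le h) zero_le_one (I := I) (f := f) (g := f)
    (fun i _ j _ hij => by linarith)
  norm_num at this; exact this

lemma cov_fine {ι : Type*} {ρ ρ' : ℝ} (hρ : 0 < ρ) (h : ρ ≤ ρ') (I : Finset ι) (f : ι → ℝ) :
    cov ρ I f ≤ 3 * (ρ' / ρ) * cov ρ' I f := by
  have h1 : 1 ≤ ρ' / ρ := by rwa [one_le_div hρ]
  have := cov_comp (L := ρ' / ρ) (hρ.trans_le h) hρ (by linarith) (I := I) (f := f) (g := f)
    (fun i _ j _ hij => by rw [div_mul_cancel₀ _ hρ.ne']; exact hij.le)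
  exact this.trans (mul_le_mul_of_nonneg_right (by linarith) (cov_nonneg _ _ _))

/-- One index for each cell. -/
lemma exists_reps {ι : Type*} (ρ : ℝ) (I : Finset ι) (f : ι → ℝ) :
    ∃ R ⊆ I, (R.card : ℝ) = cov ρ I f ∧ (∀ i ∈ R, ∀ j ∈ R, ⌊f i / ρ⌋ = ⌊f j / ρ⌋ → i = j) := by
  classical
  have hs : Set.SurjOn (fun i => ⌊f i / ρ⌋) (I : Set ι) (I.image (fun i => ⌊f i / ρ⌋) : Finset ℤ) := by
    rw [Finset.coe_image]; exact Set.surjOn_image _ _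
  obtain ⟨R, hR, hinj, him⟩ := Finset.exists_subset_injOn_image_eq_of_surjOn _ _ hs
  refine ⟨R, by exact_mod_cast hR, ?_, fun i hi j hj h => hinj hi hj h⟩
  unfold cov
  rw [← him, Finset.card_image_of_injOn hinj]

lemma card_eq_cov {ι : Type*} {ρ : ℝ} {R : Finset ι} {f : ι → ℝ}
    (h : ∀ i ∈ R, ∀ j ∈ R, ⌊f i / ρ⌋ = ⌊f j / ρ⌋ → i = j) : (R.card : ℝ) = cov ρ R f := by
  classical
  unfold cov
  rw [Finset.card_image_of_injOn (fun i hi j hj hij => h i hi j hj hij)]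

/-- If all fibres of `Q ⊆ ι × κ` over `ι` have at most `m` elements, and at most `n` elements occur
as first coordinates, then `Q` has at most `n m` elements. -/
lemma card_le_fst {ι κ : Type*} [DecidableEq ι] [DecidableEq κ] {Q : Finset (ι × κ)} {n m : ℝ}
    (hm : 0 ≤ m)
    (h1 : ((Q.image Prod.fst).card : ℝ) ≤ n)
    (h2 : ∀ i, ((Q.filter (fun q => q.1 = i)).card : ℝ) ≤ m) : (Q.card : ℝ) ≤ n * m := by
  have h := Finset.card_eq_sum_card_image Prod.fst Q
  have h' : (Q.card : ℝ) = ∑ i ∈ Q.image Prod.fst, ((Q.filter (fun q => q.1 = i)).card : ℝ) := by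
    exact_mod_cast h
  rw [h']
  refine (Finset.sum_le_card_nsmul _ _ m fun i _ => h2 i).trans ?_
  rw [nsmul_eq_mul]
  exact mul_le_mul_of_nonneg_right h1 hm

/-- If `g` has diameter at most `10 t`, the sums `f i + g j` need about
`N_t(f) N_ρ(g)` cells of length `ρ ≤ t`. -/
lemma cov_mul_le {ι κ : Type*} {ρ t : ℝ} (hρ : 0 < ρ) (ht : ρ ≤ t) {I : Finset ι} {J : Finset κ}
    {f : ι → ℝ} {g : κ → ℝ} (hg : ∀ j ∈ J, ∀ j' ∈ J, |g j - g j'| ≤ 10 * t) :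
    cov t I f * cov ρ J g ≤ 39 * cov ρ (I ×ˢ J) (fun p => f p.1 + g p.2) := by
  classical
  have ht0 : 0 < t := hρ.trans_le ht
  obtain ⟨R, hRI, hRc, hR⟩ := exists_reps t I f
  obtain ⟨S, hSJ, hSc, hS⟩ := exists_reps ρ J g
  set F : ι × κ → ℤ := fun p => ⌊(f p.1 + g p.2) / ρ⌋ with hF
  have key : (R ×ˢ S).card ≤ 39 * ((R ×ˢ S).image F).card := by
    refine Finset.card_le_mul_card_image _ _ ?_
    intro k _
    have hk : ∀ p ∈ (R ×ˢ S).filter (fun x => F x = k), ∀ q ∈ (R ×ˢ S).filter (fun x => F x = k),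
        |(f p.1 + g p.2) - (f q.1 + g q.2)| < ρ := by
      intro p hp q hq
      exact abs_sub_lt_of_floor hρ ((Finset.mem_filter.mp hp).2.trans (Finset.mem_filter.mp hq).2.symm)
    have hmem : ∀ p ∈ (R ×ˢ S).filter (fun x => F x = k), p.1 ∈ R ∧ p.2 ∈ S := by
      intro p hp
      exact Finset.mem_product.mp (Finset.mem_filter.mp hp).1
    generalize (R ×ˢ S).filter (fun x => F x = k) = Q at hk hmem ⊢
    have : (Q.card : ℝ) ≤ 13 * 3 := by
      refine card_le_fst (by norm_num) ?_ ?_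
      · rw [card_eq_cov (ρ := t) (f := f)]
        · refine (cov_le_of_diam (L := 11) ht0 (by norm_num) ?_).trans (by norm_num)
          intro i hi j hj
          obtain ⟨p, hp, rfl⟩ := Finset.mem_image.mp hi
          obtain ⟨q, hq, rfl⟩ := Finset.mem_image.mp hj
          have h1 := hk p hp q hq
          have h2 := hg p.2 (hSJ (hmem p hp).2) q.2 (hSJ (hmem q hq).2)
          rw [abs_lt] at h1
          rw [abs_le] at h2 ⊢
          constructor <;> linarith
        · intro i hi j hj hij
          obtain ⟨p, hp, rfl⟩ := Finset.mem_image.mp hi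
          obtain ⟨q, hq, rfl⟩ := Finset.mem_image.mp hj
          exact hR _ (hmem p hp).1 _ (hmem q hq).1 hij
      · intro i
        rw [card_eq_cov (ρ := ρ) (f := fun p => g p.2)]
        · refine (cov_le_of_diam (L := 1) hρ (by norm_num) ?_).trans (by norm_num)
          intro p hp q hq
          obtain ⟨hp, hp1⟩ := Finset.mem_filter.mp hp
          obtain ⟨hq, hq1⟩ := Finset.mem_filter.mp hq
          have := hk p hp q hq
          rw [hp1, hq1, add_sub_add_left_eq_sub] at this
          linarith
        · intro p hp q hq hpq
          obtain ⟨hp, hp1⟩ := Finset.mem_filter.mp hp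
          obtain ⟨hq, hq1⟩ := Finset.mem_filter.mp hq
          exact Prod.ext (hp1.trans hq1.symm) (hS _ (hmem p hp).2 _ (hmem q hq).2 hpq)
    norm_num at this
    exact_mod_cast this
  have h1 : cov t I f * cov ρ J g ≤ 39 * cov ρ (R ×ˢ S) (fun p => f p.1 + g p.2) := by
    rw [← hRc, ← hSc]
    rw [Finset.card_product] at key
    unfold cov
    exact_mod_cast key
  refine h1.trans (mul_le_mul_of_nonneg_left (cov_mono _ ?_ _) (by norm_num))
  exact Finset.product_subset_product hRI hSJ

/-- Pigeonhole: some cell of length `t` carries at least the average share of `N_ρ`. -/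
lemma exists_cell {ι : Type*} (ρ t : ℝ) (ht : 0 < t) {I : Finset ι} (hI : I.Nonempty)
    (f g : ι → ℝ) :
    ∃ J ⊆ I, (∀ i ∈ J, ∀ j ∈ J, |f i - f j| < t) ∧ cov ρ I g ≤ cov t I f * cov ρ J g := by
  classical
  have hne := hI.image (fun i => ⌊f i / t⌋)
  obtain ⟨k, hk, hmax⟩ := Finset.exists_max_image (I.image (fun i => ⌊f i / t⌋))
    (fun k => cov ρ (I.filter (fun i => ⌊f i / t⌋ = k)) g) hne
  refine ⟨I.filter (fun i => ⌊f i / t⌋ = k), Finset.filter_subset _ _, ?_, ?_⟩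
  · intro i hi j hj
    exact abs_sub_lt_of_floor ht ((Finset.mem_filter.mp hi).2.trans (Finset.mem_filter.mp hj).2.symm)
  have hsub : I.image (fun i => ⌊g i / ρ⌋) ⊆ (I.image (fun i => ⌊f i / t⌋)).biUnion
      (fun k => (I.filter (fun i => ⌊f i / t⌋ = k)).image (fun i => ⌊g i / ρ⌋)) := by
    intro z hz
    obtain ⟨i, hi, rfl⟩ := Finset.mem_image.mp hz
    exact Finset.mem_biUnion.mpr ⟨_, Finset.mem_image_of_mem _ hi,
      Finset.mem_image_of_mem _ (Finset.mem_filter.mpr ⟨hi, rfl⟩)⟩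
  have h1 := (Finset.card_le_card hsub).trans Finset.card_biUnion_le
  have h2 : cov ρ I g ≤ ∑ k ∈ I.image (fun i => ⌊f i / t⌋),
      cov ρ (I.filter (fun i => ⌊f i / t⌋ = k)) g := by
    unfold cov; exact_mod_cast h1
  refine h2.trans ((Finset.sum_le_card_nsmul _ _ _ hmax).trans ?_)
  rw [nsmul_eq_mul]; rfl

/-! ### Ring-like sets -/

/-- The scalars `c₁ - c₂ + c₃ - c₄` with `cᵢ ∈ X`. -/
def Comb (X : Finset ℝ) : Set ℝ :=
  {u | ∃ c₁ ∈ X, ∃ c₂ ∈ X, ∃ c₃ ∈ X, ∃ c₄ ∈ X, u = c₁ - c₂ + c₃ - c₄}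

/-- A finite set `X ⊆ [-1, 1]` behaving at every scale `ρ ≥ δ` like a ring of dimension at most `σ`
which is non-concentrated with exponent `κ`, up to the multiplicative loss `K`. Here `N_t(X)` is
`cov t X (fun x => x)`. The field `comb` encodes that `u X + v X`, a set of diameter `≲ t`, has a
small sum with `X`; the field `unif` bounds `N_ρ` of any piece of `X` of diameter `t` by the average
such piece. -/
structure RingLike (δ K σ κ : ℝ) (X : Finset ℝ) : Prop where
  ne : X.Nonempty
  bdd : ∀ x ∈ X, |x| ≤ 1
  comb : ∀ ρ t, δ ≤ ρ → ρ ≤ t → ∀ u ∈ Comb X, ∀ v ∈ Comb X, |u| + |v| ≤ 5 * t →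
    cov t X (fun x => x) * cov ρ (X ×ˢ X) (fun p => v * p.1 + u * p.2) ≤ K * cov ρ X (fun x => x)
  unif : ∀ ρ t, δ ≤ ρ → ρ ≤ t → ∀ Y ⊆ X, (∀ y ∈ Y, ∀ z ∈ Y, |y - z| ≤ t) →
    cov t X (fun x => x) * cov ρ Y (fun x => x) ≤ K * cov ρ X (fun x => x)
  frost : ∀ t, δ ≤ t → t ^ (-κ) ≤ K * cov t X (fun x => x)
  size : cov δ X (fun x => x) ≤ K * δ ^ (-σ)

lemma card_le_fibers {α β : Type*} [DecidableEq β] {s : Finset α} {f : α → β} {m : ℝ}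
    (h : ∀ k, ((s.filter (fun x => f x = k)).card : ℝ) ≤ m) :
    (s.card : ℝ) ≤ m * (s.image f).card := by
  classical
  have h' : (s.card : ℝ) = ∑ i ∈ s.image f, ((s.filter (fun q => f q = i)).card : ℝ) := by
    exact_mod_cast Finset.card_eq_sum_card_image f s
  rw [h']
  refine (Finset.sum_le_card_nsmul _ _ m fun i _ => h i).trans ?_
  rw [nsmul_eq_mul, mul_comm]

/-- Cauchy–Schwarz: few values force many coincidences. -/
lemma card_sq_le_energy {α β : Type*} [DecidableEq β] (s : Finset α) (f : α → β) :
    (s.card : ℝ) ^ 2 ≤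
      (s.image f).card * (((s ×ˢ s).filter (fun p => f p.1 = f p.2)).card : ℝ) := by
  classical
  have h' : (s.card : ℝ) = ∑ i ∈ s.image f, ((s.filter (fun q => f q = i)).card : ℝ) := by
    exact_mod_cast Finset.card_eq_sum_card_image f s
  have h2 : ((((s ×ˢ s).filter (fun p => f p.1 = f p.2)).card : ℕ) : ℝ)
      = ∑ i ∈ s.image f, ((s.filter (fun q => f q = i)).card : ℝ) ^ 2 := by
    rw [Finset.card_eq_sum_card_fiberwise (f := fun p => f p.1) (t := s.image f)]
    · push_cast
      refine Finset.sum_congr rfl fun k _ => ?_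
      rw [sq, ← Nat.cast_mul, ← Finset.card_product]
      congr 2
      ext ⟨x, y⟩
      simp only [Finset.mem_filter, Finset.mem_product]
      constructor
      · rintro ⟨⟨⟨hx, hy⟩, h⟩, rfl⟩; exact ⟨⟨hx, rfl⟩, hy, h.symm⟩
      · rintro ⟨⟨hx, rfl⟩, hy, h⟩; exact ⟨⟨⟨hx, hy⟩, h.symm⟩, rfl⟩
    · intro p hp
      have hp := (Finset.mem_filter.mp (Finset.mem_coe.mp hp)).1
      exact Finset.mem_coe.mpr (Finset.mem_image_of_mem _ (Finset.mem_product.mp hp).1)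
  rw [h', h2]
  exact sq_sum_le_card_mul_sum_sq

section
variable {δ K σ κ : ℝ} {X : Finset ℝ}

lemma RingLike.K_nonneg (h : RingLike δ K σ κ X) (hδ : 0 < δ) : 0 ≤ K := by
  have h1 := h.frost δ le_rfl
  have h2 : 0 < δ ^ (-κ) := Real.rpow_pos_of_pos hδ _
  have h3 := one_le_cov δ h.ne (fun x => x)
  by_contra hK
  nlinarith

/-- If every near-coincidence `(a - a') + x (b - b') ≈ 0` has `|b - b'| ≤ θ`, then `X + x X` is large. -/
lemma RingLike.collision (h : RingLike δ K σ κ X) (hδ : 0 < δ) {ρ θ x : ℝ} (hρ : δ ≤ ρ)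
    (hθ : ρ ≤ θ)
    (hx : ∀ a ∈ X, ∀ b ∈ X, ∀ a' ∈ X, ∀ b' ∈ X, |(a - a') + x * (b - b')| < ρ → |b - b'| ≤ θ) :
    cov ρ X (fun x => x) * cov θ X (fun x => x) ≤
      3 * K * cov ρ (X ×ˢ X) (fun p => x * p.1 + p.2) := by
  classical
  have hρ0 : 0 < ρ := hδ.trans_le hρ
  have hK := h.K_nonneg hδ
  obtain ⟨R, hRX, hRc, hR⟩ := exists_reps ρ X (fun x => x)
  have hFθ : 0 < cov θ X (fun x => x) := one_pos.trans_le (one_le_cov _ h.ne _)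
  have hFρ : 0 < cov ρ X (fun x => x) := one_pos.trans_le (one_le_cov _ h.ne _)
  have key := card_le_fibers (s := R ×ˢ R) (f := fun p : ℝ × ℝ => ⌊(x * p.1 + p.2) / ρ⌋)
    (m := K * cov ρ X (fun x => x) / cov θ X (fun x => x) * 3) ?_
  · rw [Finset.card_product, Nat.cast_mul, hRc] at key
    have h2 := cov_mono ρ (Finset.product_subset_product hRX hRX) (fun p : ℝ × ℝ => x * p.1 + p.2)
    have h3 : cov ρ X (fun x => x) * cov ρ X (fun x => x) ≤
      K * cov ρ X (fun x => x) / cov θ X (fun x => x) * 3 *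
        cov ρ (X ×ˢ X) (fun p => x * p.1 + p.2) :=
      key.trans (mul_le_mul_of_nonneg_left h2 (by positivity))
    have h4 : K * cov ρ X (fun x => x) / cov θ X (fun x => x) * 3 *
        cov ρ (X ×ˢ X) (fun p => x * p.1 + p.2) = cov ρ X (fun x => x) *
          ((3 * K * cov ρ (X ×ˢ X) (fun p => x * p.1 + p.2)) / cov θ X (fun x => x)) := by ring
    rw [h4] at h3
    have h5 := le_of_mul_le_mul_left h3 hFρ
    rwa [le_div_iff₀ hFθ] at h5
  · intro k
    have hk : ∀ p ∈ (R ×ˢ R).filter (fun p => ⌊(x * p.1 + p.2) / ρ⌋ = k),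
        ∀ q ∈ (R ×ˢ R).filter (fun p => ⌊(x * p.1 + p.2) / ρ⌋ = k),
        |(x * p.1 + p.2) - (x * q.1 + q.2)| < ρ := by
      intro p hp q hq
      exact abs_sub_lt_of_floor hρ0
        ((Finset.mem_filter.mp hp).2.trans (Finset.mem_filter.mp hq).2.symm)
    have hmem : ∀ p ∈ (R ×ˢ R).filter (fun p => ⌊(x * p.1 + p.2) / ρ⌋ = k), p.1 ∈ R ∧ p.2 ∈ R := by
      intro p hp
      exact Finset.mem_product.mp (Finset.mem_filter.mp hp).1
    generalize (R ×ˢ R).filter (fun p => ⌊(x * p.1 + p.2) / ρ⌋ = k) = Q at hk hmem ⊢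
    refine card_le_fst (by norm_num) ?_ ?_
    · rw [card_eq_cov (ρ := ρ) (f := fun x => x), le_div_iff₀ hFθ, mul_comm]
      · refine h.unif ρ θ hρ hθ _ ?_ ?_
        · intro b hb
          obtain ⟨p, hp, rfl⟩ := Finset.mem_image.mp hb
          exact hRX (hmem p hp).1
        · intro b hb b' hb'
          obtain ⟨p, hp, rfl⟩ := Finset.mem_image.mp hb
          obtain ⟨q, hq, rfl⟩ := Finset.mem_image.mp hb'
          refine hx p.2 (hRX (hmem p hp).2) p.1 (hRX (hmem p hp).1) q.2 (hRX (hmem q hq).2) q.1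
            (hRX (hmem q hq).1) ?_
          have := hk p hp q hq
          convert this using 2; ring
      · intro i hi j hj hij
        obtain ⟨p, hp, rfl⟩ := Finset.mem_image.mp hi
        obtain ⟨q, hq, rfl⟩ := Finset.mem_image.mp hj
        exact hR _ (hmem p hp).1 _ (hmem q hq).1 hij
    · intro i
      rw [card_eq_cov (ρ := ρ) (f := fun p => p.2)]
      · refine (cov_le_of_diam (L := 1) hρ0 (by norm_num) ?_).trans (by norm_num)
        intro p hp q hq
        obtain ⟨hp, hp1⟩ := Finset.mem_filter.mp hp
        obtain ⟨hq, hq1⟩ := Finset.mem_filter.mp hq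
        have := hk p hp q hq
        rw [hp1, hq1, add_sub_add_left_eq_sub] at this
        linarith
      · intro p hp q hq hpq
        obtain ⟨hp, hp1⟩ := Finset.mem_filter.mp hp
        obtain ⟨hq, hq1⟩ := Finset.mem_filter.mp hq
        exact Prod.ext (hp1.trans hq1.symm) (hR _ (hmem p hp).2 _ (hmem q hq).2 hpq)

/-- For a ratio `x = v / u` of ring elements, `X + x X` is small. -/
lemma RingLike.ratio_le (h : RingLike δ K σ κ X) (hδ : 0 < δ) {ρ u v : ℝ} (hu : u ∈ Comb X)
    (hv : v ∈ Comb X) (hu0 : u ≠ 0) (hvu : |v| ≤ 4 * |u|) (hρ : ρ ≤ 1) (hρu : δ ≤ ρ * |u|) :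
    cov |u| X (fun x => x) * cov ρ (X ×ˢ X) (fun p => v / u * p.1 + p.2) ≤
      3 * K * cov (ρ * |u|) X (fun x => x) := by
  have hu1 : 0 < |u| := abs_pos.mpr hu0
  have hρ0 : 0 < ρ := by
    by_contra hc
    nlinarith
  have h1 := h.comb (ρ * |u|) |u| hρu (by nlinarith) u hu v hv (by linarith)
  have h2 := cov_comp (L := 1) (hδ.trans_le hρu) hρ0 zero_le_one (I := X ×ˢ X)
    (f := fun p : ℝ × ℝ => v * p.1 + u * p.2) (g := fun p => v / u * p.1 + p.2) (by
      intro p _ q _ hpq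
      have e : v * p.1 + u * p.2 - (v * q.1 + u * q.2) =
        u * ((v / u * p.1 + p.2) - (v / u * q.1 + q.2)) := by field_simp
      rw [e, abs_mul, mul_comm ρ] at hpq
      have := lt_of_mul_lt_mul_left hpq hu1.le
      linarith)
  have h3 : 0 ≤ cov |u| X (fun x => x) := cov_nonneg _ _ _
  calc _ ≤ cov |u| X (fun x => x) * ((1 + 2) * cov (ρ * |u|) (X ×ˢ X)
            (fun p => v * p.1 + u * p.2)) := mul_le_mul_of_nonneg_left h2 h3
    _ = 3 * (cov |u| X (fun x => x) * cov (ρ * |u|) (X ×ˢ X) (fun p => v * p.1 + u * p.2)) := by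
        ring
    _ ≤ 3 * (K * cov (ρ * |u|) X (fun x => x)) := by gcongr
    _ = _ := by ring

lemma sub_mem_Comb {a b : ℝ} (ha : a ∈ X) (hb : b ∈ X) : a - b ∈ Comb X :=
  ⟨a, ha, b, hb, b, hb, b, hb, by ring⟩

lemma add_mem_Comb {a b c d : ℝ} (ha : a ∈ X) (hb : b ∈ X) (hc : c ∈ X) (hd : d ∈ X) :
    a - b + (c - d) ∈ Comb X :=
  ⟨a, ha, b, hb, c, hc, d, hd, by ring⟩

lemma cov_fst {ι κ : Type*} (ρ : ℝ) (I : Finset ι) {J : Finset κ} (hJ : J.Nonempty) (f : ι → ℝ) :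
    cov ρ I f ≤ cov ρ (I ×ˢ J) (fun p => f p.1) := by
  unfold cov
  have : I.image (fun i => ⌊f i / ρ⌋) ⊆ (I ×ˢ J).image (fun p => ⌊f p.1 / ρ⌋) := by
    intro z hz
    obtain ⟨i, hi, rfl⟩ := Finset.mem_image.mp hz
    obtain ⟨j, hj⟩ := hJ
    exact Finset.mem_image.mpr ⟨(i, j), Finset.mem_product.mpr ⟨hi, hj⟩, rfl⟩
  exact_mod_cast Finset.card_le_card this

/-- Covering numbers are supermultiplicative: `X + d X` contains about `N_t(X)` separated copies of
`d X`, where `d` is the least distance in `X` that is at least `t`. -/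
lemma RingLike.supermul (h : RingLike δ K σ κ X) (hδ : 0 < δ) (hK : 1 ≤ K) {s t : ℝ} (hs : 0 < s)
    (ht : 0 < t) (hs1 : s ≤ 1) (ht1 : t ≤ 1) (hst : δ ≤ t * s) :
    cov t X (fun x => x) * cov s X (fun x => x) ≤ 9 * K * cov (t * s) X (fun x => x) := by
  classical
  set P := (X ×ˢ X).filter (fun p : ℝ × ℝ => t ≤ |p.1 - p.2|) with hP
  have hF : ∀ t, 0 ≤ cov t X (fun x => x) := fun t => cov_nonneg _ _ _
  rcases P.eq_empty_or_nonempty with hPe | hPn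
  · have h1 : cov t X (fun x => x) ≤ 1 + 2 := by
      refine cov_le_of_diam ht zero_le_one ?_
      intro a ha b hb
      by_contra hc
      have : (a, b) ∈ P := Finset.mem_filter.mpr ⟨Finset.mem_product.mpr ⟨ha, hb⟩, by
        push Not at hc; simp only; linarith⟩
      rw [hPe] at this
      simp at this
    have h2 := cov_coarse (mul_pos ht hs) (mul_le_of_le_one_left hs.le ht1) X (fun x => x)
    have := hF (t * s)
    calc _ ≤ (1 + 2) * (3 * cov (t * s) X (fun x => x)) := by gcongr; exact hF _
      _ = 9 * 1 * cov (t * s) X (fun x => x) := by ring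
      _ ≤ _ := by gcongr
  · obtain ⟨⟨a, b⟩, hab, hmin⟩ := Finset.exists_min_image P (fun p => |p.1 - p.2|) hPn
    obtain ⟨habX, habt⟩ := Finset.mem_filter.mp hab
    obtain ⟨ha, hb⟩ := Finset.mem_product.mp habX
    simp only at habt hmin ha hb
    set d := a - b with hd
    have hd0 : 0 < |d| := ht.trans_le habt
    have h1 : cov t X (fun x => x) ≤ (1 + 2) * cov |d| X (fun x => x) := by
      refine cov_comp hd0 ht zero_le_one ?_
      intro x hx y hy hxy
      by_contra hc
      have : (x, y) ∈ P := Finset.mem_filter.mpr ⟨Finset.mem_product.mpr ⟨hx, hy⟩, by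
        push Not at hc; simp only; linarith⟩
      have := hmin _ this
      simp only at this
      linarith
    have h2 := h.comb (t * s) |d| hst ((mul_le_of_le_one_right ht.le hs1).trans habt) 0
      (by simpa using sub_mem_Comb ha ha) d (sub_mem_Comb ha hb) (by rw [abs_zero]; linarith)
    have h3 : cov s X (fun x => x) ≤
        (1 + 2) * cov (t * s) (X ×ˢ X) (fun p => d * p.1 + 0 * p.2) := by
      refine (cov_fst s X h.ne _).trans (cov_comp (mul_pos ht hs) hs zero_le_one ?_)
      intro p _ q _ hpq
      have e : d * p.1 + 0 * p.2 - (d * q.1 + 0 * q.2) = d * (p.1 - q.1) := by ring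
      rw [e, abs_mul] at hpq
      have : t * |p.1 - q.1| < t * s :=
        (mul_le_mul_of_nonneg_right habt (abs_nonneg _)).trans_lt hpq
      have := lt_of_mul_lt_mul_left this ht.le
      linarith
    calc _ ≤ ((1 + 2) * cov |d| X (fun x => x)) *
          ((1 + 2) * cov (t * s) (X ×ˢ X) (fun p => d * p.1 + 0 * p.2)) := by
            gcongr
            · exact hF _
            · exact mul_nonneg (by norm_num) (hF _)
      _ = 9 * (cov |d| X (fun x => x) * cov (t * s) (X ×ˢ X) (fun p => d * p.1 + 0 * p.2)) := by
          ring
      _ ≤ 9 * (K * cov (t * s) X (fun x => x)) := by gcongr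
      _ = _ := by ring

lemma RingLike.pow_le (h : RingLike δ K σ κ X) (hδ : 0 < δ) (hK : 1 ≤ K) {τ : ℝ} (hτ : 0 < τ)
    (hτ1 : τ ≤ 1) (k : ℕ) (hk : δ ≤ τ ^ (k + 1)) :
    cov τ X (fun x => x) ^ (k + 1) ≤ (9 * K) ^ k * cov (τ ^ (k + 1)) X (fun x => x) := by
  induction k with
  | zero => simp
  | succ k ih =>
    have h1 : τ ^ (k + 1 + 1) ≤ τ ^ (k + 1) := pow_le_pow_of_le_one hτ.le hτ1 (by omega)
    have ih := ih (hk.trans h1)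
    have h2 := h.supermul hδ hK (s := τ) (t := τ ^ (k + 1)) hτ (by positivity) hτ1
      (pow_le_one₀ hτ.le hτ1) (by rw [← pow_succ]; exact hk)
    rw [← pow_succ] at h2
    have := cov_nonneg τ X (fun x => x)
    calc _ = cov τ X (fun x => x) ^ (k + 1) * cov τ X (fun x => x) := pow_succ _ _
      _ ≤ ((9 * K) ^ k * cov (τ ^ (k + 1)) X (fun x => x)) * cov τ X (fun x => x) := by gcongr
      _ = (9 * K) ^ k * (cov (τ ^ (k + 1)) X (fun x => x) * cov τ X (fun x => x)) := by ring
      _ ≤ (9 * K) ^ k * (9 * K * cov (τ ^ (k + 1 + 1)) X (fun x => x)) := by gcongr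
      _ = _ := by ring

/-- If `X + x X` is small for all ratios `x` of elements of `Comb X` with denominator at least `θ`,
then the quotients of differences of `X` with denominator at least `θ` are `2 ρ / θ`-dense in
`[0, 1]`. By `RingLike.collision` every such `x` is close to a quotient of differences; bisection
applies this to `y / 2` and `(1 + y) / 2`. -/
lemma RingLike.dense (h : RingLike δ K σ κ X) (hδ : 0 < δ) {ρ θ : ℝ} (hρ : δ ≤ ρ)
    (hθ : 2 * ρ ≤ θ) (h3 : 3 < cov θ X (fun x => x))
    (hG : ∀ u ∈ Comb X, ∀ v ∈ Comb X, θ ≤ |u| → |v| ≤ 4 * |u| →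
      3 * K * cov ρ (X ×ˢ X) (fun p => v / u * p.1 + p.2) <
        cov ρ X (fun x => x) * cov θ X (fun x => x)) (n : ℕ) :
    ∀ j : ℕ, j ≤ 2 ^ n → ∃ a₁ ∈ X, ∃ a₂ ∈ X, ∃ a₃ ∈ X, ∃ a₄ ∈ X, θ ≤ |a₃ - a₄| ∧
      |(a₁ - a₂) / (a₃ - a₄) - (j : ℝ) / 2 ^ n| ≤ 2 * (ρ / θ) := by
  have hρ0 : 0 < ρ := hδ.trans_le hρ
  have hθ0 : 0 < θ := by linarith
  have hr0 : 0 < ρ / θ := div_pos hρ0 hθ0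
  have hr1 : ρ / θ ≤ 1 / 2 := by rw [div_le_iff₀ hθ0]; linarith
  -- any ratio to which `hG` applies is close to a ratio with denominator at least `θ`
  have near : ∀ u ∈ Comb X, ∀ v ∈ Comb X, θ ≤ |u| → |v| ≤ 4 * |u| →
      ∃ a₁ ∈ X, ∃ a₂ ∈ X, ∃ a₃ ∈ X, ∃ a₄ ∈ X, θ ≤ |a₃ - a₄| ∧
      |(a₁ - a₂) / (a₃ - a₄) - v / u| ≤ ρ / θ := by
    intro u hu v hv huθ hvu
    by_contra hc
    refine absurd (hG u hu v hv huθ hvu) (not_lt.mpr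
      (h.collision hδ hρ (by linarith) (x := v / u) ?_))
    intro a ha b hb a' ha' b' hb' hab
    by_contra hbb
    push Not at hbb
    refine hc ⟨a', ha', a, ha, b, hb, b', hb', hbb.le, ?_⟩
    have hb0 : 0 < |b - b'| := hθ0.trans hbb
    have hb1 : b - b' ≠ 0 := abs_pos.mp hb0
    have e : (a' - a) / (b - b') - v / u = -((a - a') + v / u * (b - b')) / (b - b') := by
      field_simp; ring
    rw [e, abs_div, abs_neg]
    exact div_le_div₀ hρ0.le hab.le hθ0 hbb.le
  induction n with
  | zero =>
    intro j hj
    obtain ⟨a, ha, b, hb, hab⟩ : ∃ a ∈ X, ∃ b ∈ X, θ ≤ |a - b| := by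
      by_contra hc
      push Not at hc
      have := cov_le_of_diam (L := 1) hθ0 zero_le_one (I := X) (f := fun x => x)
        (fun i hi j hj => by linarith [hc i hi j hj])
      linarith
    have hab0 : a - b ≠ 0 := abs_pos.mp (hθ0.trans_le hab)
    have hj' : j = 0 ∨ j = 1 := by simp at hj; omega
    rcases hj' with rfl | rfl
    · exact ⟨a, ha, a, ha, a, ha, b, hb, hab, by simp; positivity⟩
    · exact ⟨a, ha, b, hb, a, ha, b, hb, hab, by simp [div_self hab0]; positivity⟩
  | succ n ih =>
    intro j hj
    -- `i / 2 ^ n` is the previous point, and `c = 0` or `c = 1` tells which half is meant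
    obtain ⟨i, hi, c, hc, hji⟩ : ∃ i : ℕ, i ≤ 2 ^ n ∧ ∃ c : ℝ, (c = 0 ∨ c = 1) ∧
        (j : ℝ) / 2 ^ (n + 1) = (c + (i : ℝ) / 2 ^ n) / 2 := by
      rcases le_total j (2 ^ n) with hjn | hjn
      · exact ⟨j, hjn, 0, Or.inl rfl, by rw [pow_succ]; field_simp; ring⟩
      · refine ⟨j - 2 ^ n, by rw [pow_succ] at hj; omega, 1, Or.inr rfl, ?_⟩
        rw [Nat.cast_sub hjn, pow_succ]; push_cast; field_simp; ring
    obtain ⟨a₁, h₁, a₂, h₂, a₃, h₃, a₄, h₄, hd, hy⟩ := ih i hi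
    have hd0 : 0 < |a₃ - a₄| := hθ0.trans_le hd
    have hd1 : a₃ - a₄ ≠ 0 := abs_pos.mp hd0
    have hx0 : 0 ≤ (i : ℝ) / 2 ^ n := by positivity
    have hx1 : (i : ℝ) / 2 ^ n ≤ 1 := by
      rw [div_le_one (by positivity)]; exact_mod_cast hi
    have hy2 : |(a₁ - a₂) / (a₃ - a₄)| ≤ 2 := by
      rw [abs_le] at hy ⊢
      constructor <;> linarith
    have hd' : |a₁ - a₂| ≤ 2 * |a₃ - a₄| := by
      rwa [abs_div, div_le_iff₀ hd0] at hy2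
    obtain ⟨v, hv, hvc⟩ : ∃ v ∈ Comb X, v = (a₁ - a₂) + c * (a₃ - a₄) := by
      rcases hc with rfl | rfl
      · exact ⟨_, sub_mem_Comb h₁ h₂, by ring⟩
      · exact ⟨_, add_mem_Comb h₁ h₂ h₃ h₄, by ring⟩
    have hu := add_mem_Comb h₃ h₄ h₃ h₄
    have hu2 : |a₃ - a₄ + (a₃ - a₄)| = 2 * |a₃ - a₄| := by
      rw [← two_mul, abs_mul, abs_two]
    have hva : |v| ≤ 3 * |a₃ - a₄| := by
      rw [hvc]
      refine (abs_add_le _ _).trans ?_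
      rw [abs_mul]
      have : |c| ≤ 1 := by rcases hc with rfl | rfl <;> simp
      nlinarith
    obtain ⟨b₁, k₁, b₂, k₂, b₃, k₃, b₄, k₄, hbd, hby⟩ := near _ hu v hv
      (by rw [hu2]; linarith) (by rw [hu2]; linarith)
    refine ⟨b₁, k₁, b₂, k₂, b₃, k₃, b₄, k₄, hbd, ?_⟩
    have e : v / (a₃ - a₄ + (a₃ - a₄)) = ((a₁ - a₂) / (a₃ - a₄) + c) / 2 := by
      rw [hvc, ← two_mul]; field_simp
    rw [e] at hby
    rw [hji]
    rw [abs_le] at hby hy ⊢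
    constructor <;> linarith

end

/-! ### The projection estimate -/

section
variable {δ K σ κ : ℝ} {X : Finset ℝ}

/-- An `L²` projection estimate: averaged over `x = j / J`, `j < J`, the set `X + x X` is large. -/
lemma RingLike.projection (h : RingLike δ K σ κ X) (hδ : 0 < δ) {r t B : ℝ} (hr : δ ≤ r)
    (hrt : r ≤ t) (ht : t ≤ 1) {J : ℕ} (hJ : 1 ≤ r * J)
    (hB : ∀ j < J, cov r (X ×ˢ X) (fun p => (j : ℝ) / J * p.1 + p.2) ≤ B) :
    cov r X (fun x => x) ≤
      B * (18 * K / cov t X (fun x => x) + 4 * cov r X (fun x => x) * r / t) := by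
  classical
  have hr0 : 0 < r := hδ.trans_le hr
  have ht0 : 0 < t := hr0.trans_le hrt
  have hK := h.K_nonneg hδ
  have hJ0 : (0 : ℝ) < J := by
    by_contra hc
    nlinarith
  obtain ⟨R, hRX, hRc, hR⟩ := exists_reps r X (fun x => x)
  set F := cov r X (fun x => x) with hF
  have hF0 : 0 < F := one_pos.trans_le (one_le_cov _ h.ne _)
  have hT0 : 0 < cov t X (fun x => x) := one_pos.trans_le (one_le_cov _ h.ne _)
  set fl : ℕ → ℝ × ℝ → ℤ := fun j p => ⌊((j : ℝ) / J * p.1 + p.2) / r⌋ with hfl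
  set S := (R ×ˢ R) ×ˢ (R ×ˢ R) with hS
  have hScard : (S.card : ℝ) = F ^ 4 := by
    rw [hS]; simp only [Finset.card_product, Nat.cast_mul, hRc]; ring
  set E : ℕ → Finset ((ℝ × ℝ) × (ℝ × ℝ)) := fun j => S.filter (fun p => fl j p.1 = fl j p.2) with hE
  have hclose : ∀ j, ∀ p : (ℝ × ℝ) × (ℝ × ℝ), fl j p.1 = fl j p.2 →
      |((j : ℝ) / J * p.1.1 + p.1.2) - ((j : ℝ) / J * p.2.1 + p.2.2)| < r := by
    intro j p hp
    exact abs_sub_lt_of_floor hr0 hp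
  have hB0 : 0 ≤ B := (cov_nonneg _ _ _).trans (hB 0 (by exact_mod_cast hJ0))
  -- lower bound for the energy
  have hlow : ∀ j < J, F ^ 4 ≤ B * (E j).card := by
    intro j hj
    have h1 := card_sq_le_energy (R ×ˢ R) (fl j)
    rw [Finset.card_product, Nat.cast_mul, hRc] at h1
    have h2 : (((R ×ˢ R).image (fl j)).card : ℝ) ≤ B :=
      (cov_mono r (Finset.product_subset_product hRX hRX)
        (fun p : ℝ × ℝ => (j : ℝ) / J * p.1 + p.2)).trans (hB j hj)
    calc F ^ 4 = (F * F) ^ 2 := by ring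
      _ ≤ _ := h1
      _ ≤ _ := mul_le_mul_of_nonneg_right h2 (Nat.cast_nonneg _)
  -- quadruples whose first coordinates are close
  have hnear : ∀ j, (((E j).filter (fun p => |p.1.1 - p.2.1| < t)).card : ℝ) ≤
      F ^ 2 * (6 * K * F / cov t X (fun x => x) * 3) := by
    intro j
    refine card_le_fst (by positivity) ?_ ?_
    · rw [sq, ← hRc, ← Nat.cast_mul, ← Finset.card_product]
      refine Nat.cast_le.mpr (Finset.card_le_card ?_)
      intro p hp
      obtain ⟨q, hq, rfl⟩ := Finset.mem_image.mp hp
      exact (Finset.mem_product.mp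
        (Finset.mem_filter.mp (Finset.mem_filter.mp hq).1).1).1
    intro p
    set Q := ((E j).filter (fun p => |p.1.1 - p.2.1| < t)).filter (fun q => q.1 = p) with hQ
    have hQc : Q.card = (Q.image Prod.snd).card := by
      rw [Finset.card_image_of_injOn]
      intro a ha b hb hab
      exact Prod.ext ((Finset.mem_filter.mp ha).2.trans (Finset.mem_filter.mp hb).2.symm) hab
    have hQm : ∀ q ∈ Q.image Prod.snd, q.1 ∈ R ∧ q.2 ∈ R ∧ |p.1 - q.1| < t ∧ fl j p = fl j q := by
      intro q hq
      obtain ⟨a, ha, rfl⟩ := Finset.mem_image.mp hq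
      obtain ⟨ha1, hap⟩ := Finset.mem_filter.mp ha
      obtain ⟨ha2, hat⟩ := Finset.mem_filter.mp ha1
      obtain ⟨ha3, haf⟩ := Finset.mem_filter.mp ha2
      have ha4 := Finset.mem_product.mp (Finset.mem_product.mp ha3).2
      rw [← hap]
      exact ⟨ha4.1, ha4.2, hat, haf⟩
    rw [hQc]
    refine card_le_fst (by norm_num) ?_ ?_
    · rw [card_eq_cov (ρ := r) (f := fun x => x), le_div_iff₀ hT0]
      · have h1 := h.unif r (2 * t) hr (by linarith) ((Q.image Prod.snd).image Prod.fst) ?_ ?_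
        · have h2 := cov_fine ht0 (by linarith : t ≤ 2 * t) X (fun x => x)
          have e : 3 * (2 * t / t) = 6 := by field_simp; norm_num
          rw [e] at h2
          have h3 := cov_nonneg r ((Q.image Prod.snd).image Prod.fst) (fun x => x)
          calc _ ≤ cov r ((Q.image Prod.snd).image Prod.fst) (fun x => x) *
                (6 * cov (2 * t) X (fun x => x)) := by gcongr
            _ = 6 * (cov (2 * t) X (fun x => x) *
                cov r ((Q.image Prod.snd).image Prod.fst) (fun x => x)) := by ring
            _ ≤ 6 * (K * F) := by gcongr
            _ = _ := by ring
        · intro b hb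
          obtain ⟨q, hq, rfl⟩ := Finset.mem_image.mp hb
          exact hRX (hQm q hq).1
        · intro b hb c hc
          obtain ⟨q, hq, rfl⟩ := Finset.mem_image.mp hb
          obtain ⟨q', hq', rfl⟩ := Finset.mem_image.mp hc
          have h1 := (hQm q hq).2.2.1
          have h2 := (hQm q' hq').2.2.1
          rw [abs_lt] at h1 h2
          rw [abs_le]
          constructor <;> linarith
      · intro b hb c hc hbc
        obtain ⟨q, hq, rfl⟩ := Finset.mem_image.mp hb
        obtain ⟨q', hq', rfl⟩ := Finset.mem_image.mp hc
        exact hR _ (hQm q hq).1 _ (hQm q' hq').1 hbc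
    · intro i
      rw [card_eq_cov (ρ := r) (f := fun p => p.2)]
      · refine (cov_le_of_diam (L := 1) hr0 (by norm_num) ?_).trans (by norm_num)
        intro q hq q' hq'
        obtain ⟨hq, hq1⟩ := Finset.mem_filter.mp hq
        obtain ⟨hq', hq1'⟩ := Finset.mem_filter.mp hq'
        have := hclose j (q, q') ((hQm q hq).2.2.2.symm.trans (hQm q' hq').2.2.2)
        simp only at this
        rw [hq1, hq1', add_sub_add_left_eq_sub] at this
        linarith
      · intro q hq q' hq' hqq
        obtain ⟨hq, hq1⟩ := Finset.mem_filter.mp hq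
        obtain ⟨hq', hq1'⟩ := Finset.mem_filter.mp hq'
        exact Prod.ext (hq1.trans hq1'.symm) (hR _ (hQm q hq).2.1 _ (hQm q' hq').2.1 hqq)
  -- quadruples whose first coordinates are far apart are coincidences for few `j`
  have hfar : ∑ j ∈ Finset.range J, (((E j).filter (fun p => ¬ |p.1.1 - p.2.1| < t)).card : ℝ) ≤
      F ^ 4 * (4 * (r * J / t)) := by
    have e : ∀ j, (((E j).filter (fun p => ¬ |p.1.1 - p.2.1| < t)).card : ℝ) =
        ∑ p ∈ S.filter (fun p => ¬ |p.1.1 - p.2.1| < t),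
          if fl j p.1 = fl j p.2 then (1 : ℝ) else 0 := by
      intro j
      rw [hE, Finset.filter_filter, ← Finset.sum_filter, Finset.filter_filter, Finset.sum_const,
        nsmul_eq_mul, mul_one]
      congr 3
      ext p
      rw [and_comm]
    simp_rw [e]
    rw [Finset.sum_comm]
    refine (Finset.sum_le_card_nsmul _ _ (4 * (r * J / t)) ?_).trans ?_
    · intro p hp
      obtain ⟨-, hp⟩ := Finset.mem_filter.mp hp
      push Not at hp
      rw [← Finset.sum_filter, Finset.sum_const, nsmul_eq_mul, mul_one,
        card_eq_cov (ρ := 1) (f := fun j : ℕ => (j : ℝ))]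
      · have h1 : 1 ≤ r * J / t := by
          rw [le_div_iff₀ ht0]; linarith
        refine (cov_le_of_diam (L := 2 * (r * J / t)) one_pos (by positivity) ?_).trans
          (by linarith)
        intro i hi j hj
        have hi := hclose i p (Finset.mem_filter.mp hi).2
        have hj := hclose j p (Finset.mem_filter.mp hj).2
        have e2 : ((i : ℝ) - j) * (p.1.1 - p.2.1) = J *
            ((((i : ℝ) / J * p.1.1 + p.1.2) - ((i : ℝ) / J * p.2.1 + p.2.2)) -
            (((j : ℝ) / J * p.1.1 + p.1.2) - ((j : ℝ) / J * p.2.1 + p.2.2))) := by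
          field_simp; ring
        have e3 : |(i : ℝ) - j| * |p.1.1 - p.2.1| ≤ J * (2 * r) := by
          rw [← abs_mul, e2, abs_mul, abs_of_pos hJ0]
          refine mul_le_mul_of_nonneg_left ?_ hJ0.le
          rw [abs_lt] at hi hj
          rw [abs_le]
          constructor <;> linarith
        have e4 : |(i : ℝ) - j| * t ≤ J * (2 * r) :=
          (mul_le_mul_of_nonneg_left hp (abs_nonneg _)).trans e3
        rw [mul_one, ← mul_div_assoc, le_div_iff₀ ht0]
        linarith
      · intro i _ j _ hij
        simpa using hij
    · rw [nsmul_eq_mul, ← hScard]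
      refine mul_le_mul_of_nonneg_right ?_ (by positivity)
      exact_mod_cast Finset.card_le_card (Finset.filter_subset _ _)
  have hsum : ∑ j ∈ Finset.range J, ((E j).card : ℝ) ≤
      J * (F ^ 2 * (6 * K * F / cov t X (fun x => x) * 3)) + F ^ 4 * (4 * (r * J / t)) := by
    have e : ∀ j, ((E j).card : ℝ) = ((E j).filter (fun p => |p.1.1 - p.2.1| < t)).card +
        ((E j).filter (fun p => ¬ |p.1.1 - p.2.1| < t)).card := by
      intro j
      rw [← Nat.cast_add, Finset.card_filter_add_card_filter_not]
    simp_rw [e]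
    rw [Finset.sum_add_distrib]
    refine add_le_add ?_ hfar
    refine (Finset.sum_le_card_nsmul _ _ _ fun j _ => hnear j).trans ?_
    rw [Finset.card_range, nsmul_eq_mul]
  have hlow' : J * F ^ 4 ≤ B * ∑ j ∈ Finset.range J, ((E j).card : ℝ) := by
    rw [Finset.mul_sum]
    have := Finset.card_nsmul_le_sum (Finset.range J) (fun j => B * ((E j).card : ℝ)) (F ^ 4)
      (fun j hj => hlow j (Finset.mem_range.mp hj))
    rwa [Finset.card_range, nsmul_eq_mul] at this
  have hfin : J * F ^ 4 ≤ B * (J * (F ^ 2 * (6 * K * F / cov t X (fun x => x) * 3)) +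
      F ^ 4 * (4 * (r * J / t))) := hlow'.trans (mul_le_mul_of_nonneg_left hsum hB0)
  have e5 : B * (J * (F ^ 2 * (6 * K * F / cov t X (fun x => x) * 3)) +
      F ^ 4 * (4 * (r * J / t))) = (J * F ^ 3) *
      (B * (18 * K / cov t X (fun x => x) + 4 * F * r / t)) := by ring
  rw [e5, show (J : ℝ) * F ^ 4 = (J * F ^ 3) * F by ring] at hfin
  exact le_of_mul_le_mul_left hfin (by positivity)

end

/-! ### Contradiction at a good scale -/

section
variable {δ K σ κ : ℝ} {X : Finset ℝ}

set_option maxHeartbeats 1000000 in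
/-- At a scale `τ` where `N_{τ^(k+2)}(X)` is not much larger than `N_τ(X)^(k+2)`, quotients of
differences of `X` are dense in `[0, 1]`, and this contradicts the projection estimate. -/
lemma RingLike.scale (h : RingLike δ K σ κ X) (hδ : 0 < δ) (hσ : 0 < σ) (hκ : 0 < κ)
    (hκ1 : κ < 1) (hK : 1000 ≤ K) {τ : ℝ} (hτ : 0 < τ) (hτ1 : τ < 1) {k p : ℕ}
    (hp : 3 ≤ κ * p) (hkp : (p : ℝ) + 5 ≤ (k + 2) * (1 - σ)) (hδτ : δ ≤ τ ^ (k + 2))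
    (hE1 : cov (τ ^ (k + 2)) X (fun x => x) * τ ^ (κ ^ 2 / 4) ≤ cov τ X (fun x => x) ^ (k + 2))
    (hE2 : cov τ X (fun x => x) ≤ K ^ 3 * τ ^ (-σ))
    (hS : K ^ (4 * k + 20) * τ ^ (κ ^ 2 / 4) ≤ 1) : False := by
  set F : ℝ → ℝ := fun t => cov t X (fun x => x) with hF
  change F (τ ^ (k + 2)) * τ ^ (κ ^ 2 / 4) ≤ F τ ^ (k + 2) at hE1
  change F τ ≤ _ at hE2
  have hF1 : ∀ t, 1 ≤ F t := fun t => one_le_cov t h.ne _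
  have hF0 : ∀ t, 0 < F t := fun t => one_pos.trans_le (hF1 t)
  have hfrost : ∀ t, δ ≤ t → t ^ (-κ) ≤ K * F t := h.frost
  have hcoarse : ∀ s t, 0 < s → s ≤ t → F t ≤ 3 * F s := fun s t hs hst => cov_coarse hs hst X _
  have hfine : ∀ s t, 0 < s → s ≤ t → F s ≤ 3 * (t / s) * F t := fun s t hs hst =>
    cov_fine hs hst X _
  have hK0 : 0 < K := by linarith
  have hK1 : 1 ≤ K := by linarith
  set a : ℝ := τ ^ (κ ^ 2 / 4) with ha
  have ha0 : 0 < a := Real.rpow_pos_of_pos hτ _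
  have haτ : τ ≤ a := by
    have := Real.rpow_le_rpow_of_exponent_ge hτ hτ1.le (show κ ^ 2 / 4 ≤ 1 by nlinarith)
    rwa [Real.rpow_one] at this
  have hKa : ∀ n ≤ 4 * k + 20, K ^ n * a ≤ 1 := fun n hn =>
    (mul_le_mul_of_nonneg_right (pow_le_pow_right₀ hK1 hn) ha0.le).trans hS
  have hKτ : ∀ n ≤ 4 * k + 20, K ^ n * τ ≤ 1 := fun n hn =>
    (mul_le_mul_of_nonneg_left haτ (by positivity)).trans (hKa n hn)
  have hτs : 1000 * τ ≤ 1 := by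
    have := hKτ 1 (by omega)
    rw [pow_one] at this
    nlinarith
  have hkp' : p + 3 ≤ k := by
    have : (p : ℝ) + 5 ≤ k + 2 := by nlinarith [(Nat.cast_nonneg k : (0 : ℝ) ≤ k)]
    have : p + 5 ≤ k + 2 := by exact_mod_cast this
    omega
  have hpw : ∀ i j : ℕ, i ≤ j → τ ^ j ≤ τ ^ i := fun i j hij =>
    pow_le_pow_of_le_one hτ.le hτ1.le hij
  have hδτ' : ∀ i ≤ k + 2, δ ≤ τ ^ i := fun i hi => hδτ.trans (hpw _ _ hi)
  have hδ1 : δ ≤ τ := by simpa using hδτ' 1 (by omega)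
  set ρ : ℝ := τ ^ (k + 1) with hρ
  have hρ0 : 0 < ρ := by positivity
  have hρτ : ρ * τ = τ ^ (k + 2) := by rw [hρ, ← pow_succ]
  have hρ1 : ρ ≤ 1 := pow_le_one₀ hτ.le hτ1.le
  have hE1' : F (τ ^ (k + 2)) * a ≤ F τ * (K ^ (2 * k) * F ρ) := by
    refine hE1.trans ?_
    rw [pow_succ', pow_succ]
    have h1 := h.pow_le hδ hK1 hτ hτ1.le k (hδτ' _ (by omega))
    refine mul_le_mul_of_nonneg_left ?_ (hF0 _).le
    rw [← pow_succ]
    refine h1.trans (mul_le_mul_of_nonneg_right ?_ (hF0 _).le)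
    rw [pow_mul]
    exact pow_le_pow_left₀ (by positivity) (by nlinarith) k
  -- the threshold between small and large denominators `|u|`
  set b : ℝ := τ ^ (κ / 2) with hb
  have hb0 : 0 < b := Real.rpow_pos_of_pos hτ _
  have hba : b ≤ a := Real.rpow_le_rpow_of_exponent_ge hτ hτ1.le (by nlinarith)
  have hKb : ∀ n ≤ 4 * k + 20, K ^ n * b ≤ 1 := fun n hn =>
    (mul_le_mul_of_nonneg_left hba (by positivity)).trans (hKa n hn)
  have hFτ : 1 ≤ K * b ^ 2 * F τ := by
    have h1 := hfrost τ hδ1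
    have e : b ^ 2 * τ ^ (-κ) = 1 := by
      rw [hb, ← Real.rpow_mul_natCast hτ.le, ← Real.rpow_add hτ]
      norm_num
    calc 1 = b ^ 2 * τ ^ (-κ) := e.symm
      _ ≤ b ^ 2 * (K * F τ) := by gcongr
      _ = _ := by ring
  have hsmall : 1000 * K ^ 3 * b ≤ 1 := by
    refine le_trans ?_ (hKb 4 (by omega))
    refine mul_le_mul_of_nonneg_right ?_ hb0.le
    rw [pow_succ' K 3]; gcongr
  -- quotients of differences with denominator at least `τ` are dense at scale `ρ / τ = τ ^ k`
  have hdense := h.dense hδ (ρ := ρ) (θ := τ) (hδτ' _ (by omega)) ?_ ?_ ?_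
  · obtain ⟨n, hn⟩ := pow_unbounded_of_one_lt (1 / τ ^ k) (one_lt_two (α := ℝ))
    set r : ℝ := τ ^ k with hr
    have hr0 : 0 < r := by positivity
    have hrρ : r * τ = ρ := by rw [hr, ← pow_succ]
    have hρr : ρ / τ = r := by rw [← hrρ]; field_simp
    have hr1 : r ≤ 1 / 1000 := by
      have := hpw 1 k (by omega)
      rw [pow_one] at this
      linarith
    have hB : ∀ j : ℕ, j < 2 ^ n → cov r (X ×ˢ X) (fun p => (j : ℝ) / (2 ^ n : ℕ) * p.1 + p.2) ≤
        63 * K * F ρ := by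
      intro j hj
      obtain ⟨a₁, h1, a₂, h2, a₃, h3, a₄, h4, hd, hy⟩ := hdense n j hj.le
      rw [hρr] at hy
      set y := (a₁ - a₂) / (a₃ - a₄) with hyd
      have hd0 : 0 < |a₃ - a₄| := hτ.trans_le hd
      have hj1 : (j : ℝ) / 2 ^ n ≤ 1 := by
        rw [div_le_one (by positivity)]; exact_mod_cast hj.le
      have hj0 : 0 ≤ (j : ℝ) / 2 ^ n := by positivity
      have hy4 : |y| ≤ 4 := by
        rw [abs_le] at hy ⊢
        constructor <;> linarith
      have hv : |a₁ - a₂| ≤ 4 * |a₃ - a₄| := by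
        rwa [hyd, abs_div, div_le_iff₀ hd0] at hy4
      have h5 := h.ratio_le hδ (ρ := r) (sub_mem_Comb h3 h4) (sub_mem_Comb h1 h2)
        (abs_pos.mp hd0) hv (by linarith) ?_
      · rw [← hyd] at h5
        have h6 : cov r (X ×ˢ X) (fun p => y * p.1 + p.2) ≤ 9 * K * F ρ := by
          have h7 := hcoarse ρ (r * |a₃ - a₄|) hρ0 (by rw [← hrρ]; gcongr)
          have h8 := cov_nonneg r (X ×ˢ X) (fun p => y * p.1 + p.2)
          calc _ ≤ F |a₃ - a₄| * cov r (X ×ˢ X) (fun p => y * p.1 + p.2) :=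
                le_mul_of_one_le_left h8 (hF1 _)
            _ ≤ 3 * K * F (r * |a₃ - a₄|) := h5
            _ ≤ 3 * K * (3 * F ρ) := by gcongr
            _ = _ := by ring
        have h7 := cov_comp (L := 5) hr0 hr0 (by norm_num) (I := X ×ˢ X)
          (f := fun p => y * p.1 + p.2) (g := fun p => (j : ℝ) / (2 ^ n : ℕ) * p.1 + p.2) ?_
        · linarith
        · intro p hp q hq hpq
          have hp1 := h.bdd _ (Finset.mem_product.mp hp).1
          have hq1 := h.bdd _ (Finset.mem_product.mp hq).1
          push_cast
          have h9 : |((j : ℝ) / 2 ^ n - y) * (p.1 - q.1)| ≤ 2 * r * 2 := by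
            rw [abs_mul, abs_sub_comm]
            refine mul_le_mul hy ?_ (abs_nonneg _) (by positivity)
            rw [abs_le] at hp1 hq1 ⊢
            constructor <;> linarith
          have e : (j : ℝ) / 2 ^ n * p.1 + p.2 - ((j : ℝ) / 2 ^ n * q.1 + q.2) =
            ((j : ℝ) / 2 ^ n - y) * (p.1 - q.1) + (y * p.1 + p.2 - (y * q.1 + q.2)) := by ring
          rw [e]
          refine (abs_add_le _ _).trans ?_
          linarith
      · refine (hδτ' (k + 1) (by omega)).trans ?_
        rw [← hρ, ← hrρ]; gcongr
    -- `p` is so large that `1 / N_t(X) ≤ K τ ^ 3`; `k` is so large that `N_r(X) r / t` is tiny as well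
    set t : ℝ := τ ^ p with htd
    have ht0 : 0 < t := by positivity
    have hrt : r ≤ t := hpw _ _ (by omega)
    have hproj := h.projection hδ (hδτ' k (by omega)) hrt (pow_le_one₀ hτ.le hτ1.le)
      (r := r) (J := 2 ^ n) ?_ hB
    · change F r ≤ 63 * K * F ρ * (18 * K / F t + 4 * F r * r / t) at hproj
      have h1 : F ρ * τ ≤ 3 * F r := by
        have := hfine ρ r hρ0 (hpw _ _ (by omega))
        rw [← hrρ] at this ⊢
        have e : r / (r * τ) = 1 / τ := by field_simp
        rw [e] at this
        calc _ ≤ 3 * (1 / τ) * F r * τ := by gcongr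
          _ = _ := by field_simp
      have h2 : τ ≤ 189 * K * (18 * K / F t + 4 * F r * r / t) := by
        have hZ : 0 ≤ 18 * K / F t + 4 * F r * r / t := by
          have := hF0 t
          have := hF0 r
          positivity
        refine le_of_mul_le_mul_left ?_ (hF0 r)
        calc F r * τ ≤ 63 * K * F ρ * (18 * K / F t + 4 * F r * r / t) * τ := by gcongr
          _ = 63 * K * (18 * K / F t + 4 * F r * r / t) * (F ρ * τ) := by ring
          _ ≤ 63 * K * (18 * K / F t + 4 * F r * r / t) * (3 * F r) := by gcongr
          _ = _ := by ring
      have h3 : 1 / F t ≤ K * τ ^ 3 := by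
        have h4 := hfrost t (hδτ' p (by omega))
        have h5 : (τ ^ 3)⁻¹ ≤ t ^ (-κ) := by
          rw [htd, ← Real.rpow_natCast, ← Real.rpow_natCast, ← Real.rpow_neg hτ.le,
            ← Real.rpow_mul hτ.le]
          refine Real.rpow_le_rpow_of_exponent_ge hτ hτ1.le ?_
          push_cast; linarith
        have h6 := h5.trans h4
        rw [inv_le_iff_one_le_mul₀ (by positivity)] at h6
        rw [div_le_iff₀ (hF0 t)]
        linarith
      have h4 : F r * r / t ≤ 3 * K ^ (3 * (k + 2)) * τ ^ 2 := by
        have h5 := hcoarse (τ ^ (k + 2)) r (by positivity) (hpw _ _ (by omega))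
        have h6 : F (τ ^ (k + 2)) * τ ≤ K ^ (3 * (k + 2)) * (τ ^ (-σ)) ^ (k + 2) := by
          calc _ ≤ F (τ ^ (k + 2)) * a := mul_le_mul_of_nonneg_left haτ (hF0 _).le
            _ ≤ F τ ^ (k + 2) := hE1
            _ ≤ (K ^ 3 * τ ^ (-σ)) ^ (k + 2) := pow_le_pow_left₀ (hF0 _).le hE2 _
            _ = _ := by rw [mul_pow, ← pow_mul]
        have h7 : (τ ^ (-σ)) ^ (k + 2) * r ≤ τ ^ 3 * t := by
          rw [hr, htd, ← Real.rpow_mul_natCast hτ.le, ← Real.rpow_natCast, ← Real.rpow_add hτ,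
            ← pow_add, ← Real.rpow_natCast]
          refine Real.rpow_le_rpow_of_exponent_ge hτ hτ1.le ?_
          push_cast; linarith
        rw [div_le_iff₀ ht0]
        refine le_of_mul_le_mul_right ?_ hτ
        calc F r * r * τ ≤ 3 * F (τ ^ (k + 2)) * r * τ := by gcongr
          _ = 3 * (F (τ ^ (k + 2)) * τ) * r := by ring
          _ ≤ 3 * (K ^ (3 * (k + 2)) * (τ ^ (-σ)) ^ (k + 2)) * r := by gcongr
          _ = 3 * K ^ (3 * (k + 2)) * ((τ ^ (-σ)) ^ (k + 2) * r) := by ring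
          _ ≤ 3 * K ^ (3 * (k + 2)) * (τ ^ 3 * t) := by gcongr
          _ = _ := by ring
      have h5 : 18 * K / F t + 4 * F r * r / t ≤ 30 * K ^ (3 * k + 6) * τ ^ 2 := by
        have e1 : 18 * K / F t = 18 * K * (1 / F t) := by ring
        have e2 : 4 * F r * r / t = 4 * (F r * r / t) := by ring
        have h6 : τ ^ 3 ≤ τ ^ 2 := hpw _ _ (by norm_num)
        have h7 : K ^ 2 ≤ K ^ (3 * k + 6) := pow_le_pow_right₀ hK1 (by omega)
        rw [e1, e2]
        calc _ ≤ 18 * K * (K * τ ^ 3) + 4 * (3 * K ^ (3 * (k + 2)) * τ ^ 2) := by gcongr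
          _ = 18 * (K ^ 2 * τ ^ 3) + 12 * K ^ (3 * k + 6) * τ ^ 2 := by ring
          _ ≤ 18 * (K ^ (3 * k + 6) * τ ^ 2) + 12 * K ^ (3 * k + 6) * τ ^ 2 := by gcongr
          _ = _ := by ring
      have h6 : τ ≤ (5670 * (K ^ (3 * k + 7) * τ)) * τ := by
        calc τ ≤ 189 * K * (30 * K ^ (3 * k + 6) * τ ^ 2) := h2.trans (by gcongr)
          _ = _ := by ring
      have h7 : 5670 * (K ^ (3 * k + 7) * τ) < 1 := by
        have h8 := hKτ (3 * k + 9) (by omega)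
        have h9 : 0 < K ^ (3 * k + 7) * τ := by positivity
        have e : K ^ (3 * k + 9) * τ = K ^ 2 * (K ^ (3 * k + 7) * τ) := by ring
        rw [e] at h8
        have h10 : 1000 * 1000 * (K ^ (3 * k + 7) * τ) ≤ K ^ 2 * (K ^ (3 * k + 7) * τ) := by
          rw [sq]; gcongr
        linarith
      linarith [mul_lt_mul_of_pos_right h7 hτ]
    · rw [div_lt_iff₀ hr0] at hn
      push_cast
      linarith
  · rw [hρ, pow_succ]
    have h1 := hpw 1 k (by omega)
    rw [pow_one] at h1
    have h2 : τ ^ k * τ ≤ τ * τ := by gcongr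
    have h3 : 1000 * τ * τ ≤ 1 * τ := by gcongr
    linarith [mul_pos hτ hτ]
  · change 3 < F τ
    have h1 : K * b ^ 2 ≤ 1 / 1000 := by
      have h2 : b ≤ 1 := by simpa using hKb 0 (by omega)
      have h3 : K * b ≤ 1 / 1000 := by
        have h4 := hKb 2 (by omega)
        have h5 : 1000 * (K * b) ≤ K * (K * b) := by gcongr
        linarith [h4, h5, show K ^ 2 * b = K * (K * b) by ring]
      calc K * b ^ 2 = K * b * b := by ring
        _ ≤ 1 / 1000 * 1 := by gcongr
        _ = _ := by norm_num
    have h4 := mul_le_mul_of_nonneg_right h1 (hF0 τ).le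
    linarith
  · intro u hu v hv hτu hvu
    change 3 * K * cov ρ (X ×ˢ X) (fun p => v / u * p.1 + p.2) < F ρ * F τ
    have hu0 : 0 < |u| := hτ.trans_le hτu
    have h1 : F |u| * cov ρ (X ×ˢ X) (fun p => v / u * p.1 + p.2) ≤ 3 * K * F (ρ * |u|) := by
      refine h.ratio_le hδ hu hv (abs_pos.mp hu0) hvu hρ1 (hδτ.trans ?_)
      rw [← hρτ]; gcongr
    set N := cov ρ (X ×ˢ X) (fun p => v / u * p.1 + p.2)
    have hN0 : 0 ≤ N := cov_nonneg _ _ _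
    have hFρ := hF0 ρ
    have hFτ0 := hF0 τ
    -- for small `|u|` the gain is `N_{|u|}(X)`, via the hypothesis on `N_{τ^(k+2)}(X)`;
    -- for large `|u|` the loss from `ρ |u|` to `ρ` is absorbed by `N_τ(X)`
    rcases le_total |u| b with hub | hub
    · have h2 : 1 ≤ K * a ^ 2 * F |u| := by
        have h3 := hfrost |u| (hδ1.trans hτu)
        have h4 : b ^ (-κ) ≤ |u| ^ (-κ) := Real.rpow_le_rpow_of_nonpos hu0 hub (by linarith)
        have e : a ^ 2 * b ^ (-κ) = 1 := by
          rw [ha, hb, ← Real.rpow_mul_natCast hτ.le, ← Real.rpow_mul hτ.le, ← Real.rpow_add hτ]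
          convert Real.rpow_zero τ using 2
          push_cast; ring
        calc 1 = a ^ 2 * b ^ (-κ) := e.symm
          _ ≤ a ^ 2 * (K * F |u|) := by gcongr; exact h4.trans h3
          _ = _ := by ring
      have h3 := hcoarse (τ ^ (k + 2)) (ρ * |u|) (by positivity) (by rw [← hρτ]; gcongr)
      have h4 : 27 * K ^ (2 * k + 3) * a < 1 := by
        have h5 := hKa (2 * k + 4) (by omega)
        have h6 : 0 < K ^ (2 * k + 3) * a := by positivity
        rw [pow_succ] at h5
        have h7 : K ^ (2 * k + 3) * a * 1000 ≤ K ^ (2 * k + 3) * a * K := by gcongr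
        linarith [h5, show K ^ (2 * k + 3) * K * a = K ^ (2 * k + 3) * a * K by ring]
      calc 3 * K * N ≤ 3 * K * N * (K * a ^ 2 * F |u|) :=
            le_mul_of_one_le_right (by positivity) h2
        _ = 3 * K ^ 2 * a ^ 2 * (F |u| * N) := by ring
        _ ≤ 3 * K ^ 2 * a ^ 2 * (3 * K * (3 * F (τ ^ (k + 2)))) := by
            refine mul_le_mul_of_nonneg_left (h1.trans ?_) (by positivity)
            gcongr
        _ = 27 * K ^ 3 * a * (F (τ ^ (k + 2)) * a) := by ring
        _ ≤ 27 * K ^ 3 * a * (F τ * (K ^ (2 * k) * F ρ)) := by gcongr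
        _ = (27 * K ^ (2 * k + 3) * a) * (F ρ * F τ) := by ring
        _ < 1 * (F ρ * F τ) := by gcongr
        _ = _ := one_mul _
    · have h2 : b * F (ρ * |u|) ≤ 3 * F ρ := by
        rcases le_total 1 |u| with h1u | h1u
        · have h3 := hcoarse ρ (ρ * |u|) hρ0 (by exact le_mul_of_one_le_right hρ0.le h1u)
          have h4 : b ≤ 1 := by simpa using hKb 0 (by omega)
          exact (mul_le_of_le_one_left (hF0 _).le h4).trans h3
        · have h3 := hfine (ρ * |u|) ρ (by positivity) (by exact mul_le_of_le_one_right hρ0.le h1u)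
          have e : ρ / (ρ * |u|) = 1 / |u| := by field_simp
          rw [e] at h3
          calc b * F (ρ * |u|) ≤ |u| * (3 * (1 / |u|) * F ρ) :=
                mul_le_mul hub h3 (hF0 _).le hu0.le
            _ = _ := by field_simp
      have hX : N ≤ 3 * K * F (ρ * |u|) :=
        (le_mul_of_one_le_left hN0 (hF1 _)).trans h1
      have h4 : 27 * K ^ 3 * b < 1 := by
        have : 0 < K ^ 3 * b := by positivity
        linarith
      refine lt_of_mul_lt_mul_left ?_ hb0.le
      calc b * (3 * K * N) ≤ b * (3 * K * (3 * K * F (ρ * |u|))) := by gcongr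
        _ = 9 * K ^ 2 * (b * F (ρ * |u|)) := by ring
        _ ≤ 9 * K ^ 2 * (3 * F ρ) := by gcongr
        _ = 27 * K ^ 2 * F ρ * 1 := by ring
        _ ≤ 27 * K ^ 2 * F ρ * (K * b ^ 2 * F τ) := by gcongr
        _ = (27 * K ^ 3 * b) * (b * (F ρ * F τ)) := by ring
        _ < 1 * (b * (F ρ * F τ)) := by gcongr
        _ = _ := one_mul _

end

/-! ### Non-existence of ring-like sets -/

/-- A ring-like set with a loss `K` bounded by a small power of `1 / δ` does not exist. The scale `τ`
of `RingLike.scale` is found by pigeonholing over `δ^(q⁻ⁱ)`: a repeated failure of its hypothesis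
would make `N_δ(X)` larger than `δ⁻²`. -/
theorem core {σ κ : ℝ} (hσ : 0 < σ) (hσ1 : σ < 1) (hκ : 0 < κ) (hκ1 : κ < 1) :
    ∃ ε : ℝ, 0 < ε ∧ ∀ (δ K : ℝ) (X : Finset ℝ), 0 < δ → δ < 1 → 1000 ≤ K → K ≤ δ ^ (-ε) →
      RingLike δ K σ κ X → False := by
  obtain ⟨p, hp⟩ := exists_nat_ge (3 / κ)
  rw [div_le_iff₀ hκ, mul_comm] at hp
  have hσ' : 0 < 1 - σ := by linarith
  obtain ⟨k, hk⟩ := exists_nat_ge (((p : ℝ) + 5) / (1 - σ))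
  have hk : (p : ℝ) + 5 ≤ (k + 2) * (1 - σ) := by
    rw [div_le_iff₀ hσ'] at hk; linarith
  set η : ℝ := κ ^ 2 / 4 with hη
  have hη0 : 0 < η := by positivity
  have hη1 : η ≤ 1 := by rw [hη]; nlinarith
  set q : ℕ := k + 2 with hq
  have hq0 : (0 : ℝ) < q := by rw [hq]; positivity
  have hq1 : 1 ≤ q := by omega
  obtain ⟨I, hI⟩ := exists_nat_ge (2 * q / η)
  rw [div_le_iff₀ hη0] at hI
  set N : ℕ := 4 * k + 20 with hN
  have hN0 : (1 : ℝ) ≤ N := by exact_mod_cast (by omega : 1 ≤ N)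
  have hQ1 : (1 : ℝ) ≤ (q : ℝ) ^ I := one_le_pow₀ (by exact_mod_cast hq1)
  refine ⟨η / (q ^ I * N), by positivity, ?_⟩
  intro δ K X hδ hδ1 hK hKε h
  set ε : ℝ := η / (q ^ I * N) with hε
  have hε1 : ε ≤ 1 := by
    rw [hε, div_le_one (by positivity)]
    nlinarith
  have hK0 : 0 < K := by linarith
  set F : ℝ → ℝ := fun t => cov t X (fun x => x) with hF
  have hF1 : ∀ t, 1 ≤ F t := fun t => one_le_cov t h.ne _
  have hF0 : ∀ t, 0 < F t := fun t => one_pos.trans_le (hF1 t)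
  set τ : ℕ → ℝ := fun i => δ ^ (((q : ℝ) ^ i)⁻¹) with hτ
  have hτ0 : ∀ i, 0 < τ i := fun i => Real.rpow_pos_of_pos hδ _
  have hτ1 : ∀ i, τ i < 1 := fun i => Real.rpow_lt_one hδ.le hδ1 (by positivity)
  have hτδ : ∀ i, τ i ^ (q ^ i) = δ := by
    intro i
    rw [hτ, ← Real.rpow_mul_natCast hδ.le]
    push_cast
    rw [inv_mul_cancel₀ (by positivity), Real.rpow_one]
  have hττ : ∀ i, τ (i + 1) ^ q = τ i := by
    intro i
    rw [hτ, ← Real.rpow_mul_natCast hδ.le, pow_succ]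
    congr 1
    field_simp
  have hE2 : ∀ i, F (τ i) ≤ K ^ 3 * τ i ^ (-σ) := by
    intro i
    have hM : 1 ≤ q ^ i := Nat.one_le_pow _ _ hq1
    obtain ⟨M, hM⟩ : ∃ M, q ^ i = M + 1 := ⟨q ^ i - 1, by omega⟩
    have h1 := hτδ i
    rw [hM] at h1
    have h2 := h.pow_le hδ (by linarith) (hτ0 i) (hτ1 i).le M h1.ge
    rw [h1] at h2
    have h3 : (0 : ℝ) < τ i ^ (-σ) := Real.rpow_pos_of_pos (hτ0 i) _
    have h4 : δ ^ (-σ) = (τ i ^ (-σ)) ^ (M + 1) := by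
      conv_lhs => rw [← h1]
      rw [← Real.rpow_natCast, ← Real.rpow_natCast, ← Real.rpow_mul (hτ0 i).le,
        ← Real.rpow_mul (hτ0 i).le, mul_comm]
    have h5 : (9 * K) ^ M ≤ (K ^ 2) ^ M := pow_le_pow_left₀ (by positivity) (by nlinarith) M
    refine le_of_pow_le_pow_left₀ (n := M + 1) (by omega) (by positivity) ?_
    calc F (τ i) ^ (M + 1) ≤ (9 * K) ^ M * F δ := h2
      _ ≤ (K ^ 2) ^ M * (K * δ ^ (-σ)) := by
          have h6 := (hF0 δ).le
          gcongr
          exact h.size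
      _ ≤ (K ^ 2) ^ (M + 1) * (K ^ (M + 1) * δ ^ (-σ)) := by
          have h6 : 1 ≤ K := by linarith
          gcongr
          · exact one_le_pow₀ h6
          · omega
          · exact le_self_pow₀ h6 (by omega)
      _ = (K ^ 3 * τ i ^ (-σ)) ^ (M + 1) := by rw [h4]; ring
  have hSM : ∀ i ≤ I, K ^ N * τ i ^ η ≤ 1 := by
    intro i hi
    have h1 : K ^ N ≤ δ ^ (-ε * N) := by
      rw [Real.rpow_mul_natCast hδ.le]
      exact pow_le_pow_left₀ hK0.le hKε _
    have h2 : τ i ^ η = δ ^ (((q : ℝ) ^ i)⁻¹ * η) := (Real.rpow_mul hδ.le _ _).symm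
    have h3 : ε * N ≤ ((q : ℝ) ^ i)⁻¹ * η := by
      have e : ε * N = ((q : ℝ) ^ I)⁻¹ * η := by rw [hε]; field_simp
      rw [e]
      gcongr
      exact_mod_cast hq1
    rw [h2]
    calc _ ≤ δ ^ (-ε * N) * δ ^ (((q : ℝ) ^ i)⁻¹ * η) := by gcongr
      _ = δ ^ (-ε * N + ((q : ℝ) ^ i)⁻¹ * η) := (Real.rpow_add hδ _ _).symm
      _ ≤ 1 := Real.rpow_le_one hδ.le hδ1.le (by linarith)
  have hE1 : ∀ i < I, F (τ (i + 1)) ^ q < F (τ i) * τ (i + 1) ^ η := by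
    intro i hi
    by_contra hc
    push Not at hc
    refine h.scale hδ hσ hκ hκ1 hK (hτ0 (i + 1)) (hτ1 (i + 1)) hp hk ?_ ?_ (hE2 (i + 1))
      (hSM (i + 1) hi)
    · rw [← hq, hττ]
      have := pow_le_pow_of_le_one (hτ0 i).le (hτ1 i).le (Nat.one_le_pow i q hq1)
      rwa [hτδ, pow_one] at this
    · rw [← hq, hττ]; exact hc
  have hind : ∀ i ≤ I, F (τ i) ^ (q ^ i) ≤ F δ * (δ ^ (η / q)) ^ i := by
    intro i
    induction i with
    | zero => intro _; simp [hτ]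
    | succ i ih =>
      intro hi
      have h1 := ih (by omega)
      have h2 := pow_le_pow_left₀ (by have := hF0 (τ (i + 1)); positivity)
        (hE1 i (by omega)).le (q ^ i)
      rw [← pow_mul, ← pow_succ', mul_pow] at h2
      have h3 : (τ (i + 1) ^ η) ^ (q ^ i) = δ ^ (η / q) := by
        rw [hτ, ← Real.rpow_mul hδ.le, ← Real.rpow_mul_natCast hδ.le]
        congr 1
        push_cast
        field_simp
        rw [pow_succ]
      rw [h3] at h2
      have h4 : 0 ≤ δ ^ (η / q) := Real.rpow_nonneg hδ.le _
      calc _ ≤ F (τ i) ^ (q ^ i) * δ ^ (η / q) := h2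
        _ ≤ F δ * (δ ^ (η / q)) ^ i * δ ^ (η / q) := by gcongr
        _ = _ := by ring
  have h1 := (one_le_pow₀ (hF1 (τ I))).trans (hind I le_rfl)
  rw [← Real.rpow_mul_natCast hδ.le] at h1
  have h2 : δ ^ (η / q * I) ≤ δ ^ (2 : ℝ) := by
    refine Real.rpow_le_rpow_of_exponent_ge hδ hδ1.le ?_
    rw [div_mul_eq_mul_div, le_div_iff₀ hq0]; linarith
  have h3 : F δ ≤ δ ^ (-ε) * δ ^ (-σ) := h.size.trans (by gcongr)
  have h4 : δ ^ (-ε) * δ ^ (-σ) * δ ^ (2 : ℝ) < 1 := by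
    rw [← Real.rpow_add hδ, ← Real.rpow_add hδ]
    exact Real.rpow_lt_one hδ.le hδ1 (by linarith)
  have h5 : F δ * δ ^ (η / q * I) ≤ δ ^ (-ε) * δ ^ (-σ) * δ ^ (2 : ℝ) := by gcongr
  linarith

/-! ### Sets of small growth -/

/-- A `δ`-separated discretization `A` of a set of dimension `σ`, bounded away from `0` and
non-concentrated with exponent `κ`, whose sum set and product set are small; all up to the loss `K`. -/
structure SmallGrowth (δ K σ κ : ℝ) (A : Finset ℝ) : Prop where
  ne : A.Nonempty
  inj : ∀ a ∈ A, ∀ b ∈ A, ⌊a / δ⌋ = ⌊b / δ⌋ → a = b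
  bdd : ∀ a ∈ A, |a| ≤ 1
  away : ∀ a ∈ A, 1 ≤ K * |a|
  add : cov δ (A ×ˢ A) (fun p => p.1 + p.2) ≤ K * A.card
  mul : cov δ (A ×ˢ A) (fun p => p.1 * p.2) ≤ K * A.card
  frost : ∀ t, δ ≤ t → ∀ Y ⊆ A, (∀ y ∈ Y, ∀ z ∈ Y, |y - z| ≤ t) → (Y.card : ℝ) ≤ K * t ^ κ * A.card
  size : (A.card : ℝ) ≤ K * δ ^ (-σ)

/-- The dilate `u A`, discretized at scale `δ`. -/
noncomputable def dil (δ u : ℝ) (A : Finset ℝ) : Finset ℤ := A.image (fun s => ⌊u * s / δ⌋)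

section
variable {δ K σ κ : ℝ} {A : Finset ℝ}

lemma mem_dil {u s : ℝ} (hs : s ∈ A) : ⌊u * s / δ⌋ ∈ dil δ u A := Finset.mem_image_of_mem _ hs

lemma card_dil_le (u : ℝ) : ((dil δ u A).card : ℝ) ≤ A.card := by
  exact_mod_cast Finset.card_image_le

lemma SmallGrowth.fiber (h : SmallGrowth δ K σ κ A) (hδ : 0 < δ) (hK : 2 ≤ K) {u : ℝ} (hu : u ∈ A)
    (z : ℤ) : ((A.filter (fun s => ⌊u * s / δ⌋ = z)).card : ℝ) ≤ 2 * K := by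
  have hu1 := h.away u hu
  have hK0 : 0 < K := by linarith
  have hu0 : 0 < |u| := by
    by_contra hc
    nlinarith
  rw [card_eq_cov (ρ := δ) (f := fun x => x) (fun i hi j hj hij =>
    h.inj i (Finset.mem_filter.mp hi).1 j (Finset.mem_filter.mp hj).1 hij)]
  refine (cov_le_of_diam (L := K) hδ hK0.le ?_).trans (by linarith)
  intro i hi j hj
  have h1 := abs_sub_lt_of_floor hδ
    ((Finset.mem_filter.mp hi).2.trans (Finset.mem_filter.mp hj).2.symm)
  rw [← mul_sub, abs_mul] at h1
  calc |i - j| ≤ K * |u| * |i - j| := le_mul_of_one_le_left (abs_nonneg _) hu1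
    _ = K * (|u| * |i - j|) := by ring
    _ ≤ K * δ := by gcongr

lemma SmallGrowth.card_le_dil (h : SmallGrowth δ K σ κ A) (hδ : 0 < δ) (hK : 2 ≤ K) {u : ℝ}
    (hu : u ∈ A) {X : Finset ℝ} (hX : X ⊆ A) : (X.card : ℝ) ≤ 2 * K * (dil δ u X).card := by
  refine card_le_fibers fun z => le_trans ?_ (h.fiber hδ hK hu z)
  exact_mod_cast Finset.card_le_card (Finset.filter_subset_filter _ hX)

lemma SmallGrowth.card_dil_add (h : SmallGrowth δ K σ κ A) (hδ : 0 < δ) {u : ℝ}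
    (hu : u ∈ A) : ((dil δ u A + dil δ u A).card : ℝ) ≤ 6 * K * A.card := by
  have h1 : dil δ u A + dil δ u A ⊆
      (A ×ˢ A).image (fun p => ⌊u * (p.1 + p.2) / δ⌋) + Finset.Icc (-1) 0 := by
    intro z hz
    obtain ⟨x, hx, y, hy, rfl⟩ := Finset.mem_add.mp hz
    obtain ⟨s, hs, rfl⟩ := Finset.mem_image.mp hx
    obtain ⟨t, ht, rfl⟩ := Finset.mem_image.mp hy
    refine Finset.mem_add.mpr ⟨_, Finset.mem_image_of_mem _ (Finset.mk_mem_product hs ht),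
      ⌊u * s / δ⌋ + ⌊u * t / δ⌋ - ⌊u * (s + t) / δ⌋, ?_, by ring⟩
    have e : u * (s + t) / δ = u * s / δ + u * t / δ := by ring
    rw [Finset.mem_Icc, e]
    have h1 := Int.le_floor_add (u * s / δ) (u * t / δ)
    have h2 := Int.le_floor_add_floor (u * s / δ) (u * t / δ)
    omega
  have h2 : cov δ (A ×ˢ A) (fun p => u * (p.1 + p.2)) ≤
      (1 + 2) * cov δ (A ×ˢ A) (fun p => p.1 + p.2) := by
    refine cov_comp hδ hδ zero_le_one ?_
    intro p _ q _ hpq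
    rw [← mul_sub, abs_mul]
    exact mul_le_mul (h.bdd u hu) hpq.le (abs_nonneg _) zero_le_one
  have h3 := h.add
  calc ((dil δ u A + dil δ u A).card : ℝ) ≤
        cov δ (A ×ˢ A) (fun p => u * (p.1 + p.2)) * (Finset.Icc (-1 : ℤ) 0).card := by
        unfold cov
        exact_mod_cast (Finset.card_le_card h1).trans Finset.card_add_le
    _ = cov δ (A ×ˢ A) (fun p => u * (p.1 + p.2)) * 2 := by
        rw [show (Finset.Icc (-1 : ℤ) 0).card = 2 from rfl]; norm_num
    _ ≤ _ := by linarith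

/-- By multiplicative energy, one dilate `b A` has a large intersection with many dilates `a A`. -/
lemma SmallGrowth.popular (h : SmallGrowth δ K σ κ A) (hδ : 0 < δ) (hK : 2 ≤ K) :
    ∃ b ∈ A, ∃ X ⊆ A, (A.card : ℝ) ≤ 8 * K ^ 3 * X.card ∧
      ∀ a ∈ X, (A.card : ℝ) ≤ 8 * K ^ 3 * (dil δ a A ∩ dil δ b A).card := by
  classical
  have hK0 : 0 < K := by linarith
  set n : ℝ := (A.card : ℝ) with hn
  have hn0 : 0 < n := by rw [hn]; exact_mod_cast h.ne.card_pos
  set D := ((A ×ˢ A) ×ˢ (A ×ˢ A)).filter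
    (fun p => ⌊p.1.1 * p.1.2 / δ⌋ = ⌊p.2.1 * p.2.2 / δ⌋) with hD
  have hE : n ^ 3 ≤ K * D.card := by
    have h1 := card_sq_le_energy (A ×ˢ A) (fun p : ℝ × ℝ => ⌊p.1 * p.2 / δ⌋)
    rw [Finset.card_product, Nat.cast_mul] at h1
    have h2 : (((A ×ˢ A).image (fun p : ℝ × ℝ => ⌊p.1 * p.2 / δ⌋)).card : ℝ) ≤ K * n := h.mul
    have h3 : (n * n) ^ 2 ≤ K * n * D.card :=
      h1.trans (mul_le_mul_of_nonneg_right h2 (Nat.cast_nonneg _))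
    refine le_of_mul_le_mul_left ?_ hn0
    calc n * n ^ 3 = (n * n) ^ 2 := by ring
      _ ≤ _ := h3
      _ = _ := by ring
  -- the number of coincidences for given `a`, `b`
  have hab : ∀ a ∈ A, ∀ b ∈ A, ((D.filter (fun p => (p.1.1, p.2.1) = (a, b))).card : ℝ) ≤
      4 * K ^ 2 * (dil δ a A ∩ dil δ b A).card := by
    intro a ha b hb
    set U := dil δ a A ∩ dil δ b A with hU
    have h1 : ((D.filter (fun p => (p.1.1, p.2.1) = (a, b))).card : ℝ) ≤
        (U.biUnion (fun z => (A.filter (fun s => ⌊a * s / δ⌋ = z)) ×ˢ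
          (A.filter (fun s => ⌊b * s / δ⌋ = z)))).card := by
      rw [Nat.cast_le]
      refine Finset.card_le_card_of_injOn (fun p => (p.1.2, p.2.2)) ?_ ?_
      · intro p hp
        obtain ⟨hp, hpab⟩ := Finset.mem_filter.mp (Finset.mem_coe.mp hp)
        obtain ⟨hp, hpe⟩ := Finset.mem_filter.mp hp
        obtain ⟨hp1, hp2⟩ := Finset.mem_product.mp hp
        have hp1 := (Finset.mem_product.mp hp1).2
        have hp2 := (Finset.mem_product.mp hp2).2
        obtain ⟨rfl, rfl⟩ := Prod.mk.inj hpab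
        rw [Finset.mem_coe, Finset.mem_biUnion]
        refine ⟨⌊p.1.1 * p.1.2 / δ⌋, ?_, ?_⟩
        · rw [hU, Finset.mem_inter]
          exact ⟨mem_dil hp1, hpe ▸ mem_dil hp2⟩
        · simp only [Finset.mem_product, Finset.mem_filter]
          exact ⟨⟨hp1, trivial⟩, hp2, hpe.symm⟩
      · intro p hp q hq hpq
        have hp := Prod.mk.inj (Finset.mem_filter.mp (Finset.mem_coe.mp hp)).2
        have hq := Prod.mk.inj (Finset.mem_filter.mp (Finset.mem_coe.mp hq)).2
        have hpq := Prod.mk.inj hpq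
        exact Prod.ext (Prod.ext (hp.1.trans hq.1.symm) hpq.1)
          (Prod.ext (hp.2.trans hq.2.symm) hpq.2)
    refine h1.trans ?_
    refine (Nat.cast_le.mpr Finset.card_biUnion_le).trans ?_
    push_cast
    refine (Finset.sum_le_card_nsmul _ _ (4 * K ^ 2) fun z _ => ?_).trans ?_
    · rw [Finset.card_product, Nat.cast_mul]
      calc _ ≤ (2 * K) * (2 * K) := mul_le_mul (h.fiber hδ hK ha z) (h.fiber hδ hK hb z)
            (Nat.cast_nonneg _) (by positivity)
        _ = _ := by ring
    · rw [nsmul_eq_mul, mul_comm]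
  have hsum : (D.card : ℝ) ≤ ∑ b ∈ A, ∑ a ∈ A, 4 * K ^ 2 * ((dil δ a A ∩ dil δ b A).card : ℝ) := by
    have h1 := Finset.card_eq_sum_card_fiberwise (f := fun p : (ℝ × ℝ) × (ℝ × ℝ) => (p.1.1, p.2.1))
      (s := D) (t := A ×ˢ A) ?_
    · rw [h1, Finset.sum_comm, ← Finset.sum_product']
      push_cast
      exact Finset.sum_le_sum fun p hp =>
        hab p.1 (Finset.mem_product.mp hp).1 p.2 (Finset.mem_product.mp hp).2
    · intro p hp
      obtain ⟨hp1, hp2⟩ := Finset.mem_product.mp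
        (Finset.mem_filter.mp (Finset.mem_coe.mp hp)).1
      exact Finset.mem_coe.mpr (Finset.mk_mem_product (Finset.mem_product.mp hp1).1
        (Finset.mem_product.mp hp2).1)
  obtain ⟨b, hb, hb'⟩ : ∃ b ∈ A, n ^ 2 / K ≤
      ∑ a ∈ A, 4 * K ^ 2 * ((dil δ a A ∩ dil δ b A).card : ℝ) := by
    refine Finset.exists_le_of_sum_le h.ne ?_
    rw [Finset.sum_const, nsmul_eq_mul, ← hn, ← mul_div_assoc, div_le_iff₀ hK0]
    calc n * n ^ 2 = n ^ 3 := by ring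
      _ ≤ K * D.card := hE
      _ ≤ _ := by rw [mul_comm]; gcongr
  refine ⟨b, hb, A.filter (fun a => n ≤ 8 * K ^ 3 * ((dil δ a A ∩ dil δ b A).card : ℝ)),
    Finset.filter_subset _ _, ?_, fun a ha => (Finset.mem_filter.mp ha).2⟩
  set X := A.filter (fun a => n ≤ 8 * K ^ 3 * ((dil δ a A ∩ dil δ b A).card : ℝ)) with hX
  have h1 : ∑ a ∈ A, 4 * K ^ 2 * ((dil δ a A ∩ dil δ b A).card : ℝ) ≤
      X.card * (4 * K ^ 2 * n) + n * (n / (2 * K)) := by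
    rw [← Finset.sum_filter_add_sum_filter_not A
      (fun a => n ≤ 8 * K ^ 3 * ((dil δ a A ∩ dil δ b A).card : ℝ))]
    refine add_le_add ?_ ?_
    · rw [← nsmul_eq_mul]
      refine Finset.sum_le_card_nsmul _ _ _ fun a _ => ?_
      have : ((dil δ a A ∩ dil δ b A).card : ℝ) ≤ n :=
        le_trans (by exact_mod_cast Finset.card_le_card Finset.inter_subset_left) (card_dil_le a)
      gcongr
    · refine (Finset.sum_le_card_nsmul _ _ (n / (2 * K)) fun a ha => ?_).trans ?_
      · have := (Finset.mem_filter.mp ha).2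
        push Not at this
        rw [le_div_iff₀ (by positivity)]
        linarith [show 4 * K ^ 2 * ((dil δ a A ∩ dil δ b A).card : ℝ) * (2 * K) =
          8 * K ^ 3 * ((dil δ a A ∩ dil δ b A).card : ℝ) by ring]
      · rw [nsmul_eq_mul]
        have : ((A.filter (fun a => ¬ n ≤ 8 * K ^ 3 * ((dil δ a A ∩ dil δ b A).card : ℝ))).card : ℝ)
          ≤ n := Nat.cast_le.mpr (Finset.card_filter_le _ _)
        gcongr
  have h2 := hb'.trans h1
  have e : n ^ 2 / K = n * (n / (2 * K)) + n * (n / (2 * K)) := by field_simp; norm_num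
  rw [e] at h2
  have h3 : n * (n / (2 * K)) ≤ n * (X.card * (4 * K ^ 2)) := by linarith
  have h4 := le_of_mul_le_mul_left h3 hn0
  rw [div_le_iff₀ (by positivity)] at h4
  linarith

end

/-! ### Ruzsa covering and Plünnecke -/

section
variable {δ K σ κ : ℝ} {A : Finset ℝ}

/-- If the discretized dilates by `a` and `b` share many elements, then the first is covered by few
translates of `B - B`, where `B` is the second (Ruzsa's triangle inequality and covering lemma). -/
lemma SmallGrowth.cover (h : SmallGrowth δ K σ κ A) (hδ : 0 < δ) (hK : 1000 ≤ K) {a b : ℝ}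
    (ha : a ∈ A) (hb : b ∈ A) (hab : (A.card : ℝ) ≤ 8 * K ^ 3 * (dil δ a A ∩ dil δ b A).card) :
    ∃ T : Finset ℤ, (T.card : ℝ) ≤ K ^ 7 ∧ ∀ x ∈ A, ⌊a * x / δ⌋ ∈ T + (dil δ b A - dil δ b A) := by
  set n : ℝ := (A.card : ℝ) with hn
  have hn0 : 0 < n := by rw [hn]; exact_mod_cast h.ne.card_pos
  have hK0 : 0 < K := by linarith
  set U := dil δ a A ∩ dil δ b A with hU
  set B := dil δ b A with hB
  have hBne : B.Nonempty := h.ne.image _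
  have h1 : ((dil δ a A + B).card : ℝ) * U.card ≤ (6 * K * n) * (6 * K * n) := by
    calc ((dil δ a A + B).card : ℝ) * U.card ≤ (dil δ a A + U).card * (U + B).card := by
          exact_mod_cast Finset.ruzsa_triangle_inequality_add_add_add (dil δ a A) U B
      _ ≤ _ := by
          refine mul_le_mul ((Nat.cast_le.mpr (Finset.card_le_card ?_)).trans (h.card_dil_add hδ ha))
            ((Nat.cast_le.mpr (Finset.card_le_card ?_)).trans (h.card_dil_add hδ hb))
            (Nat.cast_nonneg _) (by positivity)
          · exact Finset.add_subset_add_left Finset.inter_subset_left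
          · exact Finset.add_subset_add_right Finset.inter_subset_right
  have h2 : n ≤ 2 * K * B.card := h.card_le_dil hδ (by linarith) hb subset_rfl
  have h3 : ((dil δ a A + B).card : ℝ) ≤ K ^ 7 * B.card := by
    have h4 : ((dil δ a A + B).card : ℝ) ≤ 288 * K ^ 5 * n := by
      refine le_of_mul_le_mul_right ?_ hn0
      calc ((dil δ a A + B).card : ℝ) * n ≤ (dil δ a A + B).card * (8 * K ^ 3 * U.card) := by gcongr
        _ = 8 * K ^ 3 * ((dil δ a A + B).card * U.card) := by ring
        _ ≤ 8 * K ^ 3 * ((6 * K * n) * (6 * K * n)) := by gcongr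
        _ = _ := by ring
    calc ((dil δ a A + B).card : ℝ) ≤ 288 * K ^ 5 * n := h4
      _ ≤ 288 * K ^ 5 * (2 * K * B.card) := by gcongr
      _ = 576 * (K ^ 6 * B.card) := by ring
      _ ≤ K * (K ^ 6 * B.card) := by gcongr; linarith
      _ = _ := by ring
  obtain ⟨T, -, hT, hcov⟩ := Finset.ruzsa_covering_add hBne h3
  exact ⟨T, hT, fun x hx => hcov (mem_dil hx)⟩

/-- The covering property passes to the scalars in `Comb X`. -/
lemma comb_cover {X : Finset ℝ} {B : Finset ℤ} (hK : 1000 ≤ K)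
    (hX : ∀ a ∈ X, ∃ T : Finset ℤ, (T.card : ℝ) ≤ K ^ 7 ∧ ∀ x ∈ A, ⌊a * x / δ⌋ ∈ T + (B - B))
    {u : ℝ} (hu : u ∈ Comb X) :
    ∃ T : Finset ℤ, (T.card : ℝ) ≤ K ^ 29 ∧ ∀ x ∈ A, ⌊u * x / δ⌋ ∈ T + (4 • B - 4 • B) := by
  obtain ⟨c₁, h1, c₂, h2, c₃, h3, c₄, h4, rfl⟩ := hu
  obtain ⟨T₁, hT1, h1⟩ := hX _ h1
  obtain ⟨T₂, hT2, h2⟩ := hX _ h2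
  obtain ⟨T₃, hT3, h3⟩ := hX _ h3
  obtain ⟨T₄, hT4, h4⟩ := hX _ h4
  have hK0 : 0 < K := by linarith
  refine ⟨T₁ - T₂ + T₃ - T₄ + Finset.Icc (-2) 1, ?_, ?_⟩
  · calc ((T₁ - T₂ + T₃ - T₄ + Finset.Icc (-2) 1).card : ℝ) ≤
        T₁.card * T₂.card * T₃.card * T₄.card * (Finset.Icc (-2 : ℤ) 1).card := by
          norm_cast
          refine Finset.card_add_le.trans (Nat.mul_le_mul_right _ ?_)
          refine Finset.card_sub_le.trans (Nat.mul_le_mul_right _ ?_)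
          refine Finset.card_add_le.trans (Nat.mul_le_mul_right _ ?_)
          exact Finset.card_sub_le
      _ = T₁.card * T₂.card * T₃.card * T₄.card * 4 := by
          rw [show (Finset.Icc (-2 : ℤ) 1).card = 4 from rfl]; norm_num
      _ ≤ K ^ 7 * K ^ 7 * K ^ 7 * K ^ 7 * K := by gcongr; linarith
      _ = _ := by ring
  · intro x hx
    obtain ⟨t₁, ht1, z₁, hz1, e1⟩ := Finset.mem_add.mp (h1 x hx)
    obtain ⟨t₂, ht2, z₂, hz2, e2⟩ := Finset.mem_add.mp (h2 x hx)
    obtain ⟨t₃, ht3, z₃, hz3, e3⟩ := Finset.mem_add.mp (h3 x hx)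
    obtain ⟨t₄, ht4, z₄, hz4, e4⟩ := Finset.mem_add.mp (h4 x hx)
    obtain ⟨p₁, hp1, q₁, hq1, rfl⟩ := Finset.mem_sub.mp hz1
    obtain ⟨p₂, hp2, q₂, hq2, rfl⟩ := Finset.mem_sub.mp hz2
    obtain ⟨p₃, hp3, q₃, hq3, rfl⟩ := Finset.mem_sub.mp hz3
    obtain ⟨p₄, hp4, q₄, hq4, rfl⟩ := Finset.mem_sub.mp hz4
    have h4B : ∀ x ∈ B, ∀ y ∈ B, ∀ z ∈ B, ∀ w ∈ B, x + y + z + w ∈ 4 • B := by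
      intro x hx y hy z hz w hw
      rw [show (4 : ℕ) = 1 + 1 + 1 + 1 from rfl, add_nsmul, add_nsmul, add_nsmul, one_nsmul]
      exact Finset.add_mem_add (Finset.add_mem_add (Finset.add_mem_add hx hy) hz) hw
    refine Finset.mem_add.mpr ⟨t₁ - t₂ + t₃ - t₄ + (⌊(c₁ - c₂ + c₃ - c₄) * x / δ⌋ -
      (⌊c₁ * x / δ⌋ - ⌊c₂ * x / δ⌋ + ⌊c₃ * x / δ⌋ - ⌊c₄ * x / δ⌋)), ?_,
      (p₁ + q₂ + p₃ + q₄) - (q₁ + p₂ + q₃ + p₄), ?_, ?_⟩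
    · refine Finset.add_mem_add (Finset.sub_mem_sub (Finset.add_mem_add
        (Finset.sub_mem_sub ht1 ht2) ht3) ht4) ?_
      rw [Finset.mem_Icc]
      have e : (c₁ - c₂ + c₃ - c₄) * x / δ = c₁ * x / δ - c₂ * x / δ + c₃ * x / δ - c₄ * x / δ := by
        ring
      rw [e]
      have f1 := Int.floor_le (c₁ * x / δ)
      have f2 := Int.floor_le (c₂ * x / δ)
      have f3 := Int.floor_le (c₃ * x / δ)
      have f4 := Int.floor_le (c₄ * x / δ)
      have g1 := Int.lt_floor_add_one (c₁ * x / δ)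
      have g2 := Int.lt_floor_add_one (c₂ * x / δ)
      have g3 := Int.lt_floor_add_one (c₃ * x / δ)
      have g4 := Int.lt_floor_add_one (c₄ * x / δ)
      have f5 := Int.floor_le (c₁ * x / δ - c₂ * x / δ + c₃ * x / δ - c₄ * x / δ)
      have g5 := Int.lt_floor_add_one (c₁ * x / δ - c₂ * x / δ + c₃ * x / δ - c₄ * x / δ)
      generalize ⌊c₁ * x / δ - c₂ * x / δ + c₃ * x / δ - c₄ * x / δ⌋ = m at *
      generalize ⌊c₁ * x / δ⌋ = m₁ at *
      generalize ⌊c₂ * x / δ⌋ = m₂ at *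
      generalize ⌊c₃ * x / δ⌋ = m₃ at *
      generalize ⌊c₄ * x / δ⌋ = m₄ at *
      have k1 : (-3 : ℝ) < ((m - (m₁ - m₂ + m₃ - m₄) : ℤ) : ℝ) := by push_cast; linarith
      have k2 : ((m - (m₁ - m₂ + m₃ - m₄) : ℤ) : ℝ) < 2 := by push_cast; linarith
      have k3 : -3 < m - (m₁ - m₂ + m₃ - m₄) := by exact_mod_cast k1
      have k4 : m - (m₁ - m₂ + m₃ - m₄) < 2 := by exact_mod_cast k2
      omega
    · exact Finset.sub_mem_sub (h4B _ hp1 _ hq2 _ hp3 _ hq4) (h4B _ hq1 _ hp2 _ hq3 _ hp4)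
    · rw [← e1, ← e2, ← e3, ← e4]; ring

/-- Plünnecke's inequality for the discretized dilates of `A`. -/
lemma SmallGrowth.card_nsmul_sub (h : SmallGrowth δ K σ κ A) (hδ : 0 < δ) (hK : 1000 ≤ K) {b : ℝ}
    (hb : b ∈ A) (k l : ℕ) :
    ((k • dil δ b A - l • dil δ b A).card : ℝ) ≤ K ^ (3 * (k + l)) * A.card := by
  set n : ℝ := (A.card : ℝ) with hn
  have hn0 : 0 < n := by rw [hn]; exact_mod_cast h.ne.card_pos
  have hK0 : 0 < K := by linarith
  set B := dil δ b A with hB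
  have hBne : B.Nonempty := h.ne.image _
  have hB0 : (0 : ℝ) < B.card := by exact_mod_cast hBne.card_pos
  have hBn : (B.card : ℝ) ≤ n := card_dil_le b
  have h2 : n ≤ 2 * K * B.card := h.card_le_dil hδ (by linarith) hb subset_rfl
  have h4 : ((k • B - l • B).card : ℝ) ≤
      ((B + B).card / B.card : ℝ) ^ (k + l) * B.card := by
    have h5 := (NNRat.cast_le (K := ℝ)).mpr
      (Finset.pluennecke_ruzsa_inequality_nsmul_sub_nsmul_add hBne B k l)
    push_cast at h5
    exact h5
  have h5 : ((B + B).card / B.card : ℝ) ≤ K ^ 3 := by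
    rw [div_le_iff₀ hB0]
    calc ((B + B).card : ℝ) ≤ 6 * K * n := h.card_dil_add hδ hb
      _ ≤ 6 * K * (2 * K * B.card) := by gcongr
      _ = 12 * (K ^ 2 * B.card) := by ring
      _ ≤ K * (K ^ 2 * B.card) := by gcongr; linarith
      _ = _ := by ring
  calc _ ≤ ((B + B).card / B.card : ℝ) ^ (k + l) * B.card := h4
    _ ≤ (K ^ 3) ^ (k + l) * n := by gcongr
    _ = _ := by rw [← pow_mul]

/-- Plünnecke's inequality bounds all the sums `b x + b x' + v y + u z` at scale `δ`. -/
lemma SmallGrowth.comb_sum (h : SmallGrowth δ K σ κ A) (hδ : 0 < δ) (hK : 1000 ≤ K) {b u v : ℝ}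
    (hb : b ∈ A) {T S : Finset ℤ} (hT : (T.card : ℝ) ≤ K ^ 29) (hS : (S.card : ℝ) ≤ K ^ 29)
    (hu : ∀ x ∈ A, ⌊u * x / δ⌋ ∈ T + (4 • dil δ b A - 4 • dil δ b A))
    (hv : ∀ x ∈ A, ⌊v * x / δ⌋ ∈ S + (4 • dil δ b A - 4 • dil δ b A)) :
    cov δ ((A ×ˢ (A ×ˢ A)) ×ˢ A) (fun p => b * p.1.1 + (v * p.1.2.1 + u * p.1.2.2) + b * p.2) ≤
      K ^ 114 * A.card := by
  set n : ℝ := (A.card : ℝ) with hn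
  have hn0 : 0 < n := by rw [hn]; exact_mod_cast h.ne.card_pos
  have hK0 : 0 < K := by linarith
  set B := dil δ b A with hB
  have h3 : ((10 • B - 8 • B).card : ℝ) ≤ K ^ 54 * n := h.card_nsmul_sub hδ hK hb 10 8
  have hsub : ((A ×ˢ (A ×ˢ A)) ×ˢ A).image (fun p =>
      ⌊(b * p.1.1 + (v * p.1.2.1 + u * p.1.2.2) + b * p.2) / δ⌋) ⊆
      S + T + Finset.Icc 0 3 + (10 • B - 8 • B) := by
    intro z hz
    obtain ⟨⟨⟨x, y, w⟩, x'⟩, hp, rfl⟩ := Finset.mem_image.mp hz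
    simp only [Finset.mem_product] at hp
    obtain ⟨⟨hx, hy, hw⟩, hx'⟩ := hp
    obtain ⟨s, hs, z₁, hz1, e1⟩ := Finset.mem_add.mp (hv y hy)
    obtain ⟨t, ht, z₂, hz2, e2⟩ := Finset.mem_add.mp (hu w hw)
    obtain ⟨p₁, hp1, q₁, hq1, rfl⟩ := Finset.mem_sub.mp hz1
    obtain ⟨p₂, hp2, q₂, hq2, rfl⟩ := Finset.mem_sub.mp hz2
    refine Finset.mem_add.mpr ⟨s + t + (⌊(b * x + (v * y + u * w) + b * x') / δ⌋ -
      (⌊b * x / δ⌋ + ⌊b * x' / δ⌋ + ⌊v * y / δ⌋ + ⌊u * w / δ⌋)), ?_,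
      (⌊b * x / δ⌋ + ⌊b * x' / δ⌋ + p₁ + p₂) - (q₁ + q₂), ?_, ?_⟩
    · refine Finset.add_mem_add (Finset.add_mem_add hs ht) ?_
      rw [Finset.mem_Icc]
      have e : (b * x + (v * y + u * w) + b * x') / δ =
          b * x / δ + b * x' / δ + v * y / δ + u * w / δ := by ring
      rw [e]
      have f1 := Int.le_floor_add (b * x / δ + b * x' / δ + v * y / δ) (u * w / δ)
      have f2 := Int.le_floor_add (b * x / δ + b * x' / δ) (v * y / δ)
      have f3 := Int.le_floor_add (b * x / δ) (b * x' / δ)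
      have g1 := Int.le_floor_add_floor (b * x / δ + b * x' / δ + v * y / δ) (u * w / δ)
      have g2 := Int.le_floor_add_floor (b * x / δ + b * x' / δ) (v * y / δ)
      have g3 := Int.le_floor_add_floor (b * x / δ) (b * x' / δ)
      omega
    · refine Finset.sub_mem_sub ?_ ?_
      · rw [show (10 : ℕ) = 1 + 1 + 4 + 4 from rfl, add_nsmul, add_nsmul, add_nsmul, one_nsmul]
        exact Finset.add_mem_add (Finset.add_mem_add (Finset.add_mem_add (mem_dil hx)
          (mem_dil hx')) hp1) hp2
      · rw [show (8 : ℕ) = 4 + 4 from rfl, add_nsmul]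
        exact Finset.add_mem_add hq1 hq2
    · simp only
      rw [← e1, ← e2]; ring
  generalize 10 • B - 8 • B = W at h3 hsub
  calc _ ≤ ((S + T + Finset.Icc 0 3 + W).card : ℝ) := by
        unfold cov; exact_mod_cast Finset.card_le_card hsub
    _ ≤ S.card * T.card * (Finset.Icc (0 : ℤ) 3).card * W.card := by
        norm_cast
        refine Finset.card_add_le.trans (Nat.mul_le_mul_right _ ?_)
        refine Finset.card_add_le.trans (Nat.mul_le_mul_right _ ?_)
        exact Finset.card_add_le
    _ = S.card * T.card * 4 * W.card := by
        rw [show (Finset.Icc (0 : ℤ) 3).card = 4 from rfl]; norm_num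
    _ ≤ K ^ 29 * K ^ 29 * K * (K ^ 54 * n) :=
        mul_le_mul (mul_le_mul (mul_le_mul hS hT (by positivity) (by positivity)) (by linarith)
          (by positivity) (by positivity)) h3 (by positivity) (by positivity)
    _ = K ^ 113 * n := by ring
    _ ≤ K ^ 114 * n := by
        have : 1 ≤ K := by linarith
        gcongr
        norm_num

/-- The sums `b x + b x' + b x''` at scale `δ`. -/
lemma SmallGrowth.triple_sum (h : SmallGrowth δ K σ κ A) (hδ : 0 < δ) (hK : 1000 ≤ K) {b : ℝ}
    (hb : b ∈ A) :
    cov δ ((A ×ˢ A) ×ˢ A) (fun p => b * p.1.1 + b * p.1.2 + b * p.2) ≤ K ^ 114 * A.card := by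
  have hK0 : 0 < K := by linarith
  have h3 : ((3 • dil δ b A - 0 • dil δ b A).card : ℝ) ≤ K ^ 9 * A.card :=
    h.card_nsmul_sub hδ hK hb 3 0
  have hsub : ((A ×ˢ A) ×ˢ A).image (fun p => ⌊(b * p.1.1 + b * p.1.2 + b * p.2) / δ⌋) ⊆
      Finset.Icc 0 2 + (3 • dil δ b A - 0 • dil δ b A) := by
    intro z hz
    obtain ⟨⟨⟨x, y⟩, w⟩, hp, rfl⟩ := Finset.mem_image.mp hz
    simp only [Finset.mem_product] at hp
    obtain ⟨⟨hx, hy⟩, hw⟩ := hp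
    refine Finset.mem_add.mpr ⟨⌊(b * x + b * y + b * w) / δ⌋ -
      (⌊b * x / δ⌋ + ⌊b * y / δ⌋ + ⌊b * w / δ⌋), ?_,
      (⌊b * x / δ⌋ + ⌊b * y / δ⌋ + ⌊b * w / δ⌋) - 0, ?_, by simp⟩
    · rw [Finset.mem_Icc]
      have e : (b * x + b * y + b * w) / δ = b * x / δ + b * y / δ + b * w / δ := by ring
      rw [e]
      have f2 := Int.le_floor_add (b * x / δ + b * y / δ) (b * w / δ)
      have f3 := Int.le_floor_add (b * x / δ) (b * y / δ)
      have g2 := Int.le_floor_add_floor (b * x / δ + b * y / δ) (b * w / δ)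
      have g3 := Int.le_floor_add_floor (b * x / δ) (b * y / δ)
      omega
    · refine Finset.sub_mem_sub ?_ (by simp)
      rw [show (3 : ℕ) = 1 + 1 + 1 from rfl, add_nsmul, add_nsmul, one_nsmul]
      exact Finset.add_mem_add (Finset.add_mem_add (mem_dil hx) (mem_dil hy)) (mem_dil hw)
  generalize 3 • dil δ b A - 0 • dil δ b A = W at h3 hsub
  calc _ ≤ ((Finset.Icc (0 : ℤ) 2 + W).card : ℝ) := by
        unfold cov; exact_mod_cast Finset.card_le_card hsub
    _ ≤ (Finset.Icc (0 : ℤ) 2).card * (W.card : ℝ) := by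
        exact_mod_cast Finset.card_add_le
    _ = 3 * (W.card : ℝ) := by
        rw [show (Finset.Icc (0 : ℤ) 2).card = 3 from rfl]; norm_num
    _ ≤ K * (K ^ 9 * A.card) :=
        mul_le_mul (by linarith) h3 (by positivity) (by positivity)
    _ = K ^ 10 * A.card := by ring
    _ ≤ K ^ 114 * A.card := by
        have : 1 ≤ K := by linarith
        gcongr
        norm_num

end

/-! ### From small growth to ring-like sets -/

section
variable {δ K σ κ : ℝ} {A : Finset ℝ}

/-- If a set has a small sum with the dilate `b X` at the finest scale `δ`, then it is no larger
than `X` at every coarser scale. -/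
lemma SmallGrowth.descent (h : SmallGrowth δ K σ κ A) (hδ : 0 < δ) (hK : 1000 ≤ K) {b : ℝ}
    (hb : b ∈ A) {X : Finset ℝ} (hXA : X ⊆ A) (hX : (A.card : ℝ) ≤ 8 * K ^ 3 * X.card)
    {ι : Type*} {I : Finset ι} {f : ι → ℝ} {C : ℝ} (hC : 0 ≤ C)
    (hI : cov δ (I ×ˢ X) (fun p => f p.1 + b * p.2) ≤ C * A.card) {ρ : ℝ} (hρ : δ ≤ ρ) :
    cov ρ I f ≤ K ^ 6 * C * cov ρ X (fun x => x) := by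
  have hK0 : 0 < K := by linarith
  have hn0 : (0 : ℝ) < A.card := by exact_mod_cast h.ne.card_pos
  have hρ0 : 0 < ρ := hδ.trans_le hρ
  have hXne : X.Nonempty := by
    rw [← Finset.card_pos]
    by_contra hc
    rw [show X.card = 0 by omega] at hX
    simp at hX
    rw [hX] at hn0; simp at hn0
  obtain ⟨J, hJX, hJ, hJc⟩ := exists_cell δ ρ hρ0 hXne (fun x => b * x) (fun x => b * x)
  have hb1 : |b| ≤ 1 := h.bdd b hb
  set F := cov ρ X (fun x => x) with hF
  have hF0 : 0 ≤ F := cov_nonneg _ _ _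
  have h1 : cov ρ X (fun x => b * x) ≤ 3 * F := by
    have := cov_comp (L := 1) hρ0 hρ0 zero_le_one (I := X) (f := fun x => x) (g := fun x => b * x)
      (fun i _ j _ hij => by
        rw [← mul_sub, abs_mul, one_mul]
        exact (mul_le_of_le_one_left (abs_nonneg _) hb1).trans hij.le)
    norm_num at this; exact this
  have h2 : (X.card : ℝ) ≤ 2 * K * cov δ X (fun x => b * x) := h.card_le_dil hδ (by linarith) hb hXA
  have h3 : cov ρ I f * cov δ J (fun x => b * x) ≤ 39 * (C * A.card) := by
    refine (cov_mul_le hδ hρ (fun j hj j' hj' => by linarith [hJ j hj j' hj'])).trans ?_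
    gcongr
    exact (cov_mono _ (Finset.product_subset_product_right hJX) _).trans hI
  set G := cov δ J (fun x => b * x) with hG
  have hG0 : 0 ≤ G := cov_nonneg _ _ _
  have h4 : (A.card : ℝ) ≤ 48 * K ^ 4 * F * G := by
    calc (A.card : ℝ) ≤ 8 * K ^ 3 * X.card := hX
      _ ≤ 8 * K ^ 3 * (2 * K * ((3 * F) * G)) := by
          gcongr
          refine h2.trans ?_
          gcongr
          exact hJc.trans (by gcongr)
      _ = _ := by ring
  have hG1 : 0 < G := by
    rcases hG0.lt_or_eq with h | h
    · exact h
    · rw [← h] at h4; linarith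
  refine le_of_mul_le_mul_right ?_ hG1
  calc cov ρ I f * G ≤ 39 * (C * A.card) := h3
    _ ≤ 39 * (C * (48 * K ^ 4 * F * G)) := by gcongr
    _ = 1872 * K ^ 4 * C * F * G := by ring
    _ ≤ (K * K) * K ^ 4 * C * F * G := by gcongr; nlinarith
    _ = _ := by ring

/-- A set of small growth contains a popular subset which is ring-like at all scales. -/
theorem SmallGrowth.exists_ringLike (h : SmallGrowth δ K σ κ A) (hδ : 0 < δ) (hK : 1000 ≤ K) :
    ∃ X, RingLike δ (K ^ 123) σ κ X := by
  have hK0 : 0 < K := by linarith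
  have hK1 : 1 ≤ K := by linarith
  have hn0 : (0 : ℝ) < A.card := by exact_mod_cast h.ne.card_pos
  obtain ⟨b, hb, X, hXA, hX, hpop⟩ := h.popular hδ (by linarith)
  have hXne : X.Nonempty := by
    rw [← Finset.card_pos]
    by_contra hc
    rw [show X.card = 0 by omega] at hX
    simp at hX
    rw [hX] at hn0; simp at hn0
  have hb1 := h.away b hb
  have hcov : ∀ a ∈ X, ∃ T : Finset ℤ, (T.card : ℝ) ≤ K ^ 7 ∧
      ∀ x ∈ A, ⌊a * x / δ⌋ ∈ T + (dil δ b A - dil δ b A) :=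
    fun a ha => h.cover hδ hK (hXA ha) hb (hpop a ha)
  -- dividing by `b` costs a factor comparable to `K`
  have hdiv : ∀ ρ, 0 < ρ → ∀ Y : Finset ℝ,
      cov ρ Y (fun x => x) ≤ 2 * K * cov ρ Y (fun x => b * x) := by
    intro ρ hρ Y
    have := cov_comp (L := K) hρ hρ hK0.le (I := Y) (f := fun x => b * x) (g := fun x => x)
      (fun i _ j _ hij => by
        rw [← mul_sub, abs_mul] at hij
        calc |i - j| ≤ K * |b| * |i - j| := le_mul_of_one_le_left (abs_nonneg _) hb1
          _ = K * (|b| * |i - j|) := by ring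
          _ ≤ K * ρ := by gcongr)
    exact this.trans (mul_le_mul_of_nonneg_right (by linarith) (cov_nonneg _ _ _))
  have hcard : (X.card : ℝ) = cov δ X (fun x => x) :=
    card_eq_cov fun i hi j hj hij => h.inj i (hXA hi) j (hXA hj) hij
  refine ⟨X, hXne, fun x hx => h.bdd x (hXA hx), ?_, ?_, ?_, ?_⟩
  · intro ρ t hρ ht u hu v hv huv
    have hρ0 : 0 < ρ := hδ.trans_le hρ
    have ht0 : 0 < t := hρ0.trans_le ht
    obtain ⟨T, hT, hT'⟩ := comb_cover hK hcov hu
    obtain ⟨S, hS, hS'⟩ := comb_cover hK hcov hv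
    have hsum := h.comb_sum hδ hK hb hT hS hT' hS'
    have hd : cov ρ (X ×ˢ (X ×ˢ X)) (fun p => b * p.1 + (v * p.2.1 + u * p.2.2)) ≤
        K ^ 6 * K ^ 114 * cov ρ X (fun x => x) := by
      have hs := Finset.product_subset_product (Finset.product_subset_product hXA
        (Finset.product_subset_product hXA hXA)) hXA
      have hs' := (cov_mono δ hs _).trans hsum
      exact h.descent hδ hK hb hXA hX (I := X ×ˢ (X ×ˢ X))
        (f := fun p => b * p.1 + (v * p.2.1 + u * p.2.2)) (by positivity) hs' hρ
    have hm := cov_mul_le (ρ := ρ) (t := t) hρ0 ht (I := X) (J := X ×ˢ X) (f := fun x => b * x)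
      (g := fun p => v * p.1 + u * p.2) (by
        intro p hp q hq
        rw [Finset.mem_product] at hp hq
        have a1 := h.bdd _ (hXA hp.1)
        have a2 := h.bdd _ (hXA hp.2)
        have a3 := h.bdd _ (hXA hq.1)
        have a4 := h.bdd _ (hXA hq.2)
        have e1 : |p.1 - q.1| ≤ 2 := by rw [abs_le] at *; constructor <;> linarith
        have e2 : |p.2 - q.2| ≤ 2 := by rw [abs_le] at *; constructor <;> linarith
        calc |v * p.1 + u * p.2 - (v * q.1 + u * q.2)|
            = |v * (p.1 - q.1) + u * (p.2 - q.2)| := by ring_nf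
          _ ≤ |v| * |p.1 - q.1| + |u| * |p.2 - q.2| := by
              rw [← abs_mul, ← abs_mul]; exact abs_add_le _ _
          _ ≤ |v| * 2 + |u| * 2 := by gcongr
          _ ≤ 10 * t := by linarith)
    have hF0 := cov_nonneg ρ X (fun x => x)
    calc cov t X (fun x => x) * cov ρ (X ×ˢ X) (fun p => v * p.1 + u * p.2)
        ≤ 2 * K * cov t X (fun x => b * x) * cov ρ (X ×ˢ X) (fun p => v * p.1 + u * p.2) :=
          mul_le_mul_of_nonneg_right (hdiv t ht0 X) (cov_nonneg _ _ _)
      _ = 2 * K * (cov t X (fun x => b * x) * cov ρ (X ×ˢ X) (fun p => v * p.1 + u * p.2)) := by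
          ring
      _ ≤ 2 * K * (39 * (K ^ 6 * K ^ 114 * cov ρ X (fun x => x))) :=
          mul_le_mul_of_nonneg_left (hm.trans (mul_le_mul_of_nonneg_left hd (by norm_num)))
            (by positivity)
      _ = 78 * (K ^ 121 * cov ρ X (fun x => x)) := by ring
      _ ≤ K ^ 2 * (K ^ 121 * cov ρ X (fun x => x)) :=
          mul_le_mul_of_nonneg_right (by nlinarith) (mul_nonneg (pow_pos hK0 _).le hF0)
      _ = _ := by ring
  · intro ρ t hρ ht Y hY hYt
    have hρ0 : 0 < ρ := hδ.trans_le hρ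
    have ht0 : 0 < t := hρ0.trans_le ht
    have hsum := h.triple_sum hδ hK hb
    have hd : cov ρ (X ×ˢ Y) (fun p => b * p.1 + b * p.2) ≤
        K ^ 6 * K ^ 114 * cov ρ X (fun x => x) := by
      have hs := Finset.product_subset_product (Finset.product_subset_product hXA
        (hY.trans hXA)) hXA
      have hs' := (cov_mono δ hs _).trans hsum
      exact h.descent hδ hK hb hXA hX (I := X ×ˢ Y)
        (f := fun p => b * p.1 + b * p.2) (by positivity) hs' hρ
    have hm := cov_mul_le (ρ := ρ) (t := t) hρ0 ht (I := X) (J := Y) (f := fun x => b * x)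
      (g := fun x => b * x) (by
        intro p hp q hq
        rw [← mul_sub, abs_mul]
        have := mul_le_of_le_one_left (abs_nonneg (p - q)) (h.bdd b hb)
        linarith [hYt p hp q hq])
    have hF0 := cov_nonneg ρ X (fun x => x)
    have hF1 := cov_nonneg t X (fun x => b * x)
    calc cov t X (fun x => x) * cov ρ Y (fun x => x)
        ≤ (2 * K * cov t X (fun x => b * x)) * (2 * K * cov ρ Y (fun x => b * x)) :=
          mul_le_mul (hdiv t ht0 X) (hdiv ρ hρ0 Y) (cov_nonneg _ _ _) (by positivity)
      _ = 4 * K ^ 2 * (cov t X (fun x => b * x) * cov ρ Y (fun x => b * x)) := by ring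
      _ ≤ 4 * K ^ 2 * (39 * (K ^ 6 * K ^ 114 * cov ρ X (fun x => x))) :=
          mul_le_mul_of_nonneg_left (hm.trans (mul_le_mul_of_nonneg_left hd (by norm_num)))
            (by positivity)
      _ = 156 * (K ^ 122 * cov ρ X (fun x => x)) := by ring
      _ ≤ K * (K ^ 122 * cov ρ X (fun x => x)) :=
          mul_le_mul_of_nonneg_right (by linarith) (mul_nonneg (pow_pos hK0 _).le hF0)
      _ = _ := by ring
  · intro t ht
    have ht0 : 0 < t := hδ.trans_le ht
    obtain ⟨J, hJX, hJ, hJc⟩ := exists_cell δ t ht0 hXne (fun x => x) (fun x => x)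
    have hF0 := cov_nonneg t X (fun x => x)
    have hJn : cov δ J (fun x => x) ≤ K * t ^ κ * A.card := by
      rw [← card_eq_cov fun i hi j hj hij =>
        h.inj i (hXA (hJX hi)) j (hXA (hJX hj)) hij]
      exact h.frost t ht J (hJX.trans hXA) fun y hy z hz => (hJ y hy z hz).le
    have htκ : 0 < t ^ κ := Real.rpow_pos_of_pos ht0 _
    have h1 : 1 ≤ K ^ 123 * cov t X (fun x => x) * t ^ κ := by
      refine le_of_mul_le_mul_right ?_ hn0
      calc 1 * (A.card : ℝ) ≤ 8 * K ^ 3 * X.card := by rw [one_mul]; exact hX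
        _ ≤ 8 * K ^ 3 * (cov t X (fun x => x) * (K * t ^ κ * A.card)) := by
            rw [hcard]
            gcongr
            exact hJc.trans (by gcongr)
        _ = 8 * K ^ 4 * (cov t X (fun x => x) * t ^ κ * A.card) := by ring
        _ ≤ K ^ 123 * (cov t X (fun x => x) * t ^ κ * A.card) := by
            have : 8 * K ^ 4 ≤ K ^ 123 := by
              calc 8 * K ^ 4 ≤ K * K ^ 4 := by gcongr; linarith
                _ = K ^ 5 := by ring
                _ ≤ K ^ 123 := pow_le_pow_right₀ hK1 (by norm_num)
            gcongr
        _ = _ := by ring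
    rw [Real.rpow_neg ht0.le, inv_eq_one_div, div_le_iff₀ htκ]
    exact h1
  · rw [← hcard]
    calc (X.card : ℝ) ≤ A.card := by exact_mod_cast Finset.card_le_card hXA
      _ ≤ K * δ ^ (-σ) := h.size
      _ ≤ K ^ 123 * δ ^ (-σ) := by
          have : K ≤ K ^ 123 := le_self_pow₀ hK1 (by norm_num)
          gcongr

end

/-! ### Discretization -/

/-- If every value `f i` lies in an interval of length at least `ℓ` contained in `S`, then the
covering number of `f` at scale `ℓ / 4` is controlled by the measure of `S`: each cell that is met
has a neighbour contained in `S`. -/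
lemma count_le_volume {ι : Type*} {I : Finset ι} {f : ι → ℝ} {S : Set ℝ} {ℓ V : ℝ} (hℓ : 0 < ℓ)
    (h : ∀ i ∈ I, ∃ c d, c ≤ f i ∧ f i ≤ d ∧ ℓ ≤ d - c ∧ Icc c d ⊆ S) (hV : 0 ≤ V)
    (hS : volume S ≤ ENNReal.ofReal V) : cov (ℓ / 4) I f * ℓ ≤ 8 * V := by
  classical
  set r := ℓ / 4 with hr
  have hr0 : 0 < r := by positivity
  set Z := I.image (fun i => ⌊f i / r⌋) with hZ
  have hnb : ∀ k : ℤ, ∃ m : ℤ, k ∈ Z → (m = k - 1 ∨ m = k + 1) ∧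
      Ico ((m : ℝ) * r) ((m + 1) * r) ⊆ S := by
    intro k
    by_cases hk : k ∈ Z
    · obtain ⟨i, hi, rfl⟩ := Finset.mem_image.mp hk
      obtain ⟨c, d, h1, h2, h3, h4⟩ := h i hi
      have e1 : (⌊f i / r⌋ : ℝ) * r ≤ f i := by
        rw [← le_div_iff₀ hr0]; exact Int.floor_le _
      have e2 : f i < ((⌊f i / r⌋ : ℝ) + 1) * r := by
        rw [← div_lt_iff₀ hr0]; exact Int.lt_floor_add_one _
      by_cases hd : f i + 2 * r ≤ d
      · refine ⟨⌊f i / r⌋ + 1, fun _ => ⟨Or.inr rfl, fun x hx => h4 ?_⟩⟩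
        push_cast at hx
        exact ⟨by linarith [hx.1], by nlinarith [hx.2]⟩
      · refine ⟨⌊f i / r⌋ - 1, fun _ => ⟨Or.inl rfl, fun x hx => h4 ?_⟩⟩
        push_cast at hx
        exact ⟨by nlinarith [hx.1], by nlinarith [hx.2]⟩
    · exact ⟨0, fun h => absurd h hk⟩
  choose φ hφ using hnb
  have hcard : Z.card ≤ 2 * (Z.image φ).card := by
    refine Finset.card_le_mul_card_image _ _ fun m _ => ?_
    refine (Finset.card_le_card (t := {m - 1, m + 1}) fun k hk => ?_).trans Finset.card_le_two
    obtain ⟨hk, hm⟩ := Finset.mem_filter.mp hk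
    have h := (hφ k hk).1
    rw [hm] at h
    rw [Finset.mem_insert, Finset.mem_singleton]
    omega
  have hvol : ENNReal.ofReal ((Z.image φ).card * r) ≤ volume S := by
    have hdisj : (↑(Z.image φ) : Set ℤ).PairwiseDisjoint
        (fun m : ℤ => Ico ((m : ℝ) * r) ((m + 1) * r)) := by
      intro m _ n _ hmn
      refine Set.disjoint_left.mpr fun x hx hy => hmn ?_
      have a1 : (m : ℝ) < n + 1 := lt_of_mul_lt_mul_right (hx.1.trans_lt hy.2) hr0.le
      have a2 : (n : ℝ) < m + 1 := lt_of_mul_lt_mul_right (hy.1.trans_lt hx.2) hr0.le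
      norm_cast at a1 a2
      omega
    calc ENNReal.ofReal ((Z.image φ).card * r)
        = ∑ m ∈ Z.image φ, volume (Ico ((m : ℝ) * r) ((m + 1) * r)) := by
          simp_rw [Real.volume_Ico, show ∀ m : ℝ, (m + 1) * r - m * r = r from fun m => by ring]
          rw [Finset.sum_const, nsmul_eq_mul, ENNReal.ofReal_mul (Nat.cast_nonneg _),
            ENNReal.ofReal_natCast]
      _ = volume (⋃ m ∈ Z.image φ, Ico ((m : ℝ) * r) ((m + 1) * r)) :=
          (measure_biUnion_finset hdisj fun _ _ => measurableSet_Ico).symm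
      _ ≤ volume S := by
          refine measure_mono (Set.iUnion₂_subset fun m hm => ?_)
          obtain ⟨k, hk, rfl⟩ := Finset.mem_image.mp hm
          exact (hφ k hk).2
  have h2 : ((Z.image φ).card : ℝ) * r ≤ V := (ENNReal.ofReal_le_ofReal_iff hV).mp (hvol.trans hS)
  have h3 : (Z.card : ℝ) ≤ 2 * (Z.image φ).card := by exact_mod_cast hcard
  have h4 : cov r I f = Z.card := rfl
  rw [h4, show ℓ = 4 * r by rw [hr]; ring]
  nlinarith

/-- A version of `count_le_volume` at a scale `δ ≥ ℓ`. -/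
lemma count_le_volume' {ι : Type*} {I : Finset ι} {f : ι → ℝ} {S : Set ℝ} {δ ℓ V : ℝ} (hℓ : 0 < ℓ)
    (hδ : ℓ ≤ δ) (h : ∀ i ∈ I, ∃ c d, c ≤ f i ∧ f i ≤ d ∧ ℓ ≤ d - c ∧ Icc c d ⊆ S) (hV : 0 ≤ V)
    (hS : volume S ≤ ENNReal.ofReal V) : cov δ I f * ℓ ≤ 24 * V := by
  have h1 := count_le_volume hℓ h hV hS
  have h2 := cov_coarse (ρ := ℓ / 4) (ρ' := δ) (by positivity) (by linarith) I f
  nlinarith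

set_option maxHeartbeats 1000000 in
/-- Passage from a union of intervals violating the conclusion to a finite set of small growth. The
points within `h` of the origin are discarded; by non-concentration they are a minority. -/
lemma exists_smallGrowth {δ L h K σ κ : ℝ} {A : Set ℝ} {T : Finset ℝ} (hδ : 0 < δ) (hδ1 : δ < 1)
    (hκ : 0 < κ) (hκ1 : κ < 1) (hA : A ⊆ Icc (-1 : ℝ) 1) (hT : A = ⋃ t ∈ T, Icc t (t + δ))
    (hvol : volume A = ENNReal.ofReal (δ ^ (1 - σ)))
    (hnc : ∀ ρ : ℝ, δ < ρ → ρ < L⁻¹ → ∀ a : ℝ,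
      volume (A ∩ Icc (a - ρ) (a + ρ)) < ENNReal.ofReal (ρ ^ κ) * volume A)
    (hadd : volume (A + A) ≤ ENNReal.ofReal (L * δ ^ (1 - σ)))
    (hmul : volume (A * A) ≤ ENNReal.ofReal (L * δ ^ (1 - σ)))
    (hL : 1000 ≤ L) (hh : 0 < h) (hh1 : h ≤ 1) (hδh : δ ≤ 2 * h) (hhκ : L ^ 2 * h ^ κ ≤ 1)
    (hK : L ^ 2 ≤ K * h) : ∃ A₁, SmallGrowth δ K σ κ A₁ := by
  classical
  have hL0 : 0 < L := by linarith
  have hK0 : 0 < K := by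
    by_contra hc
    nlinarith
  have hKL : L ^ 2 ≤ K := hK.trans (mul_le_of_le_one_right hK0.le hh1)
  have hKL' : 1000 * L ≤ K := by nlinarith
  set D := δ ^ (-σ) with hD
  have hD0 : 0 < D := Real.rpow_pos_of_pos hδ _
  have hDδ : δ ^ (1 - σ) = δ * D := by
    rw [hD, sub_eq_add_neg, Real.rpow_add hδ, Real.rpow_one]
  rw [hDδ] at hvol hadd hmul
  have hTA : ∀ t ∈ T, Icc t (t + δ) ⊆ A := by
    intro t ht
    rw [hT]
    exact Set.subset_biUnion_of_mem (u := fun t => Icc t (t + δ)) (Finset.mem_coe.mpr ht)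
  have hTmem : ∀ t ∈ T, t ∈ A := fun t ht => hTA t ht ⟨le_rfl, by linarith⟩
  obtain ⟨A₀, hA₀T, hA₀c, hA₀⟩ := exists_reps δ T (fun x => x)
  set n : ℝ := (A₀.card : ℝ) with hn
  -- the number of occupied cells is comparable to `δ ^ (-σ)`
  have hlow : D ≤ 2 * n := by
    have h1 : A ⊆ ⋃ k ∈ T.image (fun x => ⌊x / δ⌋), Icc ((k : ℝ) * δ) ((k + 2) * δ) := by
      rw [hT]
      refine Set.iUnion₂_subset fun t ht x hx => ?_
      refine Set.mem_biUnion (Finset.mem_coe.mpr (Finset.mem_image_of_mem _ ht)) ?_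
      have e1 : (⌊t / δ⌋ : ℝ) * δ ≤ t := by rw [← le_div_iff₀ hδ]; exact Int.floor_le _
      have e2 : t < ((⌊t / δ⌋ : ℝ) + 1) * δ := by
        rw [← div_lt_iff₀ hδ]; exact Int.lt_floor_add_one _
      exact ⟨by linarith [hx.1], by linarith [hx.2]⟩
    have h2 : ENNReal.ofReal (δ * D) ≤ ENNReal.ofReal (n * (2 * δ)) := by
      rw [← hvol]
      refine ((measure_mono h1).trans (measure_biUnion_finset_le _ _)).trans ?_
      simp_rw [Real.volume_Icc, show ∀ m : ℝ, (m + 2) * δ - m * δ = 2 * δ from fun m => by ring]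
      rw [Finset.sum_const, nsmul_eq_mul, ENNReal.ofReal_mul (Nat.cast_nonneg _),
        ENNReal.ofReal_natCast]
      have : A₀.card = (T.image (fun x => ⌊x / δ⌋)).card := Nat.cast_injective (R := ℝ) hA₀c
      rw [this]
    have h3 := (ENNReal.ofReal_le_ofReal_iff (by positivity)).mp h2
    nlinarith
  have hn0 : 0 < n := by linarith
  have hup : n ≤ 24 * D := by
    have h1 := count_le_volume' (I := T) (f := fun x => x) (V := δ * D) hδ le_rfl
      (fun t ht => ⟨t, t + δ, le_rfl, by linarith, by linarith, hTA t ht⟩) (by positivity) hvol.le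
    rw [← hA₀c] at h1
    nlinarith
  have hfrost : ∀ t, δ ≤ t → ∀ Y ⊆ A₀, (∀ y ∈ Y, ∀ z ∈ Y, |y - z| ≤ t) →
      (Y.card : ℝ) ≤ 96 * L * t ^ κ * n := by
    intro t ht Y hY hYt
    have ht0 : 0 < t := hδ.trans_le ht
    have htκ : 0 < t ^ κ := Real.rpow_pos_of_pos ht0 _
    rcases Y.eq_empty_or_nonempty with rfl | ⟨y₀, hy₀⟩
    · simp only [Finset.card_empty, Nat.cast_zero]; positivity
    by_cases h2t : 2 * t < L⁻¹
    · have h1 := hnc (2 * t) (by linarith) h2t y₀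
      rw [hvol, ← ENNReal.ofReal_mul (by positivity)] at h1
      have h2 := count_le_volume' (I := Y) (f := fun x => x) hδ le_rfl
        (fun y hy => ⟨y, y + δ, le_rfl, by linarith, by linarith, fun x hx =>
          (⟨hTA y (hA₀T (hY hy)) hx, by
            have := abs_le.mp (hYt y hy y₀ hy₀)
            exact ⟨by linarith [hx.1], by linarith [hx.2]⟩⟩ :
            x ∈ A ∩ Icc (y₀ - 2 * t) (y₀ + 2 * t))⟩) (by positivity) h1.le
      rw [← card_eq_cov fun i hi j hj hij => hA₀ i (hY hi) j (hY hj) hij] at h2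
      have h3 : (2 * t) ^ κ ≤ 2 * t ^ κ := by
        rw [Real.mul_rpow (by norm_num) ht0.le]
        have : (2 : ℝ) ^ κ ≤ 2 ^ (1 : ℝ) := Real.rpow_le_rpow_of_exponent_le (by norm_num) hκ1.le
        rw [Real.rpow_one] at this
        gcongr
      have h4 : (Y.card : ℝ) * δ ≤ (96 * t ^ κ * n) * δ := by
        calc (Y.card : ℝ) * δ ≤ 24 * ((2 * t) ^ κ * (δ * D)) := h2
          _ ≤ 24 * ((2 * t ^ κ) * (δ * (2 * n))) := by gcongr
          _ = _ := by ring
      calc (Y.card : ℝ) ≤ 96 * t ^ κ * n := le_of_mul_le_mul_right h4 hδ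
        _ ≤ L * (96 * t ^ κ * n) := le_mul_of_one_le_left (by positivity) (by linarith)
        _ = _ := by ring
    · have h1 : (2 * L)⁻¹ ≤ t := by
        rw [mul_inv]; linarith
      have h2 : (2 * L)⁻¹ ≤ t ^ κ := by
        calc (2 * L)⁻¹ = (2 * L)⁻¹ ^ (1 : ℝ) := (Real.rpow_one _).symm
          _ ≤ (2 * L)⁻¹ ^ κ := Real.rpow_le_rpow_of_exponent_ge (by positivity)
              (inv_le_one_of_one_le₀ (by linarith)) hκ1.le
          _ ≤ t ^ κ := Real.rpow_le_rpow (by positivity) h1 hκ.le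
      have h3 : 1 ≤ 2 * L * t ^ κ := by
        rw [inv_eq_one_div, div_le_iff₀ (by positivity)] at h2
        linarith
      calc (Y.card : ℝ) ≤ n := Nat.cast_le.mpr (Finset.card_le_card hY)
        _ ≤ (2 * L * t ^ κ) * n := le_mul_of_one_le_left hn0.le h3
        _ ≤ 96 * L * t ^ κ * n := by gcongr; norm_num
  set A₁ := A₀.filter (fun a => h ≤ |a|) with hA₁
  have hA₁₀ : A₁ ⊆ A₀ := Finset.filter_subset _ _
  have hn1 : n ≤ 2 * A₁.card := by
    have h1 := hfrost (2 * h) hδh (A₀.filter (fun a => ¬ h ≤ |a|)) (Finset.filter_subset _ _) (by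
      intro y hy z hz
      have e1 := (Finset.mem_filter.mp hy).2
      have e2 := (Finset.mem_filter.mp hz).2
      push Not at e1 e2
      linarith [abs_sub y z])
    have h2 : (A₁.card : ℝ) + (A₀.filter (fun a => ¬ h ≤ |a|)).card = n := by
      rw [hn]; exact_mod_cast Finset.card_filter_add_card_filter_not (s := A₀) (fun a => h ≤ |a|)
    have h3 : (2 * h) ^ κ ≤ 2 * h ^ κ := by
      rw [Real.mul_rpow (by norm_num) hh.le]
      have : (2 : ℝ) ^ κ ≤ 2 ^ (1 : ℝ) := Real.rpow_le_rpow_of_exponent_le (by norm_num) hκ1.le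
      rw [Real.rpow_one] at this
      have := Real.rpow_pos_of_pos hh κ
      gcongr
    have h4 : 192 * L * h ^ κ ≤ 1 / 2 := by
      have := Real.rpow_pos_of_pos hh κ
      have : L * (1000 * h ^ κ) ≤ L * (L * h ^ κ) := by gcongr
      nlinarith
    have h5 : ((A₀.filter (fun a => ¬ h ≤ |a|)).card : ℝ) ≤ 1 / 2 * n := by
      calc _ ≤ 96 * L * (2 * h) ^ κ * n := h1
        _ ≤ 96 * L * (2 * h ^ κ) * n := by gcongr
        _ = (192 * L * h ^ κ) * n := by ring
        _ ≤ _ := by gcongr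
    linarith
  have hA₁T : ∀ a ∈ A₁, a ∈ T := fun a ha => hA₀T (hA₁₀ ha)
  have hA₁h : ∀ a ∈ A₁, h ≤ |a| := fun a ha => (Finset.mem_filter.mp ha).2
  have hn10 : (0 : ℝ) < A₁.card := by linarith
  have hDn : D ≤ 4 * A₁.card := by linarith
  refine ⟨A₁, ⟨?_, ?_, ?_, ?_, ?_, ?_, ?_, ?_⟩⟩
  · exact Finset.card_pos.mp (by exact_mod_cast hn10)
  · exact fun a ha b hb hab => hA₀ a (hA₁₀ ha) b (hA₁₀ hb) hab
  · exact fun a ha => abs_le.mpr (hA (hTmem a (hA₁T a ha)))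
  · intro a ha
    calc (1 : ℝ) ≤ L ^ 2 := by nlinarith
      _ ≤ K * h := hK
      _ ≤ K * |a| := by gcongr; exact hA₁h a ha
  · have h1 := count_le_volume' (I := A₁ ×ˢ A₁) (f := fun p => p.1 + p.2) hδ le_rfl (fun p hp => by
      rw [Finset.mem_product] at hp
      refine ⟨p.1 + p.2, p.1 + p.2 + δ, le_rfl, by linarith, by linarith, fun x hx => ?_⟩
      refine Set.mem_add.mpr ⟨p.1, hTmem _ (hA₁T _ hp.1), x - p.1, hTA _ (hA₁T _ hp.2)
        ⟨by linarith [hx.1], by linarith [hx.2]⟩, by ring⟩) (by positivity) hadd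
    refine le_of_mul_le_mul_right (h1.trans ?_) hδ
    calc 24 * (L * (δ * D)) ≤ 24 * (L * (δ * (4 * A₁.card))) := by gcongr
      _ = (96 * L) * A₁.card * δ := by ring
      _ ≤ K * A₁.card * δ := by gcongr; linarith
  · have hhδ : 0 < h * δ := by positivity
    have h1 := count_le_volume' (I := A₁ ×ˢ A₁) (f := fun p => p.1 * p.2) (ℓ := h * δ) (δ := δ) hhδ
      (mul_le_of_le_one_left hδ.le hh1) (fun p hp => by
        rw [Finset.mem_product] at hp
        have hp1 := hA₁h _ hp.1
        have hmem : ∀ x, x / p.1 ∈ Icc p.2 (p.2 + δ) → x ∈ A * A := by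
          intro x hx
          refine Set.mem_mul.mpr ⟨p.1, hTmem _ (hA₁T _ hp.1), x / p.1, hTA _ (hA₁T _ hp.2) hx, ?_⟩
          refine mul_div_cancel₀ x ?_
          intro h0
          rw [h0, abs_zero] at hp1
          linarith
        rcases le_total 0 p.1 with h0 | h0
        · rw [abs_of_nonneg h0] at hp1
          have h0' : 0 < p.1 := by linarith
          refine ⟨p.1 * p.2, p.1 * (p.2 + δ), le_rfl, by nlinarith, by nlinarith, fun x hx =>
            hmem x ⟨?_, ?_⟩⟩
          · rw [le_div_iff₀ h0']; linarith [hx.1]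
          · rw [div_le_iff₀ h0']; linarith [hx.2]
        · rw [abs_of_nonpos h0] at hp1
          have h0' : p.1 < 0 := by linarith
          refine ⟨p.1 * (p.2 + δ), p.1 * p.2, by nlinarith, le_rfl, by nlinarith, fun x hx =>
            hmem x ⟨?_, ?_⟩⟩
          · rw [le_div_iff_of_neg h0']; linarith [hx.2]
          · rw [div_le_iff_of_neg h0']; linarith [hx.1]) (by positivity) hmul
    refine le_of_mul_le_mul_right (h1.trans ?_) hhδ
    calc 24 * (L * (δ * D)) ≤ 24 * (L * (δ * (4 * A₁.card))) := by gcongr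
      _ = (96 * L) * (A₁.card * δ) := by ring
      _ ≤ (K * h) * (A₁.card * δ) := mul_le_mul_of_nonneg_right (by nlinarith) (by positivity)
      _ = _ := by ring
  · intro t ht Y hY hYt
    have htκ : 0 < t ^ κ := Real.rpow_pos_of_pos (hδ.trans_le ht) _
    calc (Y.card : ℝ) ≤ 96 * L * t ^ κ * n := hfrost t ht Y (hY.trans hA₁₀) hYt
      _ ≤ 96 * L * t ^ κ * (2 * A₁.card) := by gcongr
      _ = (192 * L) * t ^ κ * A₁.card := by ring
      _ ≤ K * t ^ κ * A₁.card := by gcongr; linarith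
  · calc (A₁.card : ℝ) ≤ n := Nat.cast_le.mpr (Finset.card_le_card hA₁₀)
      _ ≤ 24 * D := hup
      _ ≤ K * D := by gcongr; linarith

end RingThm

/-- **Discretized ring theorem.** For all `0 < σ < 1` and `0 < κ < 1` there is `ε₂ > 0`
such that for all sufficiently small `δ > 0`: if `A ⊆ [−1,1]` is a finite union of
closed intervals of length `δ` with `|A| = δ^{1−σ}` and with no concentration at
scales `δ < ρ < δ^{ε₂}`, then `|A+A| + |A·A| > δ^{1−σ−ε₂}`. -/
theorem discretized_ring_theorem :
    ∀ σ κ : ℝ, 0 < σ → σ < 1 → 0 < κ → κ < 1 →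
      ∃ ε₂ : ℝ, 0 < ε₂ ∧ ∃ δ₀ : ℝ, 0 < δ₀ ∧
        ∀ δ : ℝ, 0 < δ → δ < δ₀ →
          ∀ A : Set ℝ, A ⊆ Icc (-1 : ℝ) 1 →
            (∃ T : Finset ℝ, A = ⋃ t ∈ T, Icc t (t + δ)) →
            volume A = ENNReal.ofReal (δ ^ (1 - σ)) →
            (∀ ρ : ℝ, δ < ρ → ρ < δ ^ ε₂ →
              ∀ a : ℝ, volume (A ∩ Icc (a - ρ) (a + ρ)) <
                ENNReal.ofReal (ρ ^ κ) * volume A) →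
            ENNReal.ofReal (δ ^ (1 - σ - ε₂)) < volume (A + A) + volume (A * A) := by
  intro σ κ hσ hσ1 hκ hκ1
  obtain ⟨ε, hε, hcore⟩ := RingThm.core hσ hσ1 hκ hκ1
  -- `E` is chosen so that `2 * E + 2 * E / κ ≤ ε / 123` and `2 * E / κ ≤ 1`
  set E := min (ε / 123) 1 * κ / 4 with hE
  have hm0 : 0 < min (ε / 123) 1 := lt_min (by positivity) one_pos
  have hE0 : 0 < E := by positivity
  have hEκ : 2 * E / κ = min (ε / 123) 1 / 2 := by rw [hE]; field_simp; ring
  have hE1 : 2 * E ≤ 2 * E / κ := by rw [le_div_iff₀ hκ]; nlinarith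
  have hm1 : min (ε / 123) 1 ≤ ε / 123 := min_le_left _ _
  have hm2 : min (ε / 123) 1 ≤ 1 := min_le_right _ _
  refine ⟨E, hE0, (1000 : ℝ) ^ (-E⁻¹), by positivity, ?_⟩
  rintro δ hδ hδ0 A hA ⟨T, hT⟩ hvol hnc
  by_contra hcon
  push Not at hcon
  have hδ1 : δ < 1 := hδ0.trans_le
    (Real.rpow_le_one_of_one_le_of_nonpos (by norm_num) (by simp; positivity))
  have hL : 1000 ≤ δ ^ (-E) := by
    have h1 : δ ^ E ≤ ((1000 : ℝ) ^ (-E⁻¹)) ^ E := Real.rpow_le_rpow hδ.le hδ0.le hE0.le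
    rw [← Real.rpow_mul (by norm_num), neg_mul, inv_mul_cancel₀ hE0.ne', Real.rpow_neg_one] at h1
    rw [Real.rpow_neg hδ.le]
    exact (le_inv_comm₀ (by norm_num) (by positivity)).mpr h1
  have hexp : ∀ x y : ℝ, y ≤ x → δ ^ x ≤ δ ^ y := fun x y hxy =>
    Real.rpow_le_rpow_of_exponent_ge hδ hδ1.le hxy
  have hV : δ ^ (1 - σ - E) = δ ^ (-E) * δ ^ (1 - σ) := by
    rw [← Real.rpow_add hδ]; ring_nf
  rw [hV] at hcon
  have hL2 : (δ ^ (-E)) ^ 2 = δ ^ (-(2 * E)) := by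
    rw [← Real.rpow_natCast, ← Real.rpow_mul hδ.le]; push_cast; ring_nf
  obtain ⟨A₁, hA₁⟩ := RingThm.exists_smallGrowth (L := δ ^ (-E)) (h := δ ^ (2 * E / κ))
    (K := δ ^ (-(ε / 123))) hδ hδ1 hκ hκ1 hA hT hvol
    (by rw [Real.rpow_neg hδ.le, inv_inv]; exact hnc)
    (le_self_add.trans hcon) (le_add_self.trans hcon) hL (by positivity)
    (Real.rpow_le_one hδ.le hδ1.le (by positivity))
    (by
      have h1 := hexp 1 (2 * E / κ) (by linarith)
      rw [Real.rpow_one] at h1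
      have := Real.rpow_pos_of_pos hδ (2 * E / κ)
      linarith)
    (by
      rw [hL2, ← Real.rpow_mul hδ.le, div_mul_cancel₀ _ hκ.ne', ← Real.rpow_add hδ]
      simp)
    (by
      rw [hL2, ← Real.rpow_add hδ]
      exact hexp _ _ (by linarith))
  have hK : 1000 ≤ δ ^ (-(ε / 123)) := hL.trans (hexp _ _ (by linarith))
  obtain ⟨X, hX⟩ := hA₁.exists_ringLike hδ hK
  refine hcore δ _ X hδ hδ1 (hK.trans (le_self_pow₀ (by linarith) (by norm_num))) ?_ hX
  rw [← Real.rpow_natCast, ← Real.rpow_mul hδ.le]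
  exact hexp _ _ (by push_cast; linarith)
end
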